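/- arXiv:2208.13308 — 2 statements merged into one kernel-verified Lean document; each statement's English description precedes it below -/
import Mathlib

section
/- There is an absolute constant C > 0 with the following property: for all integers n > k ≥ 1 and all f₁, f₂ ∈ Q₀ⁿ satisfying the Busemann–Petty condition ∫_H f₁ dλ_H ≤ ∫_H f₂ dλ_H for every k-dimensional linear subspace H ⊆ ℝⁿ, and such that the function f₁^{n/k} is centered (∫_{ℝⁿ} x · f₁(x)^{n/k} dx = 0), one has ‖f₁‖_{n/k} ≤ (C·L)^{n−k} · ‖f₂‖₁^{k/n} · ‖f₂‖_∞^{(n−k)/n}, where L is the isotropic constant of the function f₁^{n/k}. -/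
open MeasureTheory

noncomputable section

/-- `ℝⁿ` with its Euclidean structure. -/
abbrev Eucl (n : ℕ) := EuclideanSpace ℝ (Fin n)

/-- `f : ℝⁿ → [0,∞)` is log-concave:
`f(tx+(1−t)y) ≥ f(x)^t · f(y)^(1−t)` for all `x, y` and `t ∈ (0,1)`. -/
def IsLogConcave {n : ℕ} (f : Eucl n → ℝ) : Prop :=
  ∀ x y : Eucl n, ∀ t : ℝ, 0 < t → t < 1 →
    f x ^ t * f y ^ (1 - t) ≤ f (t • x + (1 - t) • y)

/-- The class `Q₀ⁿ`: nonnegative, log-concave, upper semicontinuous, integrable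
functions with positive integral. -/
def MemQ0 {n : ℕ} (f : Eucl n → ℝ) : Prop :=
  (∀ x, 0 ≤ f x) ∧ IsLogConcave f ∧ UpperSemicontinuous f ∧
    Integrable f ∧ 0 < ∫ x, f x

/-- `‖f‖_∞ = sup f`. -/
def supNorm {n : ℕ} (f : Eucl n → ℝ) : ℝ := ⨆ x, f x

/-- `‖f‖_p = (∫ f^p)^(1/p)`. -/
def lpNorm {n : ℕ} (p : ℝ) (f : Eucl n → ℝ) : ℝ := (∫ x, f x ^ p) ^ (1 / p)

/-- `‖P_H f‖_{L¹(H)} = ∫_H sup_{z ∈ H⊥} f(y+z) dλ_H(y)`, the `L¹(H)`-norm of the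
projection of `f` onto the subspace `H` (with the Lebesgue measure on `H` induced
by the Euclidean structure). -/
def projL1 {n : ℕ} (f : Eucl n → ℝ) (H : Submodule ℝ (Eucl n)) : ℝ :=
  ∫ y : H, ⨆ z : Hᗮ, f ((y : Eucl n) + (z : Eucl n))

/-- `‖S_H f‖_{L¹(H)} = ∫_H f dλ_H`, the integral of the section `f|_H`. -/
def sectL1 {n : ℕ} (f : Eucl n → ℝ) (H : Submodule ℝ (Eucl n)) : ℝ :=
  ∫ y : H, f (y : Eucl n)

/-- The covariance matrix of the probability measure `‖g‖₁⁻¹ g(x) dx`: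
`Cov(g)_{ij} = ‖g‖₁⁻¹ ∫ xᵢxⱼ g − bᵢbⱼ` with barycenter `b = ‖g‖₁⁻¹ ∫ x g(x) dx`. -/
def covMatrix {d : ℕ} (g : Eucl d → ℝ) : Matrix (Fin d) (Fin d) ℝ :=
  Matrix.of fun i j =>
    (∫ x, g x * x i * x j) / (∫ x, g x) -
      ((∫ x, g x * x i) / ∫ x, g x) * ((∫ x, g x * x j) / ∫ x, g x)

/-- The isotropic constant `L_g = (‖g‖_∞/‖g‖₁)^{1/d} · (det Cov(g))^{1/(2d)}`. -/
def isoConst {d : ℕ} (g : Eucl d → ℝ) : ℝ :=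
  (supNorm g / ∫ x, g x) ^ ((1 : ℝ) / d) *
    (covMatrix g).det ^ (1 / (2 * (d : ℝ)))

/-!
Log-concavity enters only through the exponential decay of `f₁` and `f₂`, which makes all moments
and all section integrals finite. The section condition is invariant under linear changes of
variables, so `g = f₁ ^ (n / k)` may be assumed to have covariance matrix `1`, at the price of the
Jacobian `√(det Cov g)`. Integrating the condition over all rotations of one `k`-dimensional
subspace gives `∫ f₁ ‖x‖ ^ (k - n) ≤ ∫ f₂ ‖x‖ ^ (k - n)`.

On the left, `f₁` is at least a multiple of `g`, and Hölder's inequality bounds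
`∫ g ‖x‖ ^ (k - n)` from below in terms of `∫ g` and the second moment `∫ g ‖x‖ ^ 2 = n ∫ g`. On the
right, among functions `≤ N` of given integral, the one maximizing the radially decreasing weight is
`N` times the indicator of a ball. The factor `√n` lost in the first bound is compensated by
`vol (ball 0 1) ^ (1 / n) ≤ √(2πe / n)` in the second.
-/

open Set Metric Real Module
open scoped ENNReal

section Bounded

variable {E : Type*} [NormedAddCommGroup E] [MeasurableSpace E] [BorelSpace E] (μ : Measure E)
  [μ.IsAddHaarMeasure]

lemma isBounded_of_measure_thickening_ne_top {s : Set E} {δ : ℝ} (hδ : 0 < δ)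
    (hs : μ (thickening δ s) ≠ ∞) : Bornology.IsBounded s := by
  by_contra hunb
  have exists_far (t : Finset E) (_ : ∀ x ∈ t, x ∈ s) :
      ∃ y, y ∈ s ∧ ∀ x ∈ t, 2 * δ ≤ dist x y := by
    have hnot : ¬ s ⊆ thickening (2 * δ) (t : Set E) := fun hsub =>
      hunb (t.finite_toSet.isBounded.thickening.subset hsub)
    obtain ⟨y, hys, hyt⟩ := not_subset.1 hnot
    refine ⟨y, hys, fun x hx => ?_⟩
    by_contra! hxy
    exact hyt (mem_thickening_iff.2 ⟨x, hx, by rwa [dist_comm]⟩)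
  have : Std.Symm fun x y : E => 2 * δ ≤ dist x y := ⟨fun x y h => by rwa [dist_comm]⟩
  obtain ⟨u, hu, hfar⟩ :=
    exists_seq_of_forall_finset_exists' (· ∈ s) (fun x y => 2 * δ ≤ dist x y) exists_far
  have hdisj : Pairwise (Function.onFun Disjoint fun i => ball (u i) δ) := fun i j hij =>
    ball_disjoint_ball (by linarith [hfar hij])
  have hsub : ⋃ i, ball (u i) δ ⊆ thickening δ s := iUnion_subset fun i =>
    ball_subset_thickening (hu i) δ
  have hfin := Measure.finite_const_le_meas_of_disjoint_iUnion μ (measure_ball_pos μ (0 : E) hδ)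
    (fun _ => measurableSet_ball) hdisj (measure_ne_top_of_subset hsub hs)
  refine infinite_univ (hfin.subset fun i _ => ?_)
  exact (Measure.addHaar_ball_center μ (u i) δ).ge

variable [NormedSpace ℝ E]

lemma isBounded_of_convex_of_measure_ne_top {s : Set E} (hs : Convex ℝ s)
    (hint : (interior s).Nonempty) (hfin : μ s ≠ ∞) : Bornology.IsBounded s := by
  obtain ⟨x₀, hx₀⟩ := hint
  obtain ⟨r, hr, hball⟩ := isOpen_iff.1 isOpen_interior x₀ hx₀
  let m : E → E := fun x => (1 / 2 : ℝ) • x + (1 / 2 : ℝ) • x₀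
  have hthick : thickening (r / 2) (m '' s) ⊆ s := by
    intro z hz
    obtain ⟨_, ⟨x, hx, rfl⟩, hzx⟩ := mem_thickening_iff.1 hz
    have hy : x₀ + (2 : ℝ) • (z - m x) ∈ s := interior_subset <| hball <| by
      rw [mem_ball, dist_self_add_left, norm_smul, norm_two, ← dist_eq_norm]
      linarith
    have hz : z = (1 / 2 : ℝ) • x + (1 / 2 : ℝ) • (x₀ + (2 : ℝ) • (z - m x)) := by
      simp only [m]; module
    rw [hz]
    exact hs hx hy (by norm_num) (by norm_num) (by norm_num)
  have hm := isBounded_of_measure_thickening_ne_top μ (half_pos hr)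
    (measure_ne_top_of_subset hthick hfin)
  obtain ⟨C, hC⟩ := isBounded_iff_forall_norm_le.1 hm
  refine isBounded_iff_forall_norm_le.2 ⟨2 * C + ‖x₀‖, fun x hx => ?_⟩
  have hx2 : x = (2 : ℝ) • m x - x₀ := by simp only [m]; module
  calc ‖x‖ = ‖(2 : ℝ) • m x - x₀‖ := congrArg norm hx2
    _ ≤ ‖(2 : ℝ) • m x‖ + ‖x₀‖ := norm_sub_le _ _
    _ ≤ 2 * C + ‖x₀‖ := by
      rw [norm_smul, norm_two]
      gcongr
      exact hC _ (mem_image_of_mem m hx)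

end Bounded

section ExpDecay

variable {E : Type*} [NormedAddCommGroup E]

/-- Exponential decay: `|f x| ≤ A e^(-c‖x‖)` for some `A` and some `c > 0`. -/
def HasExpDecay (f : E → ℝ) : Prop := ∃ A c, 0 < c ∧ ∀ x, |f x| ≤ A * exp (-c * ‖x‖)

namespace HasExpDecay

variable {f : E → ℝ}

lemma bddAbove (hf : HasExpDecay f) : BddAbove (range f) := by
  obtain ⟨A, c, hc, h⟩ := hf
  refine ⟨|A|, forall_mem_range.2 fun x => ?_⟩
  calc f x ≤ A * exp (-c * ‖x‖) := (le_abs_self _).trans (h x)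
    _ ≤ |A| * exp (-c * ‖x‖) := by gcongr; exact le_abs_self A
    _ ≤ |A| := mul_le_of_le_one_right (abs_nonneg A) <| exp_le_one_iff.2 <| by
      have := mul_nonneg hc.le (norm_nonneg x)
      linarith

lemma rpow (hf : HasExpDecay f) {p : ℝ} (hp : 0 < p) : HasExpDecay fun x => f x ^ p := by
  obtain ⟨A, c, hc, h⟩ := hf
  have hA : 0 ≤ A := nonneg_of_mul_nonneg_left ((abs_nonneg _).trans (h 0)) (exp_pos _)
  refine ⟨A ^ p, c * p, by positivity, fun x => ?_⟩
  calc |f x ^ p| ≤ |f x| ^ p := abs_rpow_le_abs_rpow _ _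
    _ ≤ (A * exp (-c * ‖x‖)) ^ p := rpow_le_rpow (abs_nonneg _) (h x) hp.le
    _ = A ^ p * exp (-(c * p) * ‖x‖) := by
      rw [mul_rpow hA (exp_pos _).le, ← exp_mul]
      ring_nf

lemma restrict [NormedSpace ℝ E] (hf : HasExpDecay f) (H : Submodule ℝ E) :
    HasExpDecay fun y : H => f y := by
  obtain ⟨A, c, hc, h⟩ := hf
  exact ⟨A, c, hc, fun y => h y⟩

end HasExpDecay

lemma one_add_pow_mul_exp_neg_le {c t : ℝ} (hc : 0 < c) (ht : 0 ≤ t) (N : ℕ) :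
    (1 + t) ^ N * exp (-c * t) ≤ N.factorial * exp c / c ^ N := by
  have hexp : (c * (1 + t)) ^ N / N.factorial ≤ exp (c * (1 + t)) :=
    pow_div_factorial_le_exp _ (by positivity) N
  rw [div_le_iff₀ (by positivity)] at hexp
  rw [le_div_iff₀ (by positivity)]
  calc (1 + t) ^ N * exp (-c * t) * c ^ N
      = exp (-c * t) * (c * (1 + t)) ^ N := by rw [mul_pow]; ring
    _ ≤ exp (-c * t) * (exp (c * (1 + t)) * N.factorial) := by gcongr
    _ = N.factorial * exp c := by rw [← mul_assoc, ← exp_add]; ring_nf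

variable [NormedSpace ℝ E] [FiniteDimensional ℝ E] [MeasurableSpace E] [BorelSpace E]
  (μ : Measure E) [μ.IsAddHaarMeasure]

lemma integrable_norm_pow_mul_exp_neg {c : ℝ} (hc : 0 < c) (m : ℕ) :
    Integrable (fun x : E => ‖x‖ ^ m * exp (-c * ‖x‖)) μ := by
  set d := finrank ℝ E + 1 with hd
  have hint : Integrable (fun x : E => (1 + ‖x‖) ^ (-(d : ℝ))) μ :=
    integrable_one_add_norm (by rw [hd]; push_cast; linarith)
  refine (hint.const_mul ((m + d).factorial * exp c / c ^ (m + d))).mono' (by fun_prop)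
    (ae_of_all _ fun x => ?_)
  rw [norm_of_nonneg (by positivity), rpow_neg (by positivity), rpow_natCast, ← div_eq_mul_inv,
    le_div_iff₀ (by positivity)]
  calc ‖x‖ ^ m * exp (-c * ‖x‖) * (1 + ‖x‖) ^ d
      ≤ (1 + ‖x‖) ^ m * exp (-c * ‖x‖) * (1 + ‖x‖) ^ d := by gcongr; linarith
    _ = (1 + ‖x‖) ^ (m + d) * exp (-c * ‖x‖) := by rw [pow_add]; ring
    _ ≤ _ := one_add_pow_mul_exp_neg_le hc (norm_nonneg x) _

lemma HasExpDecay.integrable_mul_norm_pow {f : E → ℝ} (hf : HasExpDecay f) (hfm : Measurable f)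
    (m : ℕ) : Integrable (fun x => f x * ‖x‖ ^ m) μ := by
  obtain ⟨A, c, hc, h⟩ := hf
  refine ((integrable_norm_pow_mul_exp_neg μ hc m).const_mul A).mono' (by fun_prop)
    (ae_of_all _ fun x => ?_)
  calc ‖f x * ‖x‖ ^ m‖ = |f x| * ‖x‖ ^ m := by rw [norm_mul, norm_pow, norm_norm, norm_eq_abs]
    _ ≤ A * exp (-c * ‖x‖) * ‖x‖ ^ m := by gcongr; exact h x
    _ = A * (‖x‖ ^ m * exp (-c * ‖x‖)) := by ring

lemma HasExpDecay.integrable {f : E → ℝ} (hf : HasExpDecay f) (hfm : Measurable f) :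
    Integrable f μ := by
  simpa using hf.integrable_mul_norm_pow μ hfm 0

end ExpDecay

section LogConcave

variable {n : ℕ} {f : Eucl n → ℝ}

lemma IsLogConcave.convex_setOf_lt (hf : IsLogConcave f) {δ : ℝ} (hδ : 0 < δ) :
    Convex ℝ {x | δ < f x} := by
  refine convex_iff_forall_pos.2 fun x (hx : δ < f x) y (hy : δ < f y) a b ha hb hab => ?_
  obtain rfl : b = 1 - a := by linarith
  calc δ = δ ^ a * δ ^ (1 - a) := by rw [← rpow_add hδ]; simp
    _ < f x ^ a * f y ^ (1 - a) := by gcongr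
    _ ≤ f (a • x + (1 - a) • y) := hf x y a ha (by linarith)

lemma IsLogConcave.le_mul_exp_neg (hf : IsLogConcave f) (hf₀ : ∀ x, 0 ≤ f x) {x₀ : Eucl n}
    {R : ℝ} (hR : 0 < R) (hx₀ : 0 < f x₀)
    (hsphere : ∀ y, ‖y - x₀‖ = R → f y ≤ f x₀ * exp (-1)) {x : Eucl n} (hx : R < ‖x - x₀‖) :
    f x ≤ f x₀ * exp (-(‖x - x₀‖ / R)) := by
  have hxR : 0 < ‖x - x₀‖ := hR.trans hx
  set t := R / ‖x - x₀‖ with ht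
  have ht₀ : 0 < t := by positivity
  have hlc := hf x x₀ t ht₀ ((div_lt_one hxR).2 hx)
  have hnorm : ‖t • x + (1 - t) • x₀ - x₀‖ = R := by
    rw [show t • x + (1 - t) • x₀ - x₀ = t • (x - x₀) by module, norm_smul,
      norm_of_nonneg ht₀.le, ht, div_mul_cancel₀ _ hxR.ne']
  have hpow : (f x / f x₀) ^ t ≤ exp (-1) := by
    have hle : f x ^ t * f x₀ ^ (1 - t) ≤ exp (-1) * f x₀ := by
      linarith [hlc.trans (hsphere _ hnorm)]
    rwa [rpow_sub hx₀, rpow_one, mul_div_left_comm, mul_comm, ← div_rpow (hf₀ x) hx₀.le,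
      mul_le_mul_iff_of_pos_right hx₀] at hle
  rw [mul_comm, ← div_le_iff₀ hx₀]
  calc f x / f x₀ ≤ exp (-1) ^ t⁻¹ :=
        (le_rpow_inv_iff_of_pos (div_nonneg (hf₀ x) hx₀.le) (exp_pos _).le ht₀).2 hpow
    _ = exp (-(‖x - x₀‖ / R)) := by rw [← exp_mul, ht, inv_div, neg_one_mul]

namespace MemQ0

lemma exists_interior_setOf_lt_nonempty (hf : MemQ0 f) :
    ∃ δ > 0, (interior {x | δ < f x}).Nonempty := by
  obtain ⟨hf₀, hlc, -, hint, hpos⟩ := hf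
  have hsupp : Function.support f ⊆ ⋃ N : ℕ, {x | 1 / ((N : ℝ) + 1) < f x} := fun x hx =>
    mem_iUnion.2 (exists_nat_one_div_lt ((hf₀ x).lt_of_ne' hx))
  have hμ := ((integral_pos_iff_support_of_nonneg hf₀ hint).1 hpos).trans_le (measure_mono hsupp)
  obtain ⟨N, hN⟩ := exists_measure_pos_of_not_measure_iUnion_null hμ.ne'
  have hδ : (0 : ℝ) < 1 / ((N : ℝ) + 1) := Nat.one_div_pos_of_nat
  refine ⟨_, hδ, nonempty_iff_ne_empty.2 fun hempty => hN.ne' ?_⟩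
  have hfr := (hlc.convex_setOf_lt hδ).addHaar_frontier volume
  rw [frontier, hempty, sdiff_empty] at hfr
  exact measure_mono_null subset_closure hfr

lemma exists_forall_le_mul_exp_neg (hf : MemQ0 f) :
    ∃ x₀ R, 0 < R ∧ ∀ x, R < ‖x - x₀‖ → f x ≤ f x₀ * exp (-(‖x - x₀‖ / R)) := by
  obtain ⟨δ, hδ, hne⟩ := hf.exists_interior_setOf_lt_nonempty
  obtain ⟨hf₀, hlc, -, hint, -⟩ := hf
  obtain ⟨x₀, hx₀⟩ := id hne
  have hfx₀ : δ < f x₀ := interior_subset (s := {x | δ < f x}) hx₀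
  have hη : 0 < δ * exp (-1) := by positivity
  have hηδ : δ * exp (-1) < δ := mul_lt_of_lt_one_right hδ (by simp)
  have hbdd := isBounded_of_convex_of_measure_ne_top volume (hlc.convex_setOf_lt hη)
    (hne.mono (interior_mono fun x (hx : δ < f x) => hηδ.trans hx))
    (hint.measure_gt_lt_top hη).ne
  obtain ⟨R, hR, hsub⟩ := hbdd.subset_ball_lt 0 x₀
  refine ⟨x₀, R, hR, fun x hx => hlc.le_mul_exp_neg hf₀ hR (hδ.trans hfx₀) (fun y hy => ?_) hx⟩
  have hy' : ¬ δ * exp (-1) < f y := fun h => (mem_ball_iff_norm.1 (hsub h)).ne hy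
  exact (not_lt.1 hy').trans (by gcongr)

lemma hasExpDecay (hf : MemQ0 f) : HasExpDecay f := by
  obtain ⟨x₀, R, hR, hfar⟩ := hf.exists_forall_le_mul_exp_neg
  obtain ⟨B, hB⟩ := (hf.2.2.1.upperSemicontinuousOn _).bddAbove_of_isCompact
    (isCompact_closedBall x₀ R)
  have hnear (x : Eucl n) (hx : ‖x - x₀‖ ≤ R) : f x ≤ B :=
    hB (mem_image_of_mem f (mem_closedBall_iff_norm.2 hx))
  have hBx₀ : f x₀ ≤ B := hnear x₀ (by simpa using hR.le)
  have hB₀ : 0 ≤ B := (hf.1 x₀).trans hBx₀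
  refine ⟨B * exp (1 + ‖x₀‖ / R), 1 / R, by positivity, fun x => ?_⟩
  have hexp : 1 - ‖x - x₀‖ / R ≤ 1 + ‖x₀‖ / R + -(1 / R) * ‖x‖ := by
    have : ‖x‖ / R ≤ ‖x - x₀‖ / R + ‖x₀‖ / R := by
      rw [← add_div]
      gcongr
      simpa using norm_add_le (x - x₀) x₀
    linarith [one_div_mul_eq_div R ‖x‖]
  rw [abs_of_nonneg (hf.1 x), mul_assoc, ← exp_add]
  refine le_trans ?_ (mul_le_mul_of_nonneg_left (exp_le_exp.2 hexp) hB₀)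
  rcases le_or_gt ‖x - x₀‖ R with h | h
  · exact (hnear x h).trans (le_mul_of_one_le_right hB₀
      (one_le_exp (sub_nonneg.2 ((div_le_one hR).2 h))))
  · refine (hfar x h).trans (mul_le_mul hBx₀ (exp_le_exp.2 ?_) (exp_pos _).le hB₀)
    linarith

end MemQ0

end LogConcave

section Radial

lemma setLIntegral_Ioo_rpow {s R : ℝ} (hs : 0 < s) (hR : 0 ≤ R) :
    ∫⁻ r in Ioo 0 R, ENNReal.ofReal (r ^ (s - 1)) = ENNReal.ofReal (R ^ s / s) := by
  have hint : IntervalIntegrable (fun r : ℝ => r ^ (s - 1)) volume 0 R :=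
    intervalIntegral.intervalIntegrable_rpow' (by linarith)
  rw [restrict_Ioo_eq_restrict_Ioc, ← ofReal_integral_eq_lintegral_ofReal
      ((intervalIntegrable_iff_integrableOn_Ioc_of_le hR).1 hint)
      ((ae_restrict_mem measurableSet_Ioc).mono fun r hr => rpow_nonneg hr.1.le _),
    ← intervalIntegral.integral_of_le hR, integral_rpow (Or.inl (by linarith)),
    sub_add_cancel, zero_rpow hs.ne', sub_zero]

variable {E : Type*} [NormedAddCommGroup E] [NormedSpace ℝ E] [FiniteDimensional ℝ E]
  [Nontrivial E] [MeasurableSpace E] [BorelSpace E] (μ : Measure E) [μ.IsAddHaarMeasure]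

lemma lintegral_fun_norm {f : ℝ → ℝ≥0∞} (hf : Measurable f) :
    ∫⁻ x, f ‖x‖ ∂μ = finrank ℝ E * μ (ball 0 1) *
      ∫⁻ r in Ioi (0 : ℝ), ENNReal.ofReal (r ^ (finrank ℝ E - 1)) * f r := by
  calc ∫⁻ x, f ‖x‖ ∂μ = ∫⁻ x : ({0}ᶜ : Set E), f ‖x.1‖ ∂μ.comap (↑) := by
        rw [lintegral_subtype_comap (measurableSet_singleton _).compl fun x => f ‖x‖,
          restrict_compl_singleton]
    _ = ∫⁻ x, f x.2 ∂μ.toSphere.prod (.volumeIoiPow (finrank ℝ E - 1)) := by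
        simpa using μ.measurePreserving_homeomorphUnitSphereProd.lintegral_comp_emb
          (Homeomorph.measurableEmbedding _) (f ∘ Subtype.val ∘ Prod.snd)
    _ = μ.toSphere univ * ∫⁻ r : Ioi (0 : ℝ), f r ∂.volumeIoiPow (finrank ℝ E - 1) := by
        rw [lintegral_prod _ (by fun_prop)]
        simp [mul_comm]
    _ = _ := by
        rw [μ.toSphere_apply_univ, Measure.volumeIoiPow,
          lintegral_withDensity_eq_lintegral_mul _ (by fun_prop) (by fun_prop)]
        simp only [Pi.mul_apply]
        rw [lintegral_subtype_comap measurableSet_Ioi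
          fun r => ENNReal.ofReal (r ^ (finrank ℝ E - 1)) * f r]

lemma lintegral_fun_norm_mul_enorm_rpow {f : ℝ → ℝ≥0∞} (hf : Measurable f) (s : ℝ) :
    ∫⁻ x, f ‖x‖ * ‖x‖ₑ ^ (s - finrank ℝ E) ∂μ = finrank ℝ E * μ (ball 0 1) *
      ∫⁻ r in Ioi (0 : ℝ), ENNReal.ofReal (r ^ (s - 1)) * f r := by
  simp only [← ofReal_norm]
  rw [lintegral_fun_norm μ (f := fun r => f r * ENNReal.ofReal r ^ (s - finrank ℝ E))
    (by fun_prop)]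
  congr 1
  refine setLIntegral_congr_fun measurableSet_Ioi fun r (hr : 0 < r) => ?_
  rw [mul_comm (f r), ← mul_assoc, ENNReal.ofReal_rpow_of_pos hr,
    ← ENNReal.ofReal_mul (by positivity), ← rpow_natCast, ← rpow_add hr]
  rw [Nat.cast_sub finrank_pos]
  ring_nf

lemma setLIntegral_ball_enorm_rpow {s R : ℝ} (hs : 0 < s) (hR : 0 ≤ R) :
    ∫⁻ x in ball 0 R, ‖x‖ₑ ^ (s - finrank ℝ E) ∂μ =
      finrank ℝ E * μ (ball 0 1) * ENNReal.ofReal (R ^ s / s) := by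
  calc ∫⁻ x in ball 0 R, ‖x‖ₑ ^ (s - finrank ℝ E) ∂μ
      = ∫⁻ x, (Iio R).indicator 1 ‖x‖ * ‖x‖ₑ ^ (s - finrank ℝ E) ∂μ := by
        rw [← lintegral_indicator measurableSet_ball]
        refine lintegral_congr fun x => ?_
        by_cases hx : ‖x‖ < R <;> simp [hx]
    _ = finrank ℝ E * μ (ball 0 1) * ∫⁻ r in Ioo 0 R, ENNReal.ofReal (r ^ (s - 1)) := by
        rw [lintegral_fun_norm_mul_enorm_rpow μ (measurable_one.indicator measurableSet_Iio) s,
          ← Ioi_inter_Iio, inter_comm, ← setLIntegral_indicator measurableSet_Iio]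
        simp [indicator_apply]
    _ = _ := by rw [setLIntegral_Ioo_rpow hs hR]

end Radial

section WeightedIntegrals

lemma mul_add_mul_le_mul_add_mul_of_canonicallyOrdered {R : Type*} [CommSemiring R]
    [PartialOrder R] [CanonicallyOrderedAdd R] [AddLeftMono R] {a b c d : R}
    (hab : a ≤ b) (hcd : c ≤ d) : a * d + b * c ≤ a * c + b * d := by
  obtain ⟨e, rfl⟩ := exists_add_of_le hab
  calc a * d + (a + e) * c = a * c + a * d + e * c := by ring
    _ ≤ a * c + a * d + e * d := by gcongr
    _ = a * c + (a + e) * d := by ring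

lemma ennreal_rpow_le_rpow_of_nonpos {a b : ℝ≥0∞} (hab : a ≤ b) {z : ℝ} (hz : z ≤ 0) :
    b ^ z ≤ a ^ z := by
  rw [← ENNReal.inv_le_inv, ← ENNReal.rpow_neg, ← ENNReal.rpow_neg]
  exact ENNReal.rpow_le_rpow hab (neg_nonneg.2 hz)

variable {α : Type*} [MeasurableSpace α] {μ : Measure α}

-- The bathtub principle: the mass `∫ F` is best spent on the set `B` where the weight is largest.
lemma lintegral_mul_le_const_mul_setLIntegral {F w : α → ℝ≥0∞} (hF : Measurable F)
    (hw : Measurable w) {N a : ℝ≥0∞} (hFN : ∀ x, F x ≤ N) {B : Set α} (hB : MeasurableSet B)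
    (hBw : ∀ x ∈ B, a ≤ w x) (hwB : ∀ x ∉ B, w x ≤ a) (ha : a ≠ ∞)
    (hfin : ∫⁻ x, F x ∂μ ≠ ∞) (hNB : N * μ B = ∫⁻ x, F x ∂μ) :
    ∫⁻ x, F x * w x ∂μ ≤ N * ∫⁻ x in B, w x ∂μ := by
  have hpt (x : α) : F x * w x + B.indicator (fun _ => N * a) x ≤
      B.indicator (fun x => N * w x) x + F x * a := by
    by_cases hx : x ∈ B
    · simpa [hx, add_comm] using
        mul_add_mul_le_mul_add_mul_of_canonicallyOrdered (hFN x) (hBw x hx)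
    · simpa [hx] using mul_le_mul_right (hwB x hx) (F x)
  have hint := lintegral_mono (μ := μ) hpt
  rw [lintegral_add_left (by fun_prop), lintegral_add_right _ (by fun_prop),
    lintegral_indicator_const hB, lintegral_indicator hB, lintegral_const_mul _ hw,
    lintegral_mul_const _ hF, mul_right_comm, hNB] at hint
  exact (ENNReal.add_le_add_iff_right (ENNReal.mul_ne_top hfin ha)).1 hint

lemma lintegral_le_rpow_mul_lintegral_mul_rpow_neg {G u : α → ℝ≥0∞} (hG : AEMeasurable G μ)
    (hu : AEMeasurable u μ) (hu₀ : ∀ᵐ x ∂μ, u x ≠ 0) (hu_top : ∀ᵐ x ∂μ, u x ≠ ∞) {q : ℝ}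
    (hq : 0 ≤ q) {D : ℝ≥0∞} (hfin : ∫⁻ x, G x ∂μ ≠ ∞)
    (hD : ∫⁻ x, G x * u x ^ 2 ∂μ ≤ D * ∫⁻ x, G x ∂μ) :
    ∫⁻ x, G x ∂μ ≤ D ^ (q / 2) * ∫⁻ x, G x * u x ^ (-q) ∂μ := by
  simp only [← ENNReal.rpow_two] at hD
  set I := ∫⁻ x, G x ∂μ
  set J := ∫⁻ x, G x * u x ^ (-q) ∂μ
  rcases eq_or_ne I 0 with hI₀ | hI₀
  · simp [hI₀]
  set a := q / (q + 2)
  set b := 2 / (q + 2)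
  have hab : a + b = 1 := by simp only [a, b]; field_simp
  have ha : 0 ≤ a := by positivity
  have hb : 0 < b := by positivity
  have hHolder : I ^ a * I ^ b ≤ I ^ a * (D ^ a * J ^ b) := by
    calc I ^ a * I ^ b = ∫⁻ x, (G x * u x ^ (2 : ℝ)) ^ a * (G x * u x ^ (-q)) ^ b ∂μ := by
          rw [← ENNReal.rpow_add _ _ hI₀ hfin, hab, ENNReal.rpow_one]
          refine lintegral_congr_ae ?_
          filter_upwards [hu₀, hu_top] with x hx₀ hx_top
          rw [ENNReal.mul_rpow_of_nonneg _ _ ha, ENNReal.mul_rpow_of_nonneg _ _ hb.le,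
            mul_mul_mul_comm, ← ENNReal.rpow_add_of_nonneg _ _ ha hb.le, hab, ENNReal.rpow_one,
            ← ENNReal.rpow_mul, ← ENNReal.rpow_mul, ← ENNReal.rpow_add _ _ hx₀ hx_top]
          simp only [a, b]
          ring_nf
          simp
      _ ≤ (D * I) ^ a * J ^ b := by
          refine (ENNReal.lintegral_mul_norm_pow_le (f := fun x => G x * u x ^ (2 : ℝ))
            (g := fun x => G x * u x ^ (-q)) (by fun_prop) (by fun_prop) ha hb.le hab).trans ?_
          gcongr
      _ = I ^ a * (D ^ a * J ^ b) := by
          rw [ENNReal.mul_rpow_of_nonneg _ _ ha]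
          ring
  rw [ENNReal.mul_le_mul_iff_right (by simp [hI₀, hfin]) (by simp [ha, hfin])] at hHolder
  rw [← ENNReal.rpow_le_rpow_iff hb, ENNReal.mul_rpow_of_nonneg _ _ hb.le, ← ENNReal.rpow_mul]
  rwa [show q / 2 * b = a by simp only [a, b]; field_simp]

variable {E : Type*} [NormedAddCommGroup E] [NormedSpace ℝ E] [FiniteDimensional ℝ E]
  [Nontrivial E] [MeasurableSpace E] [BorelSpace E] (μ : Measure E) [μ.IsAddHaarMeasure]

lemma exists_const_mul_measure_ball_eq {N I : ℝ≥0∞} (hN₀ : N ≠ 0) (hN : N ≠ ∞) (hI : I ≠ ∞) :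
    ∃ R : ℝ, 0 ≤ R ∧ N * μ (ball (0 : E) R) = I := by
  have hω₀ : μ (ball (0 : E) 1) ≠ 0 := (measure_ball_pos μ 0 one_pos).ne'
  have hω : μ (ball (0 : E) 1) ≠ ∞ := measure_ball_lt_top.ne
  have hd : finrank ℝ E ≠ 0 := finrank_pos.ne'
  set t := I / (N * μ (ball (0 : E) 1)) with ht
  have ht_top : t ≠ ∞ := ENNReal.div_ne_top hI (mul_ne_zero hN₀ hω₀)
  refine ⟨t.toReal ^ (finrank ℝ E : ℝ)⁻¹, by positivity, ?_⟩
  rw [Measure.addHaar_ball _ _ (by positivity), rpow_inv_natCast_pow ENNReal.toReal_nonneg hd,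
    ENNReal.ofReal_toReal ht_top, mul_left_comm, ht,
    ENNReal.div_mul_cancel (mul_ne_zero hN₀ hω₀) (ENNReal.mul_ne_top hN hω)]

lemma lintegral_mul_enorm_rpow_le_of_le {F : E → ℝ≥0∞} (hF : Measurable F) {N : ℝ≥0∞} (hN : N ≠ ∞)
    (hFN : ∀ x, F x ≤ N) (hfin : ∫⁻ x, F x ∂μ ≠ ∞) {s : ℝ} (hs : 0 < s) (hsd : s < finrank ℝ E) :
    ∫⁻ x, F x * ‖x‖ₑ ^ (s - finrank ℝ E) ∂μ ≤ ENNReal.ofReal (finrank ℝ E / s) *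
      (μ (ball 0 1) * N) ^ (1 - s / finrank ℝ E) * (∫⁻ x, F x ∂μ) ^ (s / finrank ℝ E) := by
  set d := finrank ℝ E
  set ω := μ (ball (0 : E) 1)
  set I := ∫⁻ x, F x ∂μ with hI
  rcases eq_or_ne I 0 with hI₀ | hI₀
  · have hF₀ : F =ᵐ[μ] 0 := (lintegral_eq_zero_iff hF).1 hI₀
    rw [lintegral_congr_ae (g := 0) (by filter_upwards [hF₀] with x hx; simp [hx])]
    simp
  have hN₀ : N ≠ 0 := by
    rintro rfl
    exact hI₀ (by simp [hI, nonpos_iff_eq_zero.1 (hFN _)])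
  obtain ⟨R, hR, hNR⟩ := exists_const_mul_measure_ball_eq μ hN₀ hN hfin
  have hR₀ : 0 < R := hR.lt_of_ne' <| by
    rintro rfl
    exact hI₀ (by simp [← hNR])
  have henorm (x : E) : x ∈ ball 0 R ↔ ‖x‖ₑ < ENNReal.ofReal R := by
    rw [mem_ball_zero_iff, ← ofReal_norm, ENNReal.ofReal_lt_ofReal_iff hR₀]
  have hball : ∫⁻ x, F x * ‖x‖ₑ ^ (s - d) ∂μ ≤ N * ∫⁻ x in ball 0 R, ‖x‖ₑ ^ (s - d) ∂μ :=
    lintegral_mul_le_const_mul_setLIntegral hF (by fun_prop) hFN measurableSet_ball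
      (fun x hx => ennreal_rpow_le_rpow_of_nonpos ((henorm x).1 hx).le (by linarith))
      (fun x hx => ennreal_rpow_le_rpow_of_nonpos (not_lt.1 (mt (henorm x).2 hx)) (by linarith))
      (ENNReal.rpow_ne_top_of_ne_zero (by simpa) (by simp)) hfin hNR
  have hd : (0 : ℝ) < d := hs.trans hsd
  have hω : ω * N ≠ 0 := mul_ne_zero (measure_ball_pos μ 0 one_pos).ne' hN₀
  have hI_eq : I = ω * N * ENNReal.ofReal R ^ d := by
    rw [← hNR, Measure.addHaar_ball μ _ hR, ENNReal.ofReal_pow hR]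
    ring
  calc _ ≤ N * ∫⁻ x in ball 0 R, ‖x‖ₑ ^ (s - d) ∂μ := hball
    _ = ENNReal.ofReal (d / s) * (ω * N * ENNReal.ofReal R ^ s) := by
        rw [setLIntegral_ball_enorm_rpow μ hs hR, ENNReal.ofReal_div_of_pos hs,
          ENNReal.ofReal_div_of_pos hs, ENNReal.ofReal_natCast, ENNReal.ofReal_rpow_of_pos hR₀]
        simp only [div_eq_mul_inv]
        ring
    _ = _ := by
        rw [mul_assoc (ENNReal.ofReal _), hI_eq,
          ENNReal.mul_rpow_of_nonneg (ω * N) _ (div_pos hs hd).le,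
          ← mul_assoc ((ω * N) ^ (1 - s / d)),
          ← ENNReal.rpow_add _ _ hω (ENNReal.mul_ne_top measure_ball_lt_top.ne hN),
          ← ENNReal.rpow_natCast_mul, mul_div_cancel₀ _ hd.ne']
        simp

end WeightedIntegrals

section BallVolume

variable {E : Type*} [NormedAddCommGroup E] [InnerProductSpace ℝ E] [FiniteDimensional ℝ E]
  [MeasurableSpace E] [BorelSpace E]

lemma lintegral_exp_neg_mul_sq_norm {b : ℝ} (hb : 0 < b) :
    ∫⁻ x : E, ENNReal.ofReal (exp (-b * ‖x‖ ^ 2)) =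
      ENNReal.ofReal ((π / b) ^ (finrank ℝ E / 2 : ℝ)) := by
  have hgauss := GaussianFourier.integral_rexp_neg_mul_sq_norm (V := E) hb
  rw [← hgauss, ofReal_integral_eq_lintegral_ofReal _ (ae_of_all _ fun x => (exp_pos _).le)]
  refine Integrable.of_integral_ne_zero ?_
  rw [hgauss]
  positivity

lemma volume_ball_sqrt_finrank_le :
    volume (ball (0 : E) √(finrank ℝ E)) ≤
      ENNReal.ofReal ((2 * π * exp 1) ^ (finrank ℝ E / 2 : ℝ)) := by
  set d : ℝ := (finrank ℝ E : ℝ)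
  have hball : ball (0 : E) √d ⊆
      {x | ENNReal.ofReal (exp (-(d / 2))) ≤ ENNReal.ofReal (exp (-2⁻¹ * ‖x‖ ^ 2))} := by
    intro x hx
    have : ‖x‖ ^ 2 < d := (lt_sqrt (norm_nonneg x)).1 (mem_ball_zero_iff.1 hx)
    exact ENNReal.ofReal_le_ofReal (exp_le_exp.2 (by linarith))
  have hmarkov := (mul_le_mul_right (measure_mono (μ := volume) hball) _).trans
    (mul_meas_ge_le_lintegral (by fun_prop) (ENNReal.ofReal (exp (-(d / 2)))))
  rw [lintegral_exp_neg_mul_sq_norm (by positivity)] at hmarkov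
  calc volume (ball (0 : E) √d)
      = ENNReal.ofReal (exp (d / 2)) *
          (ENNReal.ofReal (exp (-(d / 2))) * volume (ball (0 : E) √d)) := by
        rw [← mul_assoc, ← ENNReal.ofReal_mul (exp_pos _).le, ← exp_add]
        simp
    _ ≤ ENNReal.ofReal (exp (d / 2)) * ENNReal.ofReal ((π / 2⁻¹) ^ (d / 2)) := by gcongr
    _ = ENNReal.ofReal ((2 * π * exp 1) ^ (d / 2)) := by
        rw [← ENNReal.ofReal_mul (exp_pos _).le, mul_rpow (by positivity) (exp_pos _).le, ← exp_mul]
        ring_nf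

end BallVolume

section OrthogonalGroup

variable (E : Type*) [NormedAddCommGroup E] [InnerProductSpace ℝ E] [FiniteDimensional ℝ E]

/-- The orthogonal group `O(E)`, with the topology of the operator norm. -/
abbrev OrthGroup : Type _ := unitary (E →L[ℝ] E)

namespace OrthGroup

instance : ContinuousStar (E →L[ℝ] E) := ⟨ContinuousLinearMap.adjoint.continuous⟩

instance : CompactSpace (OrthGroup E) := by
  have : ProperSpace (E →L[ℝ] E) := FiniteDimensional.proper ℝ _
  refine isCompact_iff_compactSpace.1 (isCompact_of_isClosed_isBounded isClosed_unitary
    (isBounded_iff_forall_norm_le.2 ⟨1, fun U hU => U.opNorm_le_bound zero_le_one fun v => ?_⟩))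
  rw [one_mul]
  exact (ContinuousLinearMap.norm_map_of_mem_unitary hU v).le

instance : MeasurableSpace (OrthGroup E) := borel _

instance : BorelSpace (OrthGroup E) := ⟨rfl⟩

/-- The Haar probability measure of the orthogonal group, over which rotations are averaged. -/
def haar : Measure (OrthGroup E) := Measure.haarMeasure ⊤

instance : (haar E).IsHaarMeasure := inferInstanceAs (Measure.haarMeasure _).IsHaarMeasure

instance : IsProbabilityMeasure (haar E) := ⟨Measure.haarMeasure_self (K₀ := ⊤)⟩

variable {E}

/-- The average `x ↦ ∫ F(U⁻¹x) dU` of `F` over the orthogonal group. -/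
def average [MeasurableSpace E] (F : E → ℝ≥0∞) (x : E) : ℝ≥0∞ :=
  ∫⁻ U : OrthGroup E, F (U⁻¹ • x) ∂haar E

lemma continuous_inv_smul :
    Continuous fun p : OrthGroup E × E => p.1⁻¹ • p.2 :=
  (continuous_subtype_val.comp (continuous_inv.comp continuous_fst)).clm_apply continuous_snd

variable [MeasurableSpace E]

lemma average_eq_of_norm_eq (F : E → ℝ≥0∞) {x y : E} (h : ‖x‖ = ‖y‖) :
    average F x = average F y := by
  set V : OrthGroup E := Unitary.linearIsometryEquiv.symm (ℝ ∙ (x - y))ᗮ.reflection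
  have hVx : V.1 x = y := Submodule.reflection_sub h
  rw [average, ← lintegral_mul_left_eq_self _ V⁻¹]
  refine lintegral_congr fun U => ?_
  rw [mul_inv_rev, inv_inv, ← hVx]
  rfl

lemma average_eq_norm_smul {e : E} (he : ‖e‖ = 1) (F : E → ℝ≥0∞) (x : E) :
    average F x = average F (‖x‖ • e) :=
  average_eq_of_norm_eq F (by simp [norm_smul, he])

variable [BorelSpace E] {F : E → ℝ≥0∞}

lemma measurable_comp_inv_smul (hF : Measurable F) :
    Measurable fun p : OrthGroup E × E => F (p.1⁻¹ • p.2) :=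
  hF.comp continuous_inv_smul.measurable

lemma measurable_average (hF : Measurable F) : Measurable (average F) :=
  (measurable_comp_inv_smul hF).lintegral_prod_left'

lemma lintegral_average_mul (hF : Measurable F) {w : ℝ → ℝ≥0∞} (hw : Measurable w) :
    ∫⁻ x, average F x * w ‖x‖ = ∫⁻ x, F x * w ‖x‖ := by
  have hrot (U : OrthGroup E) :
      ∫⁻ x, F (U⁻¹ • x) * w ‖x‖ = ∫⁻ x, F x * w ‖x‖ := by
    set V := Unitary.linearIsometryEquiv U⁻¹
    have hV := V.measurePreserving.lintegral_comp_emb V.toHomeomorph.measurableEmbedding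
      fun x => F x * w ‖x‖
    simp only [V.norm_map] at hV
    exact hV
  have hmeas := measurable_comp_inv_smul hF
  calc ∫⁻ x, average F x * w ‖x‖
      = ∫⁻ x, (∫⁻ U : OrthGroup E, F (U⁻¹ • x) * w ‖x‖ ∂haar E) := by
        refine lintegral_congr fun x => ?_
        exact (lintegral_mul_const _ (hmeas.comp measurable_prodMk_right)).symm
    _ = ∫⁻ U : OrthGroup E, (∫⁻ x, F (U⁻¹ • x) * w ‖x‖) ∂haar E :=
        (lintegral_lintegral_swap (hmeas.mul (by fun_prop)).aemeasurable).symm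
    _ = ∫⁻ x, F x * w ‖x‖ := by simp [hrot]

lemma lintegral_mul_enorm_rpow (hF : Measurable F) (H : Submodule ℝ E) [Nontrivial H] :
    (finrank ℝ E * volume (ball (0 : E) 1)) *
        ∫⁻ U : OrthGroup E, (∫⁻ y : H, F (U⁻¹ • (y : E))) ∂haar E =
      (finrank ℝ H * volume (ball (0 : H) 1)) *
        ∫⁻ x, F x * ‖x‖ₑ ^ ((finrank ℝ H : ℝ) - finrank ℝ E) := by
  have : Nontrivial E := H.subtype_injective.nontrivial
  obtain ⟨e, he⟩ := exists_norm_eq E zero_le_one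
  have hψ : Measurable fun r : ℝ => average F (r • e) := (measurable_average hF).comp (by fun_prop)
  have hE : ∫⁻ x, F x * ‖x‖ₑ ^ ((finrank ℝ H : ℝ) - finrank ℝ E) =
      finrank ℝ E * volume (ball (0 : E) 1) * ∫⁻ r in Ioi (0 : ℝ),
        ENNReal.ofReal (r ^ ((finrank ℝ H : ℝ) - 1)) * average F (r • e) := by
    rw [← lintegral_fun_norm_mul_enorm_rpow volume hψ]
    simp only [← ofReal_norm, ← average_eq_norm_smul he]
    exact (lintegral_average_mul hF (w := fun r => ENNReal.ofReal r ^ _) (by fun_prop)).symm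
  have hH : ∫⁻ U : OrthGroup E, (∫⁻ y : H, F (U⁻¹ • (y : E))) ∂haar E =
      finrank ℝ H * volume (ball (0 : H) 1) * ∫⁻ r in Ioi (0 : ℝ),
        ENNReal.ofReal (r ^ ((finrank ℝ H : ℝ) - 1)) * average F (r • e) := by
    rw [← lintegral_fun_norm_mul_enorm_rpow volume hψ, lintegral_lintegral_swap]
    · refine lintegral_congr fun y => ?_
      rw [sub_self, ENNReal.rpow_zero, mul_one]
      exact average_eq_norm_smul he F y
    · exact ((measurable_comp_inv_smul hF).comp
        (by fun_prop : Measurable fun p : OrthGroup E × H => (p.1, (p.2 : E)))).aemeasurable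
  rw [hE, hH]
  ring

end OrthGroup

end OrthogonalGroup

section Sections

lemma exists_submodule_finrank_eq (K V : Type*) [DivisionRing K] [AddCommGroup V] [Module K V]
    [FiniteDimensional K V] {k : ℕ} (hk : k ≤ finrank K V) :
    ∃ H : Submodule K V, finrank K H = k := by
  have hli := (finBasis K V).linearIndependent.comp (Fin.castLE hk) (Fin.castLE_injective hk)
  exact ⟨_, by simpa using finrank_span_eq_card hli⟩

variable {E : Type*} [NormedAddCommGroup E] [InnerProductSpace ℝ E] [FiniteDimensional ℝ E]
  [MeasurableSpace E] [BorelSpace E]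

/-- The Busemann–Petty condition: over every `k`-dimensional subspace, the integral of the section
of `φ` is at most that of `ψ`. -/
def SectionsLE (k : ℕ) (φ ψ : E → ℝ≥0∞) : Prop :=
  ∀ H : Submodule ℝ E, finrank ℝ H = k → ∫⁻ y : H, φ y ≤ ∫⁻ y : H, ψ y

lemma exists_setLIntegral_comp_linearEquiv (T : E ≃ₗ[ℝ] E) (H : Submodule ℝ E) :
    ∃ c : ℝ≥0∞, ∀ φ : E → ℝ≥0∞,
      ∫⁻ y : H, φ (T y) = c * ∫⁻ z : H.map (T : E →ₗ[ℝ] E), φ z := by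
  set e := (T.submoduleMap H).toContinuousLinearEquiv
  have := e.isAddHaarMeasure_map volume
  set ν : Measure (H.map (T : E →ₗ[ℝ] E)) := volume.map e
  refine ⟨Measure.addHaarScalarFactor ν volume, fun φ => ?_⟩
  calc ∫⁻ y : H, φ (T y) = ∫⁻ z, φ z ∂ν :=
        (e.toHomeomorph.measurableEmbedding.lintegral_map fun z => φ z).symm
    _ = _ := (congrArg (fun m : Measure (H.map (T : E →ₗ[ℝ] E)) => ∫⁻ z, φ z ∂m)
        (Measure.isAddLeftInvariant_eq_smul ν volume)).trans (lintegral_smul_measure _ _)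

namespace SectionsLE

variable {k : ℕ} {φ ψ : E → ℝ≥0∞}

lemma comp_linearEquiv (h : SectionsLE k φ ψ) (T : E ≃ₗ[ℝ] E) :
    SectionsLE k (fun x => φ (T x)) fun x => ψ (T x) := by
  intro H hH
  obtain ⟨c, hc⟩ := exists_setLIntegral_comp_linearEquiv T H
  rw [hc, hc]
  refine mul_le_mul_right ?_ c
  exact h _ ((T.submoduleMap H).finrank_eq.symm.trans hH)

lemma lintegral_mul_enorm_rpow_le (h : SectionsLE k φ ψ) (hk : 0 < k) (hkd : k ≤ finrank ℝ E)
    (hφ : Measurable φ) (hψ : Measurable ψ) :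
    ∫⁻ x, φ x * ‖x‖ₑ ^ ((k : ℝ) - finrank ℝ E) ≤
      ∫⁻ x, ψ x * ‖x‖ₑ ^ ((k : ℝ) - finrank ℝ E) := by
  obtain ⟨H, rfl⟩ := exists_submodule_finrank_eq ℝ E hkd
  have : Nontrivial H := nontrivial_of_finrank_pos hk
  have hc₀ : (finrank ℝ H : ℝ≥0∞) * volume (ball (0 : H) 1) ≠ 0 :=
    mul_ne_zero (by simpa using hk.ne') (measure_ball_pos _ _ one_pos).ne'
  have hc : (finrank ℝ H : ℝ≥0∞) * volume (ball (0 : H) 1) ≠ ∞ :=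
    ENNReal.mul_ne_top (by simp) measure_ball_lt_top.ne
  rw [← ENNReal.mul_le_mul_iff_right hc₀ hc, ← OrthGroup.lintegral_mul_enorm_rpow hφ,
    ← OrthGroup.lintegral_mul_enorm_rpow hψ]
  refine mul_le_mul_right (lintegral_mono fun U => ?_) _
  exact h.comp_linearEquiv (Unitary.linearIsometryEquiv U⁻¹).toLinearEquiv H rfl

end SectionsLE

end Sections

section IsotropicPosition

variable {E : Type*} [NormedAddCommGroup E] [InnerProductSpace ℝ E] [FiniteDimensional ℝ E]
  [MeasurableSpace E] [BorelSpace E]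

lemma ennreal_rpow_le_rpow_mul {a M : ℝ≥0∞} {p : ℝ} (hp : 1 ≤ p) (h : a ^ p ≤ M) :
    a ^ p ≤ M ^ (1 - p⁻¹) * a := by
  have hp₀ : 0 < p := zero_lt_one.trans_le hp
  have hτ : 0 ≤ 1 - p⁻¹ := sub_nonneg.2 (inv_le_one_of_one_le₀ hp)
  calc a ^ p = (a ^ p) ^ (1 - p⁻¹) * (a ^ p) ^ p⁻¹ := by
        rw [← ENNReal.rpow_add_of_nonneg _ _ hτ (by positivity), sub_add_cancel, ENNReal.rpow_one]
    _ ≤ M ^ (1 - p⁻¹) * a := by rw [ENNReal.rpow_rpow_inv hp₀.ne']; gcongr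

lemma natCast_div_le_two_pow_sub {n k : ℕ} (hk : 0 < k) (hkn : k ≤ n) :
    (n : ℝ) / k ≤ 2 ^ (n - k) := by
  have hk₁ : (1 : ℝ) ≤ k := by exact_mod_cast hk
  have hbern : (1 : ℝ) + (n - k : ℕ) ≤ 2 ^ (n - k) := by
    exact_mod_cast (Nat.one_add_le_iff.2 Nat.lt_two_pow_self)
  rw [Nat.cast_sub hkn] at hbern
  refine (div_le_iff₀ (by positivity)).2 ?_
  have : (k : ℝ) ≤ n := by exact_mod_cast hkn
  nlinarith

lemma rpow_finrank_mul_volume_ball_rpow_le [Nontrivial E] {τ : ℝ} (hτ : 0 ≤ τ) :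
    (finrank ℝ E : ℝ≥0∞) ^ (τ * finrank ℝ E / 2) * volume (ball (0 : E) 1) ^ τ ≤
      ENNReal.ofReal (√(2 * π * exp 1) ^ (τ * finrank ℝ E)) := by
  set d := finrank ℝ E
  calc (d : ℝ≥0∞) ^ (τ * d / 2) * volume (ball (0 : E) 1) ^ τ
      = volume (ball (0 : E) √d) ^ τ := by
        rw [Measure.addHaar_ball _ _ (sqrt_nonneg _), ENNReal.mul_rpow_of_nonneg _ _ hτ,
          sqrt_eq_rpow, ← rpow_mul_natCast (by positivity), ← ENNReal.ofReal_rpow_of_nonneg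
          (by positivity) (by positivity), ENNReal.ofReal_natCast, ← ENNReal.rpow_mul]
        congr 2
        ring
    _ ≤ ENNReal.ofReal ((2 * π * exp 1) ^ (d / 2 : ℝ)) ^ τ := by
        gcongr
        exact volume_ball_sqrt_finrank_le
    _ = _ := by
        rw [ENNReal.ofReal_rpow_of_nonneg (by positivity) hτ, sqrt_eq_rpow,
          ← rpow_mul (by positivity), ← rpow_mul (by positivity)]
        ring_nf

lemma SectionsLE.lintegral_rpow_le {k : ℕ} {φ ψ : E → ℝ≥0∞} (h : SectionsLE k φ ψ) (hk : 0 < k)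
    (hkd : k < finrank ℝ E) (hφ : Measurable φ) (hψ : Measurable ψ) {M N : ℝ≥0∞} (hN : N ≠ ∞)
    (hφM : ∀ x, φ x ^ (finrank ℝ E / k : ℝ) ≤ M) (hψN : ∀ x, ψ x ≤ N)
    (hφ_fin : ∫⁻ x, φ x ^ (finrank ℝ E / k : ℝ) ≠ ∞) (hψ_fin : ∫⁻ x, ψ x ≠ ∞)
    (hiso : ∫⁻ x, φ x ^ (finrank ℝ E / k : ℝ) * ‖x‖ₑ ^ 2 ≤
      finrank ℝ E * ∫⁻ x, φ x ^ (finrank ℝ E / k : ℝ)) :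
    ∫⁻ x, φ x ^ (finrank ℝ E / k : ℝ) ≤
      ENNReal.ofReal ((2 * √(2 * π * exp 1)) ^ (finrank ℝ E - k)) *
        (M * N) ^ (1 - k / finrank ℝ E : ℝ) * (∫⁻ x, ψ x) ^ (k / finrank ℝ E : ℝ) := by
  have : Nontrivial E := nontrivial_of_finrank_pos (hk.trans hkd)
  set d := finrank ℝ E
  set ω := volume (ball (0 : E) 1)
  set τ : ℝ := 1 - k / d with hτ_def
  have hk₀ : (0 : ℝ) < k := by exact_mod_cast hk
  have hkd' : (k : ℝ) < d := by exact_mod_cast hkd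
  have hd₀ : (0 : ℝ) < d := hk₀.trans hkd'
  have hτ : 0 ≤ τ := sub_nonneg.2 ((div_le_one hd₀).2 hkd'.le)
  have hτd : τ * d = d - k := by rw [hτ_def]; field_simp
  have hφ_le (x : E) : φ x ^ (d / k : ℝ) ≤ M ^ τ * φ x := by
    simpa [hτ_def] using ennreal_rpow_le_rpow_mul ((one_le_div hk₀).2 hkd'.le) (hφM x)
  have hx₀ : ∀ᵐ x : E, ‖x‖ₑ ≠ 0 := by simp [ae_iff]
  calc ∫⁻ x, φ x ^ (d / k : ℝ)
      ≤ d ^ ((d - k) / 2 : ℝ) * ∫⁻ x, φ x ^ (d / k : ℝ) * ‖x‖ₑ ^ (-(d - k) : ℝ) :=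
        lintegral_le_rpow_mul_lintegral_mul_rpow_neg (by fun_prop) (by fun_prop) hx₀
          (ae_of_all _ fun x => enorm_ne_top) (by linarith) hφ_fin hiso
    _ ≤ d ^ ((d - k) / 2 : ℝ) * (M ^ τ * ∫⁻ x, φ x * ‖x‖ₑ ^ (k - d : ℝ)) := by
        rw [← lintegral_const_mul (M ^ τ) (by fun_prop), neg_sub]
        refine mul_le_mul_right (lintegral_mono fun x => ?_) _
        rw [← mul_assoc]
        gcongr
        exact hφ_le x
    _ ≤ d ^ ((d - k) / 2 : ℝ) * (M ^ τ * ∫⁻ x, ψ x * ‖x‖ₑ ^ (k - d : ℝ)) := by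
        refine mul_le_mul_right (mul_le_mul_right ?_ _) _
        exact h.lintegral_mul_enorm_rpow_le hk hkd.le hφ hψ
    _ ≤ d ^ ((d - k) / 2 : ℝ) * (M ^ τ * (ENNReal.ofReal (d / k) * (ω * N) ^ τ *
          (∫⁻ x, ψ x) ^ (k / d : ℝ))) := by
        refine mul_le_mul_right (mul_le_mul_right ?_ _) _
        exact lintegral_mul_enorm_rpow_le_of_le volume hψ hN hψN hψ_fin hk₀ hkd'
    _ = ENNReal.ofReal (d / k) * (d ^ (τ * d / 2) * ω ^ τ) * (M * N) ^ τ *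
          (∫⁻ x, ψ x) ^ (k / d : ℝ) := by
        rw [ENNReal.mul_rpow_of_nonneg _ _ hτ, ENNReal.mul_rpow_of_nonneg _ _ hτ, hτd]
        ring
    _ ≤ ENNReal.ofReal (2 ^ (d - k)) * ENNReal.ofReal (√(2 * π * exp 1) ^ (τ * d)) * (M * N) ^ τ *
          (∫⁻ x, ψ x) ^ (k / d : ℝ) := by
        gcongr
        · exact natCast_div_le_two_pow_sub hk hkd.le
        · exact rpow_finrank_mul_volume_ball_rpow_le hτ
    _ = _ := by
        rw [← ENNReal.ofReal_mul (by positivity), mul_pow, hτd, ← Nat.cast_sub hkd.le,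
          rpow_natCast]

lemma lintegral_comp_linearEquiv (μ : Measure E) [μ.IsAddHaarMeasure] (T : E ≃ₗ[ℝ] E)
    (φ : E → ℝ≥0∞) :
    ∫⁻ z, φ (T z) ∂μ = ENNReal.ofReal |LinearMap.det (T : E →ₗ[ℝ] E)|⁻¹ * ∫⁻ x, φ x ∂μ := by
  rw [← abs_inv, ← smul_eq_mul, ← lintegral_smul_measure,
    ← Measure.map_linearMap_addHaar_eq_smul_addHaar μ T.isUnit_det'.ne_zero]
  exact (T.toContinuousLinearEquiv.toHomeomorph.measurableEmbedding.lintegral_map φ).symm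

lemma lintegral_ofReal_comp_linearEquiv (μ : Measure E) [μ.IsAddHaarMeasure] (T : E ≃ₗ[ℝ] E)
    {f : E → ℝ} (hf₀ : ∀ x, 0 ≤ f x) (hf : Integrable f μ) :
    ∫⁻ z, ENNReal.ofReal (f (T z)) ∂μ =
      ENNReal.ofReal (|LinearMap.det (T : E →ₗ[ℝ] E)|⁻¹ * ∫ x, f x ∂μ) := by
  rw [lintegral_comp_linearEquiv μ T fun x => ENNReal.ofReal (f x),
    ← ofReal_integral_eq_lintegral_ofReal hf (ae_of_all _ hf₀),
    ← ENNReal.ofReal_mul (by positivity)]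

lemma SectionsLE.inv_abs_det_mul_integral_rpow_le {k : ℕ} {f₁ f₂ : E → ℝ}
    (h : SectionsLE k (fun x => ENNReal.ofReal (f₁ x)) fun x => ENNReal.ofReal (f₂ x))
    (hk : 0 < k) (hkd : k < finrank ℝ E) (h₁ : ∀ x, 0 ≤ f₁ x) (h₁m : Measurable f₁)
    (h₂ : ∀ x, 0 ≤ f₂ x) (h₂m : Measurable f₂) {M N : ℝ}
    (hM : ∀ x, f₁ x ^ (finrank ℝ E / k : ℝ) ≤ M) (hN : ∀ x, f₂ x ≤ N)
    (h₁i : Integrable fun x => f₁ x ^ (finrank ℝ E / k : ℝ)) (h₂i : Integrable f₂) (T : E ≃ₗ[ℝ] E)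
    (hiso : ∫⁻ z, ENNReal.ofReal (f₁ (T z) ^ (finrank ℝ E / k : ℝ)) * ‖z‖ₑ ^ 2 ≤
      finrank ℝ E * ∫⁻ z, ENNReal.ofReal (f₁ (T z) ^ (finrank ℝ E / k : ℝ))) :
    |LinearMap.det (T : E →ₗ[ℝ] E)|⁻¹ * ∫ x, f₁ x ^ (finrank ℝ E / k : ℝ) ≤
      (2 * √(2 * π * exp 1)) ^ (finrank ℝ E - k) * (M * N) ^ (1 - k / finrank ℝ E : ℝ) *
        (|LinearMap.det (T : E →ₗ[ℝ] E)|⁻¹ * ∫ x, f₂ x) ^ (k / finrank ℝ E : ℝ) := by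
  have hTm : Measurable T := T.toContinuousLinearEquiv.continuous.measurable
  have hpow (z : E) : ENNReal.ofReal (f₁ (T z)) ^ (finrank ℝ E / k : ℝ) =
      ENNReal.ofReal (f₁ (T z) ^ (finrank ℝ E / k : ℝ)) :=
    ENNReal.ofReal_rpow_of_nonneg (h₁ _) (by positivity)
  have hl₁ := lintegral_ofReal_comp_linearEquiv volume T (fun x => rpow_nonneg (h₁ x) _) h₁i
  have hl₂ := lintegral_ofReal_comp_linearEquiv volume T h₂ h₂i
  have hM₀ : 0 ≤ M := (rpow_nonneg (h₁ 0) _).trans (hM 0)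
  have hN₀ : 0 ≤ N := (h₂ 0).trans (hN 0)
  have hI₂ : 0 ≤ ∫ x, f₂ x := integral_nonneg h₂
  have hθ : 0 ≤ (1 - k / finrank ℝ E : ℝ) :=
    sub_nonneg.2 (div_le_one_of_le₀ (by exact_mod_cast hkd.le) (by positivity))
  have hcore := (h.comp_linearEquiv T).lintegral_rpow_le hk hkd (by fun_prop) (by fun_prop)
    (M := ENNReal.ofReal M) (N := ENNReal.ofReal N) ENNReal.ofReal_ne_top
    (fun z => (hpow z).trans_le (ENNReal.ofReal_le_ofReal (hM _)))
    (fun z => ENNReal.ofReal_le_ofReal (hN _))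
    (by simpa only [hpow, hl₁] using ENNReal.ofReal_ne_top)
    (by simpa only [hl₂] using ENNReal.ofReal_ne_top)
    (by simpa only [hpow] using hiso)
  simp only [hpow, hl₁, hl₂] at hcore
  rwa [← ENNReal.ofReal_mul hM₀, ENNReal.ofReal_rpow_of_nonneg (by positivity) hθ,
    ENNReal.ofReal_rpow_of_nonneg (by positivity) (by positivity),
    ← ENNReal.ofReal_mul (by positivity), ← ENNReal.ofReal_mul (by positivity),
    ENNReal.ofReal_le_ofReal_iff (by positivity)] at hcore

end IsotropicPosition

section Covariance

open scoped Matrix MatrixOrder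

lemma exists_linearEquiv_of_posDef {n : ℕ} {S : Matrix (Fin n) (Fin n) ℝ} (hS : S.PosDef) :
    ∃ T : Eucl n ≃ₗ[ℝ] Eucl n, |LinearMap.det (T : Eucl n →ₗ[ℝ] Eucl n)| = √S.det ∧
      ∀ z, (T z).ofLp ⬝ᵥ S⁻¹ *ᵥ (T z).ofLp = ‖z‖ ^ 2 := by
  obtain ⟨B, hB⟩ : ∃ B : Matrix (Fin n) (Fin n) ℝ, S = Bᵀ * B :=
    CStarAlgebra.nonneg_iff_eq_star_mul_self.1 hS.posSemidef.nonneg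
  have hdet : S.det = B.det ^ 2 := by rw [hB, Matrix.det_mul, Matrix.det_transpose, sq]
  have hB₀ : IsUnit B.det := by
    rw [isUnit_iff_ne_zero]
    intro h
    exact hS.det_pos.ne' (by simp [hdet, h])
  have hBt₀ : IsUnit Bᵀ.det := by rwa [Matrix.det_transpose]
  have hTdet : LinearMap.det (Matrix.toEuclideanLin Bᵀ) = B.det := by
    rw [Matrix.toEuclideanLin_eq_toLin_orthonormal, LinearMap.det_toLin, Matrix.det_transpose]
  refine ⟨LinearMap.equivOfDetNeZero (Matrix.toEuclideanLin Bᵀ) (hTdet ▸ hB₀.ne_zero),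
    (congrArg abs hTdet).trans (by rw [hdet, sqrt_sq_eq_abs]), fun z => ?_⟩
  change (Bᵀ *ᵥ z.ofLp) ⬝ᵥ S⁻¹ *ᵥ (Bᵀ *ᵥ z.ofLp) = ‖z‖ ^ 2
  have hinv : B * S⁻¹ * Bᵀ = 1 := by
    rw [hB, Matrix.mul_inv_rev, Matrix.mul_assoc, Matrix.mul_assoc, Matrix.nonsing_inv_mul _ hBt₀,
      Matrix.mul_one, Matrix.mul_nonsing_inv _ hB₀]
  rw [Matrix.mulVec_transpose, ← Matrix.dotProduct_mulVec, ← Matrix.mulVec_transpose,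
    Matrix.mulVec_mulVec, Matrix.mulVec_mulVec, hinv, Matrix.one_mulVec, EuclideanSpace.norm_sq_eq]
  simp [dotProduct, sq]

lemma volume_setOf_dotProduct_eq_zero {n : ℕ} {v : Fin n → ℝ} (hv : v ≠ 0) :
    volume {x : Eucl n | v ⬝ᵥ x.ofLp = 0} = 0 := by
  let w : Eucl n := WithLp.toLp 2 v
  have hker : LinearMap.ker (innerₛₗ ℝ w) ≠ ⊤ := by
    intro h
    have hw : w ∈ LinearMap.ker (innerₛₗ ℝ w) := h ▸ Submodule.mem_top
    exact hv (congrArg WithLp.ofLp (inner_self_eq_zero.1 hw : w = 0))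
  convert Measure.addHaar_submodule volume _ hker using 2
  ext x
  simp [w, PiLp.inner_apply, dotProduct, mul_comm]

variable {n : ℕ} {g : Eucl n → ℝ}

lemma covMatrix_apply_of_centered (hcent : ∀ i, ∫ x, g x * x i = 0) (i j : Fin n) :
    covMatrix g i j = (∫ x, g x * x i * x j) / ∫ x, g x := by
  simp [covMatrix, hcent]

lemma mul_dotProduct_mulVec_eq_sum (P : Matrix (Fin n) (Fin n) ℝ) (a : ℝ) (x : Fin n → ℝ) :
    a * (x ⬝ᵥ P *ᵥ x) = ∑ i, ∑ j, P i j * (a * x j * x i) := by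
  simp only [dotProduct, Matrix.mulVec, Finset.mul_sum]
  exact Finset.sum_congr rfl fun i _ => Finset.sum_congr rfl fun j _ => by ring

section SecondMoment

variable (hgm : Measurable g) (hg₂ : Integrable fun x => g x * ‖x‖ ^ 2)

include hgm hg₂

lemma integrable_mul_coord_mul_coord (i j : Fin n) : Integrable fun x => g x * x i * x j := by
  refine hg₂.mono (by fun_prop) (ae_of_all _ fun x => ?_)
  simp only [norm_mul, norm_norm, mul_assoc, sq]
  gcongr <;> exact PiLp.norm_apply_le x _

lemma integrable_mul_quadraticForm (P : Matrix (Fin n) (Fin n) ℝ) :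
    Integrable fun x => g x * (x.ofLp ⬝ᵥ P *ᵥ x.ofLp) := by
  simp only [mul_dotProduct_mulVec_eq_sum]
  exact integrable_finsetSum _ fun i _ => integrable_finsetSum _ fun j _ =>
    (integrable_mul_coord_mul_coord hgm hg₂ j i).const_mul _

lemma integral_mul_quadraticForm (hpos : 0 < ∫ x, g x) (hcent : ∀ i, ∫ x, g x * x i = 0)
    (P : Matrix (Fin n) (Fin n) ℝ) :
    ∫ x, g x * (x.ofLp ⬝ᵥ P *ᵥ x.ofLp) = (∫ x, g x) * (P * covMatrix g).trace := by
  have hint (i j : Fin n) : Integrable fun x => P i j * (g x * x j * x i) :=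
    (integrable_mul_coord_mul_coord hgm hg₂ j i).const_mul _
  simp only [mul_dotProduct_mulVec_eq_sum, Matrix.trace, Matrix.diag, Matrix.mul_apply,
    Finset.mul_sum, covMatrix_apply_of_centered hcent]
  rw [integral_finsetSum _ fun i _ => integrable_finsetSum _ fun j _ => hint i j]
  refine Finset.sum_congr rfl fun i _ => ?_
  rw [integral_finsetSum _ fun j _ => hint i j]
  refine Finset.sum_congr rfl fun j _ => ?_
  rw [integral_const_mul]
  field_simp

lemma posDef_covMatrix (hg₀ : ∀ x, 0 ≤ g x) (hpos : 0 < ∫ x, g x)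
    (hcent : ∀ i, ∫ x, g x * x i = 0) : (covMatrix g).PosDef := by
  refine Matrix.PosDef.of_dotProduct_mulVec_pos ?_ fun v hv => ?_
  · ext i j
    simp only [Matrix.conjTranspose_apply, covMatrix_apply_of_centered hcent, star_trivial,
      mul_right_comm]
  have hsq (x : Eucl n) : x.ofLp ⬝ᵥ Matrix.vecMulVec v v *ᵥ x.ofLp = (v ⬝ᵥ x.ofLp) ^ 2 := by
    simp [Matrix.vecMulVec_mulVec, dotProduct_comm, sq]
  have htr : ∫ x, g x * (v ⬝ᵥ x.ofLp) ^ 2 = (∫ x, g x) * (v ⬝ᵥ covMatrix g *ᵥ v) := by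
    simp only [← hsq, integral_mul_quadraticForm hgm hg₂ hpos hcent]
    rw [Matrix.vecMulVec_mul, Matrix.trace_vecMulVec, dotProduct_comm v (v ᵥ* _),
      ← Matrix.dotProduct_mulVec]
  have hint : Integrable fun x => g x * (v ⬝ᵥ x.ofLp) ^ 2 := by
    simpa only [hsq] using integrable_mul_quadraticForm hgm hg₂ (Matrix.vecMulVec v v)
  have hnn (x : Eucl n) : 0 ≤ g x * (v ⬝ᵥ x.ofLp) ^ 2 := mul_nonneg (hg₀ x) (sq_nonneg _)
  refine pos_of_mul_pos_right (htr ▸ (integral_nonneg hnn).lt_of_ne' fun h => hpos.ne' ?_) hpos.le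
  have hv₀ : ∀ᵐ x : Eucl n, v ⬝ᵥ x.ofLp ≠ 0 := by
    simpa [ae_iff] using volume_setOf_dotProduct_eq_zero hv
  refine integral_eq_zero_of_ae ?_
  filter_upwards [(integral_eq_zero_iff_of_nonneg hnn hint).1 h, hv₀] with x hx hvx
  simpa [hvx] using hx

end SecondMoment

lemma exists_isotropic_position (hgm : Measurable g) (hg₂ : Integrable fun x => g x * ‖x‖ ^ 2)
    (hg₀ : ∀ x, 0 ≤ g x) (hpos : 0 < ∫ x, g x) (hcent : ∀ i, ∫ x, g x * x i = 0) :
    ∃ T : Eucl n ≃ₗ[ℝ] Eucl n,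
      |LinearMap.det (T : Eucl n →ₗ[ℝ] Eucl n)| = √(covMatrix g).det ∧
      ∫⁻ z, ENNReal.ofReal (g (T z)) * ‖z‖ₑ ^ 2 = n * ∫⁻ z, ENNReal.ofReal (g (T z)) := by
  have hS := posDef_covMatrix hgm hg₂ hg₀ hpos hcent
  obtain ⟨T, hTdet, hT⟩ := exists_linearEquiv_of_posDef hS
  refine ⟨T, hTdet, ?_⟩
  set S := covMatrix g
  let Q : Eucl n → ℝ := fun x => x.ofLp ⬝ᵥ S⁻¹ *ᵥ x.ofLp
  have hQ₀ (x : Eucl n) : 0 ≤ g x * Q x :=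
    mul_nonneg (hg₀ x) (by simpa using hS.inv.posSemidef.dotProduct_mulVec_nonneg x.ofLp)
  have hmain : ∫⁻ x, ENNReal.ofReal (g x * Q x) = n * ∫⁻ x, ENNReal.ofReal (g x) := by
    rw [← ofReal_integral_eq_lintegral_ofReal (integrable_mul_quadraticForm hgm hg₂ _)
      (ae_of_all _ hQ₀), integral_mul_quadraticForm hgm hg₂ hpos hcent,
      Matrix.nonsing_inv_mul _ hS.det_pos.ne'.isUnit, Matrix.trace_one, Fintype.card_fin,
      ENNReal.ofReal_mul hpos.le, ENNReal.ofReal_natCast, mul_comm,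
      ofReal_integral_eq_lintegral_ofReal (.of_integral_ne_zero hpos.ne') (ae_of_all _ hg₀)]
  calc ∫⁻ z, ENNReal.ofReal (g (T z)) * ‖z‖ₑ ^ 2
      = ∫⁻ z, ENNReal.ofReal (g (T z) * Q (T z)) := by
        refine lintegral_congr fun z => ?_
        rw [ENNReal.ofReal_mul (hg₀ _), show Q (T z) = ‖z‖ ^ 2 from hT z,
          ENNReal.ofReal_pow (norm_nonneg z), ofReal_norm]
    _ = n * ∫⁻ z, ENNReal.ofReal (g (T z)) := by
        rw [lintegral_comp_linearEquiv volume T fun x => ENNReal.ofReal (g x * Q x),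
          lintegral_comp_linearEquiv volume T fun x => ENNReal.ofReal (g x), hmain, mul_left_comm]

end Covariance

section MemQ0

variable {n : ℕ} {f : Eucl n → ℝ}

namespace MemQ0

lemma measurable (hf : MemQ0 f) : Measurable f := hf.2.2.1.measurable

lemma integral_rpow_pos (hf : MemQ0 f) {p : ℝ} (hp : 0 < p) : 0 < ∫ x, f x ^ p := by
  have hint := (hf.hasExpDecay.rpow hp).integrable volume (hf.measurable.pow_const p)
  have hsupp : Function.support (fun x => f x ^ p) = Function.support f := by
    ext x
    simp [rpow_eq_zero (hf.1 x) hp.ne']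
  rw [integral_pos_iff_support_of_nonneg (fun x => rpow_nonneg (hf.1 x) p) hint, hsupp]
  exact (integral_pos_iff_support_of_nonneg hf.1 hf.2.2.2.1).1 hf.2.2.2.2

lemma lintegral_section (hf : MemQ0 f) (H : Submodule ℝ (Eucl n)) :
    ∫⁻ y : H, ENNReal.ofReal (f y) = ENNReal.ofReal (sectL1 f H) :=
  (ofReal_integral_eq_lintegral_ofReal ((hf.hasExpDecay.restrict H).integrable volume
    (hf.measurable.comp measurable_subtype_coe)) (ae_of_all _ fun y => hf.1 y)).symm

lemma sectionsLE {k : ℕ} {f₁ f₂ : Eucl n → ℝ} (h₁ : MemQ0 f₁) (h₂ : MemQ0 f₂)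
    (h : ∀ H : Submodule ℝ (Eucl n), finrank ℝ H = k → sectL1 f₁ H ≤ sectL1 f₂ H) :
    SectionsLE k (fun x => ENNReal.ofReal (f₁ x)) fun x => ENNReal.ofReal (f₂ x) := fun H hH => by
  rw [h₁.lintegral_section, h₂.lintegral_section]
  exact ENNReal.ofReal_le_ofReal (h H hH)

end MemQ0

end MemQ0

section BusemannPetty

lemma isoConst_eq {n : ℕ} {g : Eucl n → ℝ} (hg₀ : ∀ x, 0 ≤ g x) (hdet : 0 ≤ (covMatrix g).det) :
    isoConst g = (supNorm g / (∫ x, g x) * √(covMatrix g).det) ^ ((1 : ℝ) / n) := by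
  have hM : 0 ≤ supNorm g / ∫ x, g x := div_nonneg (iSup_nonneg hg₀) (integral_nonneg hg₀)
  rw [isoConst, mul_rpow hM (sqrt_nonneg _), sqrt_eq_rpow, ← rpow_mul hdet, one_div_mul_one_div]

lemma bddAbove_range_rpow {α : Type*} {f : α → ℝ} (hf₀ : ∀ x, 0 ≤ f x) (hf : BddAbove (range f))
    {p : ℝ} (hp : 0 ≤ p) : BddAbove (range fun x => f x ^ p) := by
  obtain ⟨B, hB⟩ := hf
  exact ⟨B ^ p, forall_mem_range.2 fun x => rpow_le_rpow (hf₀ x) (hB (mem_range_self x)) hp⟩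

lemma rpow_le_of_inv_mul_le {a b D M N C θ : ℝ} (ha : 0 < a) (hb : 0 ≤ b) (hD : 0 < D)
    (hM : 0 ≤ M) (hN : 0 ≤ N) (h : D⁻¹ * a ≤ C * (M * N) ^ (1 - θ) * (D⁻¹ * b) ^ θ) :
    a ^ θ ≤ C * (M / a * D) ^ (1 - θ) * b ^ θ * N ^ (1 - θ) := by
  have hMaD : (M / a * D) ^ (1 - θ) = M ^ (1 - θ) * a ^ (θ - 1) * (D / D ^ θ) := by
    rw [mul_rpow (by positivity) hD.le, div_rpow hM ha.le, div_eq_mul_inv (M ^ _),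
      ← rpow_neg ha.le, neg_sub, rpow_sub hD, rpow_one]
  calc a ^ θ = D * a ^ (θ - 1) * (D⁻¹ * a) := by rw [rpow_sub_one ha.ne']; field_simp
    _ ≤ D * a ^ (θ - 1) * (C * (M * N) ^ (1 - θ) * (D⁻¹ * b) ^ θ) := by gcongr
    _ = C * (M / a * D) ^ (1 - θ) * b ^ θ * N ^ (1 - θ) := by
      rw [hMaD, mul_rpow hM hN, mul_rpow (by positivity) hb, inv_rpow hD.le]
      ring

variable {n k : ℕ} {f₁ f₂ : Eucl n → ℝ}

theorem functional_busemann_petty_general (hk : 0 < k) (hkn : k < n) (h₁ : ∀ x, 0 ≤ f₁ x)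
    (h₁m : Measurable f₁) (h₁b : BddAbove (range f₁)) (h₂ : ∀ x, 0 ≤ f₂ x) (h₂m : Measurable f₂)
    (h₂b : BddAbove (range f₂)) (h₂i : Integrable f₂)
    (hBP : SectionsLE k (fun x => ENNReal.ofReal (f₁ x)) fun x => ENNReal.ofReal (f₂ x))
    (hmom : Integrable fun x => f₁ x ^ ((n : ℝ) / k) * ‖x‖ ^ 2)
    (hpos : 0 < ∫ x, f₁ x ^ ((n : ℝ) / k)) (hcent : ∀ i, ∫ x, f₁ x ^ ((n : ℝ) / k) * x i = 0) :
    lpNorm ((n : ℝ) / k) f₁ ≤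
      (2 * √(2 * π * exp 1) * isoConst fun x => f₁ x ^ ((n : ℝ) / k)) ^ (n - k) *
        (∫ x, f₂ x) ^ ((k : ℝ) / n) * supNorm f₂ ^ (((n : ℝ) - k) / n) := by
  have hn : (n : ℝ) ≠ 0 := by exact_mod_cast (hk.trans hkn).ne'
  set g : Eucl n → ℝ := fun x => f₁ x ^ ((n : ℝ) / k)
  have hg₀ (x : Eucl n) : 0 ≤ g x := rpow_nonneg (h₁ x) _
  have hgm : Measurable g := h₁m.pow_const _
  have hgb : BddAbove (range g) := bddAbove_range_rpow h₁ h₁b (by positivity)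
  have hM₀ : 0 ≤ supNorm g := iSup_nonneg hg₀
  have hdet : 0 < (covMatrix g).det := (posDef_covMatrix hgm hmom hg₀ hpos hcent).det_pos
  obtain ⟨T, hTdet, hT⟩ := exists_isotropic_position hgm hmom hg₀ hpos hcent
  have hmain := hBP.inv_abs_det_mul_integral_rpow_le hk (by simpa using hkn) h₁ h₁m h₂ h₂m
    (by simpa using le_ciSup hgb) (le_ciSup h₂b)
    (by simpa using Integrable.of_integral_ne_zero hpos.ne') h₂i T (by simpa using hT.le)
  rw [hTdet, finrank_euclideanSpace_fin] at hmain
  have hθ : ((n : ℝ) - k) / n = 1 - k / n := by rw [sub_div, div_self hn]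
  have hiso : isoConst g ^ (n - k) =
      (supNorm g / (∫ x, g x) * √(covMatrix g).det) ^ (1 - k / n : ℝ) := by
    rw [isoConst_eq hg₀ hdet.le, ← rpow_mul_natCast (by positivity), Nat.cast_sub hkn.le,
      one_div_mul_eq_div, hθ]
  rw [_root_.lpNorm, one_div_div, mul_pow, hiso, hθ]
  exact rpow_le_of_inv_mul_le hpos (integral_nonneg h₂) (sqrt_pos.2 hdet) hM₀ (iSup_nonneg h₂) hmain

end BusemannPetty

/-- **The functional Busemann–Petty problem** (Theorem 5.6): there is an absolute
constant `C > 0` such that if `f₁, f₂ ∈ Q₀ⁿ` satisfy the Busemann–Petty condition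
for `k`-dimensional sections and `f₁^{n/k}` is centered, then
`‖f₁‖_{n/k} ≤ (C·L)^{n−k}·‖f₂‖₁^{k/n}·‖f₂‖_∞^{(n−k)/n}`, where `L` is the isotropic
constant of `f₁^{n/k}`. -/
theorem functional_busemann_petty :
    ∃ C : ℝ, 0 < C ∧ ∀ (n k : ℕ), 1 ≤ k → k < n →
      ∀ f₁ f₂ : Eucl n → ℝ, MemQ0 f₁ → MemQ0 f₂ →
        (∀ H : Submodule ℝ (Eucl n), Module.finrank ℝ H = k →
          sectL1 f₁ H ≤ sectL1 f₂ H) →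
        (∀ i : Fin n, (∫ x, f₁ x ^ ((n : ℝ) / k) * x i) = 0) →
        lpNorm ((n : ℝ) / k) f₁ ≤
          (C * isoConst (fun x => f₁ x ^ ((n : ℝ) / k))) ^ (n - k) *
            (∫ x, f₂ x) ^ ((k : ℝ) / n) * supNorm f₂ ^ (((n : ℝ) - k) / n) := by
  refine ⟨2 * √(2 * π * exp 1), by positivity, fun n k hk hkn f₁ f₂ h₁ h₂ hBP hcent => ?_⟩
  have hp : (0 : ℝ) < n / k := by have := hk.trans hkn.le; positivity
  exact functional_busemann_petty_general hk hkn h₁.1 h₁.measurable h₁.hasExpDecay.bddAbove h₂.1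
    h₂.measurable h₂.hasExpDecay.bddAbove h₂.2.2.2.1 (h₁.sectionsLE h₂ hBP)
    ((h₁.hasExpDecay.rpow hp).integrable_mul_norm_pow volume (h₁.measurable.pow_const _) 2)
    (h₁.integral_rpow_pos hp) hcent
end
end

section
/- There is an absolute constant C > 0 with the following property: for all integers n > k ≥ 1 and all f₁, f₂ ∈ Q₀ⁿ satisfying the Busemann–Petty condition ∫_H f₁ dλ_H ≤ ∫_H f₂ dλ_H for every k-dimensional linear subspace H ⊆ ℝⁿ, and such that f₁ is centered (∫_{ℝⁿ} x f₁(x) dx = 0), one has ‖f₁‖₁^{k/n} · ‖f₁‖_∞^{(n−k)/n} ≤ (C·L_{f₁})^{n−k} · ‖f₂‖₁^{k/n} · ‖f₂‖_∞^{(n−k)/n}, where L_{f₁} is the isotropic constant of f₁. -/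
open MeasureTheory

noncomputable section

/-!
Marginals of log-concave functions are log-concave (Prékopa–Leindler), so everything can be read
off integrals over coordinate subspaces once a linear change of variables has made the second
moments of `f₁` those of an isotropic density.

Every section of the centered function `f₁` is then large: a section integral is the value at `0`
of a log-concave marginal `F` that is again centered, so the tangent `ℓ` of `log F` at `0` satisfies
`∫ ℓ F = 0`, and Gibbs' inequality for `F ≤ F 0 * exp ℓ` against a Gaussian bounds `∫ F` by a
multiple of `F 0`. Some coordinate section of `f₂` is small: if all one-dimensional marginals on the
coordinate axes were large at `0`, log-concavity would make all second moments of `f₂` small, and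
Gibbs' inequality for `f₂ ≤ ‖f₂‖_∞` would bound its mass. Hence one coordinate can be dropped at a
controlled cost, and `n - k` such steps lead to a `k`-dimensional coordinate subspace, on which the
two estimates are compared.
-/

open Set
open scoped ENNReal Pointwise Matrix MatrixOrder

section PrekopaLeindler

theorem volume_add_volume_le_of_isCompact {A B : Set ℝ} (hA : IsCompact A) (hB : IsCompact B)
    (hA₀ : A.Nonempty) (hB₀ : B.Nonempty) : volume A + volume B ≤ volume (A + B) := by
  obtain ⟨a, haA, ha⟩ := hA.exists_isGreatest hA₀
  obtain ⟨b, hbB, hb⟩ := hB.exists_isLeast hB₀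
  -- The translates `A + b` and `a + B` lie in `A + B` and meet only at `a + b`.
  have hdisj : AEDisjoint volume ((· + b) '' A) ((a + ·) '' B) := by
    refine measure_mono_null (t := {a + b}) ?_ Real.volume_singleton
    rintro _ ⟨⟨x, hx, rfl⟩, y, hy, hxy⟩
    have hx' : x ≤ a := ha hx
    have hy' : b ≤ y := hb hy
    simp only [mem_singleton_iff] at hxy ⊢
    linarith
  have hmeas : MeasurableSet ((a + ·) '' B) := (hB.image (by fun_prop)).measurableSet
  calc volume A + volume B
      = volume ((· + b) '' A ∪ (a + ·) '' B) := by
        rw [measure_union₀ hmeas.nullMeasurableSet hdisj, image_add_right,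
          measure_preimage_add_right, image_add_left, measure_preimage_add]
    _ ≤ volume (A + B) := measure_mono <| union_subset
        (image_subset_iff.2 fun _ hx => add_mem_add hx hbB)
        (image_subset_iff.2 fun _ hy => add_mem_add haA hy)

theorem volume_add_volume_le {A B : Set ℝ} (hA : MeasurableSet A) (hB : MeasurableSet B)
    (hA₀ : A.Nonempty) (hB₀ : B.Nonempty) : volume A + volume B ≤ volume (A + B) := by
  obtain ⟨a, ha⟩ := hA₀
  obtain ⟨b, hb⟩ := hB₀
  rw [hA.measure_eq_iSup_isCompact, hB.measure_eq_iSup_isCompact]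
  simp only [iSup_and']
  refine ENNReal.biSup_add_biSup_le' ⟨∅, empty_subset A, isCompact_empty⟩
    ⟨∅, empty_subset B, isCompact_empty⟩ fun K ⟨hKA, hK⟩ L ⟨hLB, hL⟩ => ?_
  calc volume K + volume L ≤ volume (insert a K) + volume (insert b L) := by
        gcongr <;> exact subset_insert _ _
    _ ≤ volume (insert a K + insert b L) := volume_add_volume_le_of_isCompact (hK.insert a)
        (hL.insert b) (insert_nonempty a K) (insert_nonempty b L)
    _ ≤ volume (A + B) := measure_mono <|
        add_subset_add (insert_subset ha hKA) (insert_subset hb hLB)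

theorem ofReal_mul_volume_add_le {A B : Set ℝ} {a b : ℝ} (hA : MeasurableSet A)
    (hB : MeasurableSet B) (hA₀ : A.Nonempty) (hB₀ : B.Nonempty) (ha : 0 < a) (hb : 0 < b) :
    ENNReal.ofReal a * volume A + ENNReal.ofReal b * volume B ≤ volume (a • A + b • B) := by
  have hscale (c : ℝ) (hc : 0 < c) (D : Set ℝ) :
      volume (c • D) = ENNReal.ofReal c * volume D := by
    simp [Measure.addHaar_smul, abs_of_pos hc]
  rw [← hscale a ha, ← hscale b hb]
  exact volume_add_volume_le (hA.const_smul₀ a) (hB.const_smul₀ b) hA₀.smul_set hB₀.smul_set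

theorem lintegral_eq_lintegral_Ioi_meas_ofReal_lt {α : Type*} [MeasurableSpace α] (μ : Measure α)
    [SFinite μ] {f : α → ℝ≥0∞} (hf : Measurable f) :
    ∫⁻ x, f x ∂μ = ∫⁻ r in Ioi 0, μ {x | ENNReal.ofReal r < f x} := by
  have hvol (c : ℝ≥0∞) : c = ∫⁻ r in Ioi (0 : ℝ), {s | ENNReal.ofReal s < c}.indicator 1 r := by
    rw [lintegral_indicator_one (measurableSet_lt (by fun_prop) (by fun_prop)),
      Measure.restrict_apply (measurableSet_lt (by fun_prop) (by fun_prop))]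
    induction c using ENNReal.recTopCoe with
    | top => simp
    | coe c =>
      have : {s | ENNReal.ofReal s < c} ∩ Ioi 0 = Ioo 0 (c : ℝ) := by
        ext s
        simp only [mem_inter_iff, mem_ofPred_eq, mem_Ioi, mem_Ioo, and_comm (b := 0 < s)]
        refine and_congr_right fun hs => ?_
        rw [ENNReal.ofReal_lt_iff_lt_toReal hs.le ENNReal.coe_ne_top, ENNReal.coe_toReal]
      simp [this]
  have hset : MeasurableSet {p : α × ℝ | ENNReal.ofReal p.2 < f p.1} :=
    measurableSet_lt (by fun_prop) (by fun_prop)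
  calc ∫⁻ x, f x ∂μ
      = ∫⁻ x, (∫⁻ r in Ioi (0 : ℝ), {s | ENNReal.ofReal s < f x}.indicator 1 r) ∂μ :=
        lintegral_congr fun x => hvol (f x)
    _ = ∫⁻ r in Ioi (0 : ℝ), ∫⁻ x, {s : ℝ | ENNReal.ofReal s < f x}.indicator 1 r ∂μ :=
        lintegral_lintegral_swap
          (f := fun x r => {s | ENNReal.ofReal s < f x}.indicator (1 : ℝ → ℝ≥0∞) r)
          (measurable_one.indicator hset).aemeasurable
    _ = ∫⁻ r in Ioi 0, μ {x | ENNReal.ofReal r < f x} := lintegral_congr fun r =>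
        lintegral_indicator_one (measurableSet_lt measurable_const hf)

theorem lintegral_eq_mul_lintegral_Ioi_meas_lt {α : Type*} [MeasurableSpace α] (μ : Measure α)
    [SFinite μ] {f : α → ℝ≥0∞} (hf : Measurable f) {c : ℝ≥0∞} (hc₀ : c ≠ 0) (hc : c ≠ ∞) :
    ∫⁻ x, f x ∂μ = c * ∫⁻ r in Ioi 0, μ {x | ENNReal.ofReal r * c < f x} := by
  calc ∫⁻ x, f x ∂μ = c * ∫⁻ x, f x / c ∂μ := by
        rw [← lintegral_const_mul' _ _ hc]
        exact lintegral_congr fun x => (ENNReal.mul_div_cancel hc₀ hc).symm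
    _ = _ := by
        rw [lintegral_eq_lintegral_Ioi_meas_ofReal_lt μ (by fun_prop)]
        simp only [ENNReal.lt_div_iff_mul_lt (.inl hc₀) (.inl hc)]

theorem rpow_mul_rpow_le_ofReal_mul_add {a b : ℝ} (ha : 0 < a) (hb : 0 < b) (hab : a + b = 1)
    (u v : ℝ≥0∞) : u ^ a * v ^ b ≤ ENNReal.ofReal a * u + ENNReal.ofReal b * v := by
  rcases eq_or_ne u ∞ with rfl | hu
  · simp [ENNReal.mul_top, ha]
  rcases eq_or_ne v ∞ with rfl | hv
  · simp [ENNReal.mul_top, hb]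
  lift u to NNReal using hu
  lift v to NNReal using hv
  lift a to NNReal using ha.le
  lift b to NNReal using hb.le
  rw [← ENNReal.coe_rpow_of_nonneg _ a.coe_nonneg, ← ENNReal.coe_rpow_of_nonneg _ b.coe_nonneg]
  simp only [ENNReal.ofReal_coe_nnreal]
  exact_mod_cast NNReal.geom_mean_le_arith_mean2_weighted a b u v (mod_cast hab)

theorem rpow_mul_rpow_self {a b : ℝ} (ha : 0 < a) (hb : 0 < b) (hab : a + b = 1) (u : ℝ≥0∞) :
    u ^ a * u ^ b = u := by
  rw [← ENNReal.rpow_add_of_nonneg _ _ ha.le hb.le, hab, ENNReal.rpow_one]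

theorem rpow_half_sq (u : ℝ≥0∞) : (u ^ (1 / 2 : ℝ)) ^ 2 = u := by
  rw [← ENNReal.rpow_mul_natCast]
  norm_num

/-- The hypothesis of the Prékopa–Leindler inequality with weights `a` and `b`. -/
def IsPrekopaLeindlerTriple {E : Type*} [Add E] [SMul ℝ E] (a b : ℝ) (f g h : E → ℝ≥0∞) : Prop :=
  ∀ x y, f x ^ a * g y ^ b ≤ h (a • x + b • y)

variable {a b : ℝ} {f g h : ℝ → ℝ≥0∞}

theorem IsPrekopaLeindlerTriple.smul_superlevel_add_subset {u v : ℝ≥0∞}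
    (H : IsPrekopaLeindlerTriple a b f g h) (ha : 0 < a) (hb : 0 < b) (hab : a + b = 1)
    (r : ℝ≥0∞) :
    a • {x | r * u < f x} + b • {y | r * v < g y} ⊆ {z | r * (u ^ a * v ^ b) < h z} := by
  rintro _ ⟨_, ⟨x, hx, rfl⟩, _, ⟨y, hy, rfl⟩, rfl⟩
  refine lt_of_lt_of_le ?_ (H x y)
  calc r * (u ^ a * v ^ b) = (r * u) ^ a * (r * v) ^ b := by
        rw [ENNReal.mul_rpow_of_nonneg _ _ ha.le, ENNReal.mul_rpow_of_nonneg _ _ hb.le,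
          mul_mul_mul_comm, rpow_mul_rpow_self ha hb hab]
    _ < f x ^ a * g y ^ b :=
        ENNReal.mul_lt_mul (ENNReal.rpow_lt_rpow hx ha) (ENNReal.rpow_lt_rpow hy hb)

theorem IsPrekopaLeindlerTriple.ofReal_mul_meas_add_le (H : IsPrekopaLeindlerTriple a b f g h)
    (ha : 0 < a) (hb : 0 < b) (hab : a + b = 1) (hf : Measurable f) (hg : Measurable g)
    (hf₀ : ⨆ x, f x ≠ 0) (hg₀ : ⨆ x, g x ≠ 0) (hf' : ⨆ x, f x ≠ ∞) (hg' : ⨆ x, g x ≠ ∞)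
    (r : ℝ≥0∞) :
    ENNReal.ofReal a * volume {x | r * ⨆ x, f x < f x} +
        ENNReal.ofReal b * volume {x | r * ⨆ x, g x < g x} ≤
      volume {x | r * ((⨆ x, f x) ^ a * (⨆ x, g x) ^ b) < h x} := by
  rcases lt_or_ge r 1 with hr | hr
  · have hne {φ : ℝ → ℝ≥0∞} (h₀ : ⨆ x, φ x ≠ 0) (h' : ⨆ x, φ x ≠ ∞) :
        {x | r * ⨆ x, φ x < φ x}.Nonempty :=
      lt_iSup_iff.1 ((ENNReal.mul_lt_mul_left h₀ h' hr).trans_eq (one_mul _))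
    exact (ofReal_mul_volume_add_le (measurableSet_lt measurable_const hf)
      (measurableSet_lt measurable_const hg) (hne hf₀ hf') (hne hg₀ hg') ha hb).trans
      (measure_mono (H.smul_superlevel_add_subset ha hb hab r))
  · have hempty (φ : ℝ → ℝ≥0∞) : {x | r * ⨆ x, φ x < φ x} = ∅ :=
      eq_empty_of_forall_notMem fun x =>
        not_lt.2 ((le_iSup φ x).trans (le_mul_of_one_le_left' hr))
    simp [hempty]

theorem IsPrekopaLeindlerTriple.lintegral_of_iSup_ne_top (H : IsPrekopaLeindlerTriple a b f g h)
    (ha : 0 < a) (hb : 0 < b) (hab : a + b = 1) (hf : Measurable f) (hg : Measurable g)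
    (hh : Measurable h) (hf' : ⨆ x, f x ≠ ∞) (hg' : ⨆ x, g x ≠ ∞) :
    (∫⁻ x, f x) ^ a * (∫⁻ x, g x) ^ b ≤ ∫⁻ x, h x := by
  rcases eq_or_ne (⨆ x, f x) 0 with hf₀ | hf₀
  · simp [ENNReal.iSup_eq_zero.1 hf₀, ENNReal.zero_rpow_of_pos ha]
  rcases eq_or_ne (⨆ x, g x) 0 with hg₀ | hg₀
  · simp [ENNReal.iSup_eq_zero.1 hg₀, ENNReal.zero_rpow_of_pos hb]
  have hlevel := H.ofReal_mul_meas_add_le ha hb hab hf hg hf₀ hg₀ hf' hg'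
  set u := ⨆ x, f x
  set v := ⨆ x, g x
  have hc₀ : u ^ a * v ^ b ≠ 0 := mul_ne_zero
    (ENNReal.rpow_pos hf₀.bot_lt hf').ne' (ENNReal.rpow_pos hg₀.bot_lt hg').ne'
  have hc : u ^ a * v ^ b ≠ ∞ := ENNReal.mul_ne_top
    (ENNReal.rpow_ne_top_of_nonneg ha.le hf') (ENNReal.rpow_ne_top_of_nonneg hb.le hg')
  have hanti : Antitone fun r : ℝ => volume {x | ENNReal.ofReal r * u < f x} :=
    fun r s hrs => measure_mono fun x hx =>
      (mul_le_mul_left (ENNReal.ofReal_le_ofReal hrs) u).trans_lt hx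
  calc (∫⁻ x, f x) ^ a * (∫⁻ x, g x) ^ b
      = u ^ a * v ^ b * ((∫⁻ r in Ioi 0, volume {x | ENNReal.ofReal r * u < f x}) ^ a *
          (∫⁻ r in Ioi 0, volume {x | ENNReal.ofReal r * v < g x}) ^ b) := by
        rw [lintegral_eq_mul_lintegral_Ioi_meas_lt _ hf hf₀ hf',
          lintegral_eq_mul_lintegral_Ioi_meas_lt _ hg hg₀ hg',
          ENNReal.mul_rpow_of_nonneg _ _ ha.le, ENNReal.mul_rpow_of_nonneg _ _ hb.le,
          mul_mul_mul_comm]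
    _ ≤ u ^ a * v ^ b * ∫⁻ r in Ioi 0,
          (ENNReal.ofReal a * volume {x | ENNReal.ofReal r * u < f x} +
            ENNReal.ofReal b * volume {x | ENNReal.ofReal r * v < g x}) := by
        rw [lintegral_add_left (hanti.measurable.const_mul _),
          lintegral_const_mul' _ _ ENNReal.ofReal_ne_top,
          lintegral_const_mul' _ _ ENNReal.ofReal_ne_top]
        gcongr
        exact rpow_mul_rpow_le_ofReal_mul_add ha hb hab _ _
    _ ≤ u ^ a * v ^ b *
          ∫⁻ r in Ioi 0, volume {x | ENNReal.ofReal r * (u ^ a * v ^ b) < h x} := by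
        gcongr
        exact hlevel _
    _ = ∫⁻ x, h x := (lintegral_eq_mul_lintegral_Ioi_meas_lt _ hh hc₀ hc).symm

theorem lintegral_rpow_eq_iSup_lintegral_min {α : Type*} [MeasurableSpace α] (μ : Measure α)
    {f : α → ℝ≥0∞} (hf : Measurable f) {s : ℝ} (hs : 0 < s) :
    (∫⁻ x, f x ∂μ) ^ s = ⨆ N : ℕ, (∫⁻ x, min (f x) N ∂μ) ^ s := by
  have htrunc (x) : f x = ⨆ N : ℕ, min (f x) N := by
    rw [← inf_iSup_eq, ENNReal.iSup_natCast, inf_top_eq]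
  conv_lhs => enter [1, 2, x]; rw [htrunc x]
  rw [lintegral_iSup (fun N => by fun_prop) fun M N hMN x => by dsimp only; gcongr]
  exact (ENNReal.orderIsoRpow s hs).map_iSup _

theorem IsPrekopaLeindlerTriple.lintegral (H : IsPrekopaLeindlerTriple a b f g h)
    (ha : 0 < a) (hb : 0 < b) (hab : a + b = 1) (hf : Measurable f) (hg : Measurable g)
    (hh : Measurable h) : (∫⁻ x, f x) ^ a * (∫⁻ x, g x) ^ b ≤ ∫⁻ x, h x := by
  have hbdd (φ : ℝ → ℝ≥0∞) (N : ℕ) : ⨆ x, min (φ x) N ≠ ∞ :=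
    ne_top_of_le_ne_top (ENNReal.natCast_ne_top N) (iSup_le fun x => min_le_right _ _)
  rw [lintegral_rpow_eq_iSup_lintegral_min _ hf ha, lintegral_rpow_eq_iSup_lintegral_min _ hg hb]
  simp only [ENNReal.iSup_mul, ENNReal.mul_iSup, iSup_le_iff]
  intro N M
  have Hmin : IsPrekopaLeindlerTriple a b (fun x => min (f x) M) (fun x => min (g x) N) h :=
    fun x y => le_trans (by gcongr <;> exact min_le_left _ _) (H x y)
  exact Hmin.lintegral_of_iSup_ne_top ha hb hab (by fun_prop) (by fun_prop) hh (hbdd f M) (hbdd g N)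

end PrekopaLeindler

section Marginals

variable {ι : Type*} [DecidableEq ι] {a b : ℝ} {f g h : (ι → ℝ) → ℝ≥0∞}

theorem IsPrekopaLeindlerTriple.lmarginal (H : IsPrekopaLeindlerTriple a b f g h)
    (ha : 0 < a) (hb : 0 < b) (hab : a + b = 1) (hf : Measurable f) (hg : Measurable g)
    (hh : Measurable h) (s : Finset ι) :
    IsPrekopaLeindlerTriple a b (∫⋯∫⁻_s, f) (∫⋯∫⁻_s, g) (∫⋯∫⁻_s, h) := by
  induction s using Finset.induction_on with
  | empty => simpa only [lmarginal_empty] using H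
  | insert i s hi ih =>
    intro x y
    simp only [lmarginal_insert _ hf hi, lmarginal_insert _ hg hi, lmarginal_insert _ hh hi]
    refine IsPrekopaLeindlerTriple.lintegral (fun u v => ?_) ha hb hab
      ((hf.lmarginal _).comp (measurable_update x))
      ((hg.lmarginal _).comp (measurable_update y)) ((hh.lmarginal _).comp (measurable_update _))
    have := ih (Function.update x i u) (Function.update y i v)
    rwa [← Function.update_smul, ← Function.update_smul, ← Function.update_add] at this

/-- Log-concavity of a function with values in `[0, ∞]`, so that it applies to marginals before
they are known to be finite. -/
def LogConcave {E : Type*} [AddCommGroup E] [Module ℝ E] (F : E → ℝ≥0∞) : Prop :=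
  ∀ ⦃a b : ℝ⦄, 0 < a → 0 < b → a + b = 1 → IsPrekopaLeindlerTriple a b F F F

variable {F : (ι → ℝ) → ℝ≥0∞}

theorem LogConcave.lmarginal (hF : LogConcave F) (hm : Measurable F) (s : Finset ι) :
    LogConcave (∫⋯∫⁻_s, F) :=
  fun _ _ ha hb hab => (hF ha hb hab).lmarginal ha hb hab hm hm hm s

variable {E E' : Type*} [AddCommGroup E] [Module ℝ E] [AddCommGroup E'] [Module ℝ E']
  {G : E → ℝ≥0∞}

theorem LogConcave.comp_affineMap (hG : LogConcave G) (φ : E' →ᵃ[ℝ] E) : LogConcave (G ∘ φ) :=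
  fun a b ha hb hab x y => by
    simpa only [Function.comp_apply, Convex.combo_affine_apply hab] using
      hG ha hb hab (φ x) (φ y)

theorem LogConcave.convex_superlevel (hG : LogConcave G) (c : ℝ≥0∞) : Convex ℝ {x | c < G x} :=
  convex_iff_forall_pos.2 fun x hx y hy a b ha hb hab => by
    calc c = c ^ a * c ^ b := (rpow_mul_rpow_self ha hb hab c).symm
      _ < G x ^ a * G y ^ b :=
        ENNReal.mul_lt_mul (ENNReal.rpow_lt_rpow hx ha) (ENNReal.rpow_lt_rpow hy hb)
      _ ≤ G (a • x + b • y) := hG ha hb hab x y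

section Haar

variable {E : Type*} [NormedAddCommGroup E] [NormedSpace ℝ E] [FiniteDimensional ℝ E]
  [MeasurableSpace E] (μ : Measure E) [μ.IsAddHaarMeasure] {F : E → ℝ≥0∞}

theorem LogConcave.vectorSpan_ne_top (hF : LogConcave F) (hm : Measurable F) [Nontrivial E]
    (h₀ : ∫⁻ x, F x ∂μ = 0) : vectorSpan ℝ {x | 0 < F x} ≠ ⊤ := by
  have hnull : μ {x | 0 < F x} = 0 := by
    simpa only [pos_iff_ne_zero, Pi.zero_apply] using ae_iff.1 ((lintegral_eq_zero_iff hm).1 h₀)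
  rw [Ne, ← AffineSubspace.affineSpan_eq_top_iff_vectorSpan_eq_top_of_nontrivial,
    ← (hF.convex_superlevel 0).interior_nonempty_iff_affineSpan_eq_top, not_nonempty_iff_eq_empty]
  exact Measure.interior_eq_empty_of_null hnull

variable [BorelSpace E]

theorem lintegral_comp_smul_add (hm : Measurable F) {c : ℝ} (hc : c ≠ 0) (d : E) :
    ∫⁻ x, F (c • x + d) ∂μ = ENNReal.ofReal |(c ^ Module.finrank ℝ E)⁻¹| * ∫⁻ x, F x ∂μ := by
  calc ∫⁻ x, F (c • x + d) ∂μ = ∫⁻ y, F (y + d) ∂(μ.map (c • ·)) :=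
        (lintegral_map (f := fun y => F (y + d)) (by fun_prop) (measurable_const_smul c)).symm
    _ = _ := by
      rw [Measure.map_addHaar_smul μ hc, lintegral_smul_measure, smul_eq_mul,
        lintegral_add_right_eq_self F]

-- Integrate `F x ^ (1 / 2) * F y ^ (1 / 2) ≤ F ((x + y) / 2)` over `y`.
theorem LogConcave.exists_le_of_lintegral_ne_top (hF : LogConcave F) (hm : Measurable F)
    (h₀ : ∫⁻ x, F x ∂μ ≠ 0) (ht : ∫⁻ x, F x ∂μ ≠ ∞) : ∃ B ≠ ∞, ∀ x, F x ≤ B := by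
  set J := ∫⁻ y, F y ^ (1 / 2 : ℝ) ∂μ
  set c := ENNReal.ofReal |(((1 / 2 : ℝ) ^ Module.finrank ℝ E)⁻¹)| * ∫⁻ x, F x ∂μ
  have hJ : J ≠ 0 := by
    refine fun hJ => h₀ ((lintegral_eq_zero_iff hm).2 ?_)
    filter_upwards [(lintegral_eq_zero_iff (by fun_prop)).1 hJ] with y hy
    exact (ENNReal.rpow_eq_zero_iff_of_pos (by norm_num)).1 hy
  have hc : c ≠ ∞ := ENNReal.mul_ne_top ENNReal.ofReal_ne_top ht
  have hmid (x) : F x ^ (1 / 2 : ℝ) * J ≤ c := by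
    calc F x ^ (1 / 2 : ℝ) * J ≤ ∫⁻ y, F x ^ (1 / 2 : ℝ) * F y ^ (1 / 2 : ℝ) ∂μ :=
          lintegral_const_mul_le _ _
      _ ≤ ∫⁻ y, F ((1 / 2 : ℝ) • y + (1 / 2 : ℝ) • x) ∂μ := lintegral_mono fun y => by
          rw [add_comm]
          exact hF (by norm_num) (by norm_num) (by norm_num) x y
      _ = c := lintegral_comp_smul_add μ hm (by norm_num) _
  refine ⟨(c / J) ^ 2, ENNReal.pow_ne_top (ENNReal.div_ne_top hc hJ), fun x => ?_⟩
  calc F x = (F x ^ (1 / 2 : ℝ)) ^ 2 := (rpow_half_sq _).symm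
    _ ≤ (c / J) ^ 2 := by
      gcongr
      exact (ENNReal.le_div_iff_mul_le (.inl hJ) (.inr hc)).2 (hmid x)

end Haar

theorem LogConcave.exists_lintegral_update_eq_zero [Fintype ι] [Nonempty ι] (hF : LogConcave F)
    (hm : Measurable F) (h₀ : ∫⁻ x, F x = 0) :
    ∃ j, ∀ x, ∫⁻ t, F (Function.update x j t) = 0 := by
  have ⟨j, hj⟩ : ∃ j, Pi.single j (1 : ℝ) ∉ vectorSpan ℝ {x | 0 < F x} := by
    by_contra! hall
    refine hF.vectorSpan_ne_top volume hm h₀ (top_unique ?_)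
    rw [← (Pi.basisFun ℝ ι).span_eq, Submodule.span_le]
    rintro _ ⟨j, rfl⟩
    simpa using hall j
  refine ⟨j, fun x => (lintegral_eq_zero_iff (hm.comp (measurable_update x))).2 ?_⟩
  have hsub : {t | 0 < F (Function.update x j t)}.Subsingleton := by
    intro t ht u hu
    by_contra htu
    have hmem := (vectorSpan ℝ {x | 0 < F x}).smul_mem (t - u)⁻¹
      (vsub_mem_vectorSpan ℝ (show _ ∈ {x | 0 < F x} from ht) hu)
    refine hj ?_
    convert hmem
    ext i
    rcases eq_or_ne i j with rfl | hij
    · simp [inv_mul_cancel₀ (sub_ne_zero.2 htu)]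
    · simp [hij]
  filter_upwards [measure_eq_zero_iff_ae_notMem.1 (hsub.measure_zero volume)] with t ht
  exact nonpos_iff_eq_zero.1 (not_lt.1 ht)

end Marginals

section SecondMoment

variable {h : ℝ → ℝ≥0∞}

theorem ofReal_abs_mul_lintegral_comp_mul_add (hm : Measurable h) {c : ℝ} (hc : c ≠ 0) (d : ℝ) :
    ENNReal.ofReal |c| * ∫⁻ t, h (c * t + d) = ∫⁻ t, h t := by
  have hsubst := lintegral_comp_smul_add volume hm hc d
  simp only [smul_eq_mul, Module.finrank_self, pow_one] at hsubst
  rw [hsubst, ← mul_assoc, ← ENNReal.ofReal_mul (abs_nonneg c), ← abs_mul, mul_inv_cancel₀ hc,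
    abs_one, ENNReal.ofReal_one, one_mul]

theorem LogConcave.rpow_half_le_of_mem_Ioo (hh : LogConcave h) (u : ℝ) {r : ℝ}
    (hr : r ∈ Ioo (0 : ℝ) 1) : (h 0 * h u) ^ (1 / 2 : ℝ) ≤
      ENNReal.ofReal (1 / 2) * h (u * r + 0) + ENNReal.ofReal (1 / 2) * h (-u * r + u) := by
  have hr₀ : 0 < r := hr.1
  have hr₁ : 0 < 1 - r := sub_pos.2 hr.2
  have h₁ := hh hr₁ hr₀ (sub_add_cancel 1 r) 0 u
  have h₂ := hh hr₀ hr₁ (add_sub_cancel r 1) 0 u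
  calc (h 0 * h u) ^ (1 / 2 : ℝ)
      = (h 0 ^ (1 - r) * h u ^ r * (h 0 ^ r * h u ^ (1 - r))) ^ (1 / 2 : ℝ) := by
        rw [mul_mul_mul_comm, rpow_mul_rpow_self hr₁ hr₀ (sub_add_cancel 1 r),
          rpow_mul_rpow_self hr₀ hr₁ (add_sub_cancel r 1)]
    _ ≤ (h (u * r + 0) * h (-u * r + u)) ^ (1 / 2 : ℝ) := by
        gcongr
        · simpa [mul_comm] using h₁
        · simpa [sub_mul, neg_add_eq_sub, mul_comm r] using h₂
    _ ≤ _ := by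
        rw [ENNReal.mul_rpow_of_nonneg _ _ one_half_pos.le]
        exact rpow_mul_rpow_le_ofReal_mul_add one_half_pos one_half_pos (add_halves 1) _ _

theorem LogConcave.ofReal_abs_mul_le_lintegral (hh : LogConcave h) (hm : Measurable h) (u : ℝ) :
    ENNReal.ofReal |u| * (h 0 * h u) ^ (1 / 2 : ℝ) ≤ ∫⁻ t, h t := by
  rcases eq_or_ne u 0 with rfl | hu
  · simp
  calc ENNReal.ofReal |u| * (h 0 * h u) ^ (1 / 2 : ℝ)
      = ENNReal.ofReal |u| * ∫⁻ _r in Ioo (0 : ℝ) 1, (h 0 * h u) ^ (1 / 2 : ℝ) := by simp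
    _ ≤ ENNReal.ofReal |u| * ∫⁻ r, (ENNReal.ofReal (1 / 2) * h (u * r + 0) +
          ENNReal.ofReal (1 / 2) * h (-u * r + u)) := by
        refine mul_le_mul' le_rfl (le_trans ?_ (setLIntegral_le_lintegral (Ioo 0 1) _))
        exact setLIntegral_mono' measurableSet_Ioo fun r hr => hh.rpow_half_le_of_mem_Ioo u hr
    _ = ENNReal.ofReal (1 / 2) * (ENNReal.ofReal |u| * ∫⁻ r, h (u * r + 0)) +
          ENNReal.ofReal (1 / 2) * (ENNReal.ofReal |-u| * ∫⁻ r, h (-u * r + u)) := by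
        rw [lintegral_add_left (by fun_prop), lintegral_const_mul' _ _ ENNReal.ofReal_ne_top,
          lintegral_const_mul' _ _ ENNReal.ofReal_ne_top, abs_neg]
        ring
    _ = ∫⁻ t, h t := by
        rw [ofReal_abs_mul_lintegral_comp_mul_add hm hu,
          ofReal_abs_mul_lintegral_comp_mul_add hm (neg_ne_zero.2 hu), ← add_mul,
          ← ENNReal.ofReal_add one_half_pos.le one_half_pos.le, add_halves, ENNReal.ofReal_one,
          one_mul]

theorem LogConcave.zero_mul_le_sq_half (hh : LogConcave h) (t : ℝ) :
    h 0 * h t ≤ h (1 / 2 * t) ^ 2 := by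
  have hmid := hh one_half_pos one_half_pos (add_halves 1) 0 t
  rw [smul_zero, zero_add, smul_eq_mul] at hmid
  calc h 0 * h t = (h 0 ^ (1 / 2 : ℝ) * h t ^ (1 / 2 : ℝ)) ^ 2 := by
        rw [mul_pow, rpow_half_sq, rpow_half_sq]
    _ ≤ h (1 / 2 * t) ^ 2 := by gcongr

theorem LogConcave.sq_mul_lintegral_sq_le (hh : LogConcave h) (hm : Measurable h) :
    h 0 ^ 2 * ∫⁻ t, h t * ENNReal.ofReal (t ^ 2) ≤ 8 * (∫⁻ t, h t) ^ 3 := by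
  set m := ∫⁻ t, h t
  have hpoint (t : ℝ) :
      h 0 ^ 2 * (h t * ENNReal.ofReal (t ^ 2)) ≤ 4 * m ^ 2 * h (1 / 2 * t + 0) := by
    have ht : ENNReal.ofReal (t ^ 2) = 4 * ENNReal.ofReal |1 / 2 * t| ^ 2 := by
      rw [← ENNReal.ofReal_pow (abs_nonneg _), sq_abs, ← ENNReal.ofReal_ofNat,
        ← ENNReal.ofReal_mul (by norm_num)]
      ring_nf
    rw [add_zero]
    calc h 0 ^ 2 * (h t * ENNReal.ofReal (t ^ 2))
        = h 0 * ENNReal.ofReal (t ^ 2) * (h 0 * h t) := by ring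
      _ ≤ h 0 * ENNReal.ofReal (t ^ 2) * h (1 / 2 * t) ^ 2 := by
          gcongr
          exact hh.zero_mul_le_sq_half t
      _ = 4 * (ENNReal.ofReal |1 / 2 * t| * (h 0 * h (1 / 2 * t)) ^ (1 / 2 : ℝ)) ^ 2 *
            h (1 / 2 * t) := by
          rw [mul_pow, rpow_half_sq, ht]
          ring
      _ ≤ 4 * m ^ 2 * h (1 / 2 * t) := by
          gcongr
          exact hh.ofReal_abs_mul_le_lintegral hm _
  calc h 0 ^ 2 * ∫⁻ t, h t * ENNReal.ofReal (t ^ 2)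
      ≤ ∫⁻ t, h 0 ^ 2 * (h t * ENNReal.ofReal (t ^ 2)) := lintegral_const_mul_le _ _
    _ ≤ ∫⁻ t : ℝ, 4 * m ^ 2 * h (1 / 2 * t + 0) := lintegral_mono hpoint
    _ = 4 * m ^ 2 * (2 * (ENNReal.ofReal |1 / 2| * ∫⁻ t : ℝ, h (1 / 2 * t + 0))) := by
        rw [lintegral_const_mul _ (by fun_prop), ← mul_assoc 2, ← ENNReal.ofReal_ofNat 2,
          ← ENNReal.ofReal_mul (by norm_num)]
        norm_num
    _ = 8 * m ^ 3 := by
        rw [ofReal_abs_mul_lintegral_comp_mul_add hm (by norm_num)]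
        ring

theorem LogConcave.sq_mul_lintegral_sub_sq_le (hh : LogConcave h) (hm : Measurable h) (a : ℝ) :
    h a ^ 2 * ∫⁻ t, h t * ENNReal.ofReal ((t - a) ^ 2) ≤ 8 * (∫⁻ t, h t) ^ 3 := by
  have hshift := LogConcave.sq_mul_lintegral_sq_le (h := fun t => h (t + a))
    (hh.comp_affineMap (AffineMap.id ℝ ℝ + AffineMap.const ℝ ℝ a)) (by fun_prop)
  rw [← lintegral_add_right_eq_self h a,
    ← lintegral_add_right_eq_self (fun t => h t * ENNReal.ofReal ((t - a) ^ 2)) a]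
  simpa using hshift

end SecondMoment

section AxisMarginal

variable {ι : Type*} [Fintype ι] [DecidableEq ι] {F : (ι → ℝ) → ℝ≥0∞}

/-- The marginal of `F` on the `i`-th coordinate axis. -/
def axisMarginal (F : (ι → ℝ) → ℝ≥0∞) (i : ι) (t : ℝ) : ℝ≥0∞ :=
  (∫⋯∫⁻_Finset.univ.erase i, F) (Pi.single i t)

theorem measurable_axisMarginal (hm : Measurable F) (i : ι) : Measurable (axisMarginal F i) :=
  (hm.lmarginal _).comp (measurable_update 0)

theorem logConcave_axisMarginal (hF : LogConcave F) (hm : Measurable F) (i : ι) :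
    LogConcave (axisMarginal F i) :=
  (hF.lmarginal hm _).comp_affineMap (LinearMap.single ℝ (fun _ => ℝ) i).toAffineMap

theorem lintegral_axisMarginal_mul (hm : Measurable F) (i : ι) {φ : ℝ → ℝ≥0∞}
    (hφ : Measurable φ) : ∫⁻ t, axisMarginal F i t * φ t = ∫⁻ x, F x * φ (x i) := by
  have hmφ : Measurable fun x => F x * φ (x i) := by fun_prop
  rw [volume_pi, lintegral_eq_lmarginal_univ (0 : ι → ℝ), lmarginal_erase _ hmφ (Finset.mem_univ i)]
  refine lintegral_congr fun t => ?_
  simp only [axisMarginal, lmarginal, Function.updateFinset, Finset.mem_erase, ne_eq,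
    not_true_eq_false, false_and, dif_neg, not_false_eq_true, Function.update_self, Pi.single]
  exact (lintegral_mul_const _ (hm.comp measurable_updateFinset)).symm

theorem lintegral_axisMarginal (hm : Measurable F) (i : ι) :
    ∫⁻ t, axisMarginal F i t = ∫⁻ x, F x := by
  simpa only [mul_one] using lintegral_axisMarginal_mul hm i (measurable_const (a := 1))

theorem LogConcave.sq_mul_lintegral_coord_sub_sq_le (hF : LogConcave F) (hm : Measurable F)
    (i : ι) (a : ℝ) :
    axisMarginal F i a ^ 2 * ∫⁻ x, F x * ENNReal.ofReal ((x i - a) ^ 2) ≤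
      8 * (∫⁻ x, F x) ^ 3 := by
  rw [← lintegral_axisMarginal hm i,
    ← lintegral_axisMarginal_mul hm i (φ := fun t => ENNReal.ofReal ((t - a) ^ 2)) (by fun_prop)]
  exact (logConcave_axisMarginal hF hm i).sq_mul_lintegral_sub_sq_le
    (measurable_axisMarginal hm i) a

omit [DecidableEq ι] in
theorem LogConcave.memLp_coord_two (hF : LogConcave F) (hm : Measurable F)
    (h₀ : ∫⁻ x, F x ≠ 0) (ht : ∫⁻ x, F x ≠ ∞) (i : ι) :
    MemLp (fun x => x i) 2 (volume.withDensity F) := by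
  classical
  have : IsFiniteMeasure (volume.withDensity F) := isFiniteMeasure_withDensity ht
  obtain ⟨a, ha⟩ : ∃ a, axisMarginal F i a ≠ 0 := by
    by_contra! hall
    exact h₀ (by rw [← lintegral_axisMarginal hm i, lintegral_congr hall, lintegral_zero])
  have hfin : ∫⁻ x, F x * ENNReal.ofReal ((x i - a) ^ 2) ≠ ∞ := fun htop => by
    have hle := hF.sq_mul_lintegral_coord_sub_sq_le hm i a
    rw [htop, ENNReal.mul_top (pow_ne_zero 2 ha), top_le_iff] at hle
    exact ENNReal.mul_ne_top (by norm_num) (ENNReal.pow_ne_top ht) hle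
  have hsub : MemLp (fun x : ι → ℝ => x i - a) 2 (volume.withDensity F) := by
    refine (memLp_two_iff_integrable_sq (Measurable.aestronglyMeasurable (by fun_prop))).2
      ⟨Measurable.aestronglyMeasurable (by fun_prop), ?_⟩
    rw [hasFiniteIntegral_iff_ofReal (.of_forall fun x => sq_nonneg _),
      lintegral_withDensity_eq_lintegral_mul _ hm (by fun_prop)]
    exact hfin.lt_top
  convert hsub.add (memLp_const a) using 1
  ext x
  simp

end AxisMarginal

section Entropy

theorem lintegral_gaussian_pi {ι : Type*} [Fintype ι] {σ : ℝ} (hσ : 0 < σ) :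
    ∫⁻ x : ι → ℝ, ENNReal.ofReal (Real.exp (-(Real.pi / σ ^ 2) * ∑ i, x i ^ 2)) =
      ENNReal.ofReal (σ ^ Fintype.card ι) := by
  have hpos : 0 < Real.pi / σ ^ 2 := by positivity
  have hprod : (fun x : ι → ℝ => Real.exp (-(Real.pi / σ ^ 2) * ∑ i, x i ^ 2)) =
      fun x => ∏ i, Real.exp (-(Real.pi / σ ^ 2) * x i ^ 2) := by
    ext x
    rw [← Real.exp_sum, ← Finset.mul_sum]
  have hint := Integrable.fintype_prod (μ := fun _ : ι => volume)
    (f := fun _ t => Real.exp (-(Real.pi / σ ^ 2) * t ^ 2)) fun _ => integrable_exp_neg_mul_sq hpos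
  rw [← ofReal_integral_eq_lintegral_ofReal (hprod ▸ hint)
      (.of_forall fun _ => (Real.exp_pos _).le), hprod,
    integral_fintype_prod_volume_eq_pow (fun t : ℝ => Real.exp (-(Real.pi / σ ^ 2) * t ^ 2)),
    integral_gaussian, div_div_cancel₀ Real.pi_ne_zero, Real.sqrt_sq hσ.le]

theorem measure_univ_le_lintegral_exp {α : Type*} [MeasurableSpace α] {μ : Measure α}
    [IsFiniteMeasure μ] {u : α → ℝ} (hu : Integrable u μ) (h₀ : 0 ≤ ∫ x, u x ∂μ) :
    μ univ ≤ ∫⁻ x, ENNReal.ofReal (Real.exp (u x)) ∂μ := by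
  rcases eq_or_ne (∫⁻ x, ENNReal.ofReal (Real.exp (u x)) ∂μ) ∞ with htop | htop
  · exact htop ▸ le_top
  have hnn : 0 ≤ᵐ[μ] fun x => Real.exp (u x) := .of_forall fun x => (Real.exp_pos _).le
  have hexp : Integrable (fun x => Real.exp (u x)) μ :=
    ⟨Real.continuous_exp.comp_aestronglyMeasurable hu.1,
      (hasFiniteIntegral_iff_ofReal hnn).2 htop.lt_top⟩
  rw [← ofReal_integral_eq_lintegral_ofReal hexp hnn, ← ofReal_measureReal]
  refine ENNReal.ofReal_le_ofReal ?_
  calc μ.real univ ≤ ∫ x, (u x + 1) ∂μ := by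
        rw [integral_add hu (integrable_const 1), integral_const, smul_eq_mul, mul_one]
        exact le_add_of_nonneg_left h₀
    _ ≤ ∫ x, Real.exp (u x) ∂μ :=
        integral_mono (hu.add (integrable_const 1)) hexp fun x => Real.add_one_le_exp (u x)

variable {ι : Type*} [Fintype ι]

theorem measure_univ_le_lintegral_exp_sub_sum_sq {μ : Measure (ι → ℝ)} [IsFiniteMeasure μ] {σ : ℝ}
    (hσ : σ ≠ 0) (h₂ : ∀ i, MemLp (fun x => x i) 2 μ)
    (hle : ∀ i, ∫ x, x i ^ 2 ∂μ ≤ σ ^ 2 * μ.real univ) {ℓ : (ι → ℝ) → ℝ} (hℓ : Integrable ℓ μ)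
    (hℓ₀ : ∫ x, ℓ x ∂μ ≤ 0) :
    μ univ ≤ ∫⁻ x, ENNReal.ofReal
      (Real.exp (Real.pi * Fintype.card ι - Real.pi / σ ^ 2 * ∑ i, x i ^ 2 - ℓ x)) ∂μ := by
  have hsq : Integrable (fun x : ι → ℝ => Real.pi / σ ^ 2 * ∑ i, x i ^ 2) μ :=
    (integrable_finsetSum _ fun i _ => (h₂ i).integrable_sq).const_mul _
  have hint := (integrable_const (μ := μ) (Real.pi * Fintype.card ι)).sub hsq
  refine measure_univ_le_lintegral_exp (hint.sub hℓ) ?_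
  have hquad : ∫ x, Real.pi / σ ^ 2 * ∑ i, x i ^ 2 ∂μ ≤
      Real.pi * Fintype.card ι * μ.real univ := by
    rw [integral_const_mul, integral_finsetSum _ fun i _ => (h₂ i).integrable_sq]
    calc Real.pi / σ ^ 2 * ∑ i, ∫ x, x i ^ 2 ∂μ
        ≤ Real.pi / σ ^ 2 * ∑ _i : ι, σ ^ 2 * μ.real univ := by
          gcongr with i
          exact hle i
      _ = Real.pi * Fintype.card ι * μ.real univ := by
          rw [Finset.sum_const, Finset.card_univ, nsmul_eq_mul]
          field_simp
  rw [integral_sub (by exact hint) hℓ, integral_sub (integrable_const _) hsq, integral_const,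
    smul_eq_mul]
  linarith

-- Gibbs' inequality against the Gaussian of variance `σ ^ 2 / (2 * π)`.
theorem lintegral_le_of_ae_le_mul_exp {F : (ι → ℝ) → ℝ≥0∞} (hm : Measurable F)
    (ht : ∫⁻ x, F x ≠ ∞) {σ : ℝ} (hσ : 0 < σ)
    (h₂ : ∀ i, MemLp (fun x => x i) 2 (volume.withDensity F))
    (hle : ∀ i, ∫ x, x i ^ 2 ∂volume.withDensity F ≤ σ ^ 2 * (∫⁻ x, F x).toReal)
    {ℓ : (ι → ℝ) → ℝ} (hℓm : Measurable ℓ) (hℓ : Integrable ℓ (volume.withDensity F))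
    (hℓ₀ : ∫ x, ℓ x ∂volume.withDensity F ≤ 0) {M : ℝ≥0∞}
    (hF : ∀ᵐ x, F x ≤ M * ENNReal.ofReal (Real.exp (ℓ x))) :
    ∫⁻ x, F x ≤ ENNReal.ofReal (Real.exp Real.pi * σ) ^ Fintype.card ι * M := by
  have hfin : IsFiniteMeasure (volume.withDensity F) := isFiniteMeasure_withDensity ht
  have huniv : volume.withDensity F univ = ∫⁻ x, F x := by
    rw [withDensity_apply _ .univ, setLIntegral_univ]
  have hgibbs := measure_univ_le_lintegral_exp_sub_sum_sq hσ.ne' h₂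
    (by simpa only [Measure.real, huniv] using hle) hℓ hℓ₀
  rw [huniv, lintegral_withDensity_eq_lintegral_mul _ hm (by fun_prop)] at hgibbs
  let c := Real.exp (Real.pi * Fintype.card ι)
  have hpt : ∀ᵐ x : ι → ℝ, F x * ENNReal.ofReal (Real.exp
      (Real.pi * Fintype.card ι - Real.pi / σ ^ 2 * ∑ i, x i ^ 2 - ℓ x)) ≤
      M * ENNReal.ofReal c *
        ENNReal.ofReal (Real.exp (-(Real.pi / σ ^ 2) * ∑ i, x i ^ 2)) := by
    filter_upwards [hF] with x hx
    refine (mul_le_mul_left hx _).trans_eq ?_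
    rw [mul_assoc, mul_assoc, ← ENNReal.ofReal_mul (Real.exp_pos _).le,
      ← ENNReal.ofReal_mul (Real.exp_pos _).le, ← Real.exp_add, ← Real.exp_add]
    ring_nf
  calc ∫⁻ x, F x
      ≤ ∫⁻ x : ι → ℝ, M * ENNReal.ofReal c *
          ENNReal.ofReal (Real.exp (-(Real.pi / σ ^ 2) * ∑ i, x i ^ 2)) :=
        hgibbs.trans (lintegral_mono_ae hpt)
    _ = ENNReal.ofReal (Real.exp Real.pi * σ) ^ Fintype.card ι * M := by
        rw [lintegral_const_mul _ (by fun_prop), lintegral_gaussian_pi hσ, mul_assoc, mul_comm M,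
          ← ENNReal.ofReal_mul (Real.exp_pos _).le, ← ENNReal.ofReal_pow (by positivity), mul_pow,
          mul_comm Real.pi, Real.exp_nat_mul]

end Entropy

section UpperBound

variable {ι : Type*} [DecidableEq ι] {F : (ι → ℝ) → ℝ≥0∞}

theorem LogConcave.comp_updateFinset (hF : LogConcave F) (x : ι → ℝ) (s : Finset ι) :
    LogConcave fun y => F (Function.updateFinset x s y) := by
  intro a b ha hb hab y z
  have hcombo : Function.updateFinset x s (a • y + b • z) =
      a • Function.updateFinset x s y + b • Function.updateFinset x s z := by
    ext i
    by_cases hi : i ∈ s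
    · simp [Function.updateFinset, hi]
    · simp [Function.updateFinset, hi, ← add_mul, hab]
  simpa only [hcombo] using hF ha hb hab _ _

theorem lmarginal_comp_updateFinset_zero (hm : Measurable F) (s : Finset ι) (t : Finset s) :
    (∫⋯∫⁻_t, fun y => F (Function.updateFinset 0 s y)) 0 =
      (∫⋯∫⁻_t.image Subtype.val, F) 0 := by
  refine (lmarginal_image (X := fun _ => ℝ) (μ := fun _ => volume) Subtype.val_injective t
    (f := fun y => F (Function.updateFinset 0 s y)) (hm.comp measurable_updateFinset)
    0).symm.trans ?_
  refine lintegral_congr fun y => congrArg F (funext fun i => ?_)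
  by_cases hi : i ∈ s
  · simp [Function.updateFinset, hi]
  · have hit : i ∉ t.image Subtype.val := fun h => by
      obtain ⟨j, -, rfl⟩ := Finset.mem_image.1 h
      exact hi j.2
    simp only [Function.updateFinset, hi, hit, dif_neg, not_false_eq_true]

variable [Fintype ι]

theorem LogConcave.integral_coord_sq_le (hF : LogConcave F) (hm : Measurable F)
    (ht : ∫⁻ x, F x ≠ ∞) {A : ℝ} (hA : 0 < A) {i : ι} (hAi : A ≤ (axisMarginal F i 0).toReal) :
    ∫ x, x i ^ 2 ∂volume.withDensity F ≤
      (3 * (∫⁻ x, F x).toReal / A) ^ 2 * (∫⁻ x, F x).toReal := by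
  have hsq := ENNReal.toReal_mono (ENNReal.mul_ne_top (by norm_num) (ENNReal.pow_ne_top ht))
    (hF.sq_mul_lintegral_coord_sub_sq_le hm i 0)
  simp only [sub_zero, ENNReal.toReal_mul, ENNReal.toReal_pow, ENNReal.toReal_ofNat] at hsq
  rw [integral_eq_lintegral_of_nonneg_ae (.of_forall fun x => sq_nonneg _)
    (Measurable.aestronglyMeasurable (by fun_prop)),
    lintegral_withDensity_eq_lintegral_mul _ hm (by fun_prop)]
  set V := (∫⁻ x, F x * ENNReal.ofReal (x i ^ 2)).toReal
  set m := (∫⁻ x, F x).toReal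
  calc V = A ^ 2 * V / A ^ 2 := by field_simp
    _ ≤ (axisMarginal F i 0).toReal ^ 2 * V / A ^ 2 := by gcongr
    _ ≤ 9 * m ^ 3 / A ^ 2 := by
        gcongr ?_ / _
        exact hsq.trans (by gcongr; norm_num)
    _ = (3 * m / A) ^ 2 * m := by ring

theorem LogConcave.axisMarginal_ne_top (hF : LogConcave F) (hm : Measurable F)
    (h₀ : ∫⁻ x, F x ≠ 0) (ht : ∫⁻ x, F x ≠ ∞) (i : ι) (t : ℝ) : axisMarginal F i t ≠ ∞ := by
  rw [← lintegral_axisMarginal hm i] at h₀ ht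
  obtain ⟨B, hB, hle⟩ := (logConcave_axisMarginal hF hm i).exists_le_of_lintegral_ne_top volume
    (measurable_axisMarginal hm i) h₀ ht
  exact ne_top_of_le_ne_top hB (hle t)

theorem LogConcave.exists_axisMarginal_zero_pow_le [Nonempty ι] (hF : LogConcave F)
    (hm : Measurable F) (h₀ : ∫⁻ x, F x ≠ 0) (ht : ∫⁻ x, F x ≠ ∞) {M : ℝ≥0∞}
    (hM : ∀ x, F x ≤ M) :
    ∃ i, axisMarginal F i 0 ^ Fintype.card ι ≤
      ENNReal.ofReal (3 * Real.exp Real.pi) ^ Fintype.card ι * M *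
        (∫⁻ x, F x) ^ (Fintype.card ι - 1) := by
  obtain ⟨i, hi⟩ := Finite.exists_min fun i => axisMarginal F i 0
  refine ⟨i, ?_⟩
  rcases eq_or_ne (axisMarginal F i 0) 0 with hz | hz
  · simp [hz]
  have hfin (j : ι) : axisMarginal F j 0 ≠ ∞ := hF.axisMarginal_ne_top hm h₀ ht j 0
  set m := ∫⁻ x, F x with hmass
  set A := (axisMarginal F i 0).toReal with hAdef
  have hA : 0 < A := ENNReal.toReal_pos hz (hfin i)
  have hm₀ : 0 < m.toReal := ENNReal.toReal_pos h₀ ht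
  have hgauss := lintegral_le_of_ae_le_mul_exp hm ht (σ := 3 * m.toReal / A)
    (by positivity) (hF.memLp_coord_two hm h₀ ht)
    (fun j => hF.integral_coord_sq_le hm ht hA (ENNReal.toReal_mono (hfin j) (hi j)))
    (ℓ := 0) measurable_zero (integrable_zero _ _ _) (by simp) (M := M)
    (.of_forall fun x => by simpa using hM x)
  obtain ⟨N, hN⟩ : ∃ N, Fintype.card ι = N + 1 := Nat.exists_eq_succ_of_ne_zero Fintype.card_ne_zero
  have hscale : ENNReal.ofReal (Real.exp Real.pi * (3 * m.toReal / A)) * axisMarginal F i 0 =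
      ENNReal.ofReal (3 * Real.exp Real.pi) * m := by
    rw [← ENNReal.ofReal_toReal (hfin i), ← ENNReal.ofReal_mul (by positivity), ← hAdef]
    nth_rw 2 [← ENNReal.ofReal_toReal ht]
    rw [← ENNReal.ofReal_mul (by positivity)]
    congr 1
    field_simp
  refine (ENNReal.mul_le_mul_iff_right h₀ ht).1 ?_
  rw [← hmass, hN] at hgauss
  rw [hN, Nat.add_sub_cancel]
  calc m * axisMarginal F i 0 ^ (N + 1)
      ≤ ENNReal.ofReal (Real.exp Real.pi * (3 * m.toReal / A)) ^ (N + 1) * M *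
          axisMarginal F i 0 ^ (N + 1) := mul_le_mul_left hgauss _
    _ = (ENNReal.ofReal (Real.exp Real.pi * (3 * m.toReal / A)) * axisMarginal F i 0) ^ (N + 1) *
          M := by ring
    _ = m * (ENNReal.ofReal (3 * Real.exp Real.pi) ^ (N + 1) * M * m ^ N) := by
        rw [hscale]
        ring

theorem one_le_ofReal_three_mul_exp_pi : 1 ≤ ENNReal.ofReal (3 * Real.exp Real.pi) := by
  rw [ENNReal.one_le_ofReal]
  linarith [Real.one_le_exp Real.pi_pos.le]

theorem LogConcave.exists_lmarginal_erase_pow_le_of_univ [Nonempty ι] (hF : LogConcave F)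
    (hm : Measurable F) (ht : ∫⁻ x, F x ≠ ∞) {M : ℝ≥0∞} (hM : ∀ x, F x ≤ M) :
    ∃ i, (∫⋯∫⁻_Finset.univ.erase i, F) 0 ^ Fintype.card ι ≤
      ENNReal.ofReal (3 * Real.exp Real.pi) ^ Fintype.card ι * M *
        (∫⁻ x, F x) ^ (Fintype.card ι - 1) := by
  rcases ne_or_eq (∫⁻ x, F x) 0 with h₀ | h₀
  · simpa only [axisMarginal, Pi.single_zero] using
      hF.exists_axisMarginal_zero_pow_le hm h₀ ht hM
  obtain ⟨j, hj⟩ := hF.exists_lintegral_update_eq_zero hm h₀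
  by_cases hne : ∃ i, i ≠ j
  · obtain ⟨i, hij⟩ := hne
    have hzero : (∫⋯∫⁻_Finset.univ.erase i, F) 0 = 0 := by
      rw [lmarginal_erase' _ hm (Finset.mem_erase.2 ⟨hij.symm, Finset.mem_univ j⟩)]
      exact (lintegral_congr fun _ => hj _).trans lintegral_zero
    exact ⟨i, by simp [hzero]⟩
  · push Not at hne
    have huniv : (Finset.univ : Finset ι) = {j} := Finset.eq_singleton_iff_unique_mem.2
      ⟨Finset.mem_univ j, fun i _ => hne i⟩
    have hcard : Fintype.card ι = 1 := by rw [← Finset.card_univ, huniv, Finset.card_singleton]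
    refine ⟨j, ?_⟩
    rw [huniv, Finset.erase_singleton, lmarginal_empty, hcard]
    simp only [pow_one, Nat.sub_self, pow_zero, mul_one]
    exact (hM 0).trans (le_mul_of_one_le_left' one_le_ofReal_three_mul_exp_pi)

omit [Fintype ι] in
theorem LogConcave.exists_lmarginal_erase_pow_le {s : Finset ι} (hs : s.Nonempty)
    (hF : LogConcave F) (hm : Measurable F) (ht : (∫⋯∫⁻_s, F) 0 ≠ ∞) {M : ℝ≥0∞}
    (hM : ∀ x, F x ≤ M) :
    ∃ i ∈ s, (∫⋯∫⁻_s.erase i, F) 0 ^ s.card ≤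
      ENNReal.ofReal (3 * Real.exp Real.pi) ^ s.card * M * (∫⋯∫⁻_s, F) 0 ^ (s.card - 1) := by
  have : Nonempty s := hs.to_subtype
  obtain ⟨i, hi⟩ := (hF.comp_updateFinset 0 s).exists_lmarginal_erase_pow_le_of_univ
    (hm.comp measurable_updateFinset) ht fun y => hM _
  refine ⟨i, i.2, ?_⟩
  have himage : (Finset.univ.erase i).image Subtype.val = s.erase i := by
    rw [Finset.image_erase Subtype.val_injective, Finset.univ_eq_attach,
      Finset.attach_image_val]
  rwa [lmarginal_comp_updateFinset_zero hm, himage, Fintype.card_coe] at hi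

theorem pow_le_of_pow_succ_le {A B C M m : ℝ≥0∞} (hC : 1 ≤ C) {j e n : ℕ} (hn : n = j + 1 + e)
    (hstep : B ^ (j + 1) ≤ C ^ (j + 1) * M * A ^ j)
    (hA : A ^ n ≤ C ^ (e * n) * M ^ e * m ^ (j + 1)) :
    B ^ n ≤ C ^ ((e + 1) * n) * M ^ (e + 1) * m ^ j := by
  refine (ENNReal.pow_le_pow_left_iff j.succ_ne_zero).1 ?_
  calc (B ^ n) ^ (j + 1) = (B ^ (j + 1)) ^ n := pow_right_comm ..
    _ ≤ (C ^ (j + 1) * M * A ^ j) ^ n := by gcongr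
    _ = C ^ ((j + 1) * n) * M ^ n * (A ^ n) ^ j := by ring
    _ ≤ C ^ ((j + 1) * n) * M ^ n * (C ^ (e * n) * M ^ e * m ^ (j + 1)) ^ j := by gcongr
    _ = C ^ ((j + 1 + e * j) * n) * (M ^ (e + 1) * m ^ j) ^ (j + 1) := by
        subst hn
        ring
    _ ≤ C ^ ((e + 1) * (j + 1) * n) * (M ^ (e + 1) * m ^ j) ^ (j + 1) := by
        gcongr
        linarith [Nat.zero_le e]
    _ = (C ^ ((e + 1) * n) * M ^ (e + 1) * m ^ j) ^ (j + 1) := by ring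

theorem LogConcave.exists_lmarginal_pow_le (hF : LogConcave F) (hm : Measurable F)
    (ht : ∫⁻ x, F x ≠ ∞) {M : ℝ≥0∞} (hM : ∀ x, F x ≤ M) (hMt : M ≠ ∞) {k d : ℕ}
    (hcard : k + d = Fintype.card ι) :
    ∃ s : Finset ι, s.card = k ∧ (∫⋯∫⁻_s, F) 0 ^ Fintype.card ι ≤
      ENNReal.ofReal (3 * Real.exp Real.pi) ^ (d * Fintype.card ι) * M ^ d *
        (∫⁻ x, F x) ^ k := by
  induction d generalizing k with
  | zero => exact ⟨Finset.univ, hcard.symm, by simp [← hcard, lmarginal_univ, volume_pi]⟩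
  | succ e ih =>
    obtain ⟨s, hs, hsle⟩ := ih (k := k + 1) (by omega)
    have hfin : (∫⋯∫⁻_s, F) 0 ≠ ∞ := fun htop => by
      rw [htop, ENNReal.top_pow (by omega), top_le_iff] at hsle
      exact absurd hsle (by finiteness)
    obtain ⟨i, hi, hile⟩ := hF.exists_lmarginal_erase_pow_le
      (Finset.card_pos.1 (hs ▸ k.succ_pos)) hm hfin hM
    refine ⟨s.erase i, by rw [Finset.card_erase_of_mem hi, hs, Nat.add_sub_cancel], ?_⟩
    rw [hs, Nat.add_sub_cancel] at hile
    exact pow_le_of_pow_succ_le one_le_ofReal_three_mul_exp_pi (by omega) hile hsle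

end UpperBound

section Centered

theorem exists_continuousLinearMap_ge_of_concaveOn {E : Type*} [NormedAddCommGroup E]
    [NormedSpace ℝ E] {U : Set E} (hU : IsOpen U) {g : E → ℝ} (hg : ConcaveOn ℝ U g)
    (hcont : ContinuousOn g U) {x : E} (hx : x ∈ U) :
    ∃ ℓ : E →L[ℝ] ℝ, ∀ y ∈ U, g y ≤ g x + ℓ (y - x) := by
  have hopen : IsOpen {p : E × ℝ | p.1 ∈ U ∧ p.2 < g p.1} := by
    have hdiff : ContinuousOn (fun p : E × ℝ => g p.1 - p.2) (U ×ˢ univ) :=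
      (hcont.comp continuousOn_fst fun p hp => hp.1).sub continuousOn_snd
    convert hdiff.isOpen_inter_preimage (hU.prod isOpen_univ) (isOpen_Ioi (a := 0)) using 1
    ext p
    simp
  obtain ⟨f, hf⟩ := geometric_hahn_banach_open_point hg.convex_strict_hypograph hopen
    (x := (x, g x)) fun h => lt_irrefl _ h.2
  have hsplit (y : E) (r : ℝ) : f (y, r) = f (y, 0) + r * f (0, 1) := by
    rw [show ((y, r) : E × ℝ) = (y, 0) + r • (0, 1) by simp, map_add, map_smul, smul_eq_mul]
  set c := f (0, 1)
  have hc : 0 < c := by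
    have hbelow := hf (x, g x - 1) ⟨hx, by simp⟩
    rw [hsplit, hsplit x (g x)] at hbelow
    linarith
  refine ⟨(-c⁻¹) • f.comp (ContinuousLinearMap.inl ℝ E ℝ), fun y hy => ?_⟩
  have hle : g y ≤ (f (x, 0) + g x * c - f (y, 0)) / c := by
    refine le_of_forall_lt fun r hr => (lt_div_iff₀ hc).2 ?_
    have hlt := hf (y, r) ⟨hy, hr⟩
    rw [hsplit, hsplit x (g x)] at hlt
    linarith
  refine hle.trans_eq ?_
  have hsub : f (y - x, 0) = f (y, 0) - f (x, 0) := by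
    rw [← map_sub, Prod.mk_sub_mk, sub_zero]
  simp only [smul_apply, ContinuousLinearMap.comp_apply,
    ContinuousLinearMap.inl_apply, hsub, smul_eq_mul]
  field_simp
  ring

variable {E : Type*} [NormedAddCommGroup E] [NormedSpace ℝ E] {F : E → ℝ≥0∞}

theorem LogConcave.concaveOn_log_toReal (hF : LogConcave F) (hfin : ∀ x, F x ≠ ∞) {U : Set E}
    (hU : Convex ℝ U) (hpos : ∀ x ∈ U, 0 < F x) :
    ConcaveOn ℝ U fun x => Real.log (F x).toReal := by
  have hreal {x : E} (hx : x ∈ U) : 0 < (F x).toReal :=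
    ENNReal.toReal_pos (hpos x hx).ne' (hfin x)
  refine concaveOn_iff_forall_pos.2 ⟨hU, fun x hx y hy a b ha hb hab => ?_⟩
  have hle := ENNReal.toReal_mono (hfin _) (hF ha hb hab x y)
  rw [ENNReal.toReal_mul, ← ENNReal.toReal_rpow, ← ENNReal.toReal_rpow] at hle
  have hx' := Real.rpow_pos_of_pos (hreal hx) a
  have hy' := Real.rpow_pos_of_pos (hreal hy) b
  have hlog := Real.log_le_log (mul_pos hx' hy') hle
  rwa [Real.log_mul hx'.ne' hy'.ne', Real.log_rpow (hreal hx), Real.log_rpow (hreal hy)] at hlog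

variable [FiniteDimensional ℝ E] [MeasurableSpace E] [BorelSpace E] {μ : Measure E}
  [μ.IsAddHaarMeasure]

theorem LogConcave.ae_mem_interior (hF : LogConcave F) (hm : Measurable F) :
    ∀ᵐ x ∂μ.withDensity F, x ∈ interior {x | 0 < F x} := by
  rw [ae_withDensity_iff hm]
  filter_upwards [measure_eq_zero_iff_ae_notMem.1 ((hF.convex_superlevel 0).addHaar_frontier μ)]
    with x hx hFx
  exact of_not_not fun h => hx ⟨subset_closure (pos_iff_ne_zero.2 hFx), h⟩

theorem LogConcave.zero_mem_interior (hF : LogConcave F) (hm : Measurable F)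
    (h₀ : ∫⁻ x, F x ∂μ ≠ 0) (hid : Integrable id (μ.withDensity F))
    (hcen : ∫ x, x ∂μ.withDensity F = 0) : 0 ∈ interior {x | 0 < F x} := by
  by_contra hmem
  obtain ⟨ℓ, hℓ⟩ := geometric_hahn_banach_open_point (hF.convex_superlevel 0).interior
    isOpen_interior hmem
  have hneg : ∀ᵐ x ∂μ.withDensity F, ℓ x < 0 := by
    filter_upwards [hF.ae_mem_interior hm] with x hx
    simpa using hℓ x hx
  have hint : ∫ x, -ℓ x ∂μ.withDensity F = 0 := by
    rw [integral_neg, ℓ.integral_comp_comm (φ := fun x => x) hid, hcen, map_zero, neg_zero]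
  have hzero := (integral_eq_zero_iff_of_nonneg_ae (hneg.mono fun _ hx => neg_nonneg.2 hx.le)
    (ℓ.integrable_comp hid).neg).1 hint
  have hfalse : ∀ᵐ _ ∂μ.withDensity F, False := by
    filter_upwards [hneg, hzero] with _ hx hx'
    exact hx.ne (neg_eq_zero.1 hx')
  have hbot := ae_eq_bot.1 (Filter.eventually_false_iff_eq_bot.1 hfalse)
  exact h₀ (by simpa using congrArg (fun ν : Measure E => ν univ) hbot)

theorem LogConcave.exists_ae_le_mul_exp (hF : LogConcave F) (hm : Measurable F)
    (hfin : ∀ x, F x ≠ ∞) {x : E} (hx : x ∈ interior {x | 0 < F x}) :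
    ∃ ℓ : E →L[ℝ] ℝ, ∀ᵐ y ∂μ, F y ≤ F x * ENNReal.ofReal (Real.exp (ℓ (y - x))) := by
  set U := interior {x | 0 < F x}
  have hpos (y : E) (hy : y ∈ U) : 0 < F y := interior_subset (s := {x | 0 < F x}) hy
  have hconc := hF.concaveOn_log_toReal hfin (hF.convex_superlevel 0).interior hpos
  obtain ⟨ℓ, hℓ⟩ := exists_continuousLinearMap_ge_of_concaveOn isOpen_interior hconc
    (hconc.continuousOn isOpen_interior) hx
  refine ⟨ℓ, ?_⟩
  filter_upwards [(ae_withDensity_iff hm).1 (hF.ae_mem_interior (μ := μ) hm)] with y hy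
  rcases eq_or_ne (F y) 0 with hFy | hFy
  · simp [hFy]
  have hx₀ : 0 < (F x).toReal := ENNReal.toReal_pos (hpos x hx).ne' (hfin x)
  have hy₀ : 0 < (F y).toReal := ENNReal.toReal_pos hFy (hfin y)
  rw [← ENNReal.ofReal_toReal (hfin y), ← ENNReal.ofReal_toReal (hfin x),
    ← ENNReal.ofReal_mul hx₀.le]
  refine ENNReal.ofReal_le_ofReal ?_
  rw [← Real.log_le_log_iff hy₀ (by positivity), Real.log_mul hx₀.ne' (Real.exp_ne_zero _),
    Real.log_exp]
  exact hℓ y (hy hFy)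

theorem LogConcave.lintegral_le_pow_mul_apply_zero {ι : Type*} [Fintype ι]
    {F : (ι → ℝ) → ℝ≥0∞} (hF : LogConcave F) (hm : Measurable F) (h₀ : ∫⁻ x, F x ≠ 0)
    (ht : ∫⁻ x, F x ≠ ∞) (hcen : ∀ i, ∫ x, x i ∂volume.withDensity F = 0)
    {σ : ℝ} (hσ : 0 < σ)
    (hle : ∀ i, ∫ x, x i ^ 2 ∂volume.withDensity F ≤ σ ^ 2 * (∫⁻ x, F x).toReal) :
    ∫⁻ x, F x ≤ ENNReal.ofReal (Real.exp Real.pi * σ) ^ Fintype.card ι * F 0 := by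
  classical
  have : IsFiniteMeasure (volume.withDensity F) := isFiniteMeasure_withDensity ht
  have h₂ := hF.memLp_coord_two hm h₀ ht
  have hid : Integrable id (volume.withDensity F) :=
    Integrable.of_eval fun i => (h₂ i).integrable one_le_two
  have hmean : ∫ x, x ∂volume.withDensity F = 0 := by
    ext i
    rw [eval_integral (f := fun x => x) fun i => hid.eval i]
    exact hcen i
  obtain ⟨B, hB, hFB⟩ := hF.exists_le_of_lintegral_ne_top volume hm h₀ ht
  obtain ⟨ℓ, hℓ⟩ := hF.exists_ae_le_mul_exp (μ := volume) hm
    (fun x => ((hFB x).trans_lt hB.lt_top).ne) (hF.zero_mem_interior hm h₀ hid hmean)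
  simp only [sub_zero] at hℓ
  have hℓ₀ : ∫ x, ℓ x ∂volume.withDensity F ≤ 0 := by
    rw [ℓ.integral_comp_comm (φ := fun x => x) hid, hmean, map_zero]
  exact lintegral_le_of_ae_le_mul_exp hm ht hσ h₂ hle ℓ.continuous.measurable
    (ℓ.integrable_comp hid) hℓ₀ hℓ

end Centered

section LowerBound

variable {ι : Type*} [DecidableEq ι] [Fintype ι] {F : (ι → ℝ) → ℝ≥0∞}

theorem lintegral_mul_comp_restrict_compl (hm : Measurable F) (s : Finset ι)
    {g : (↥sᶜ → ℝ) → ℝ≥0∞} (hg : Measurable g) :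
    ∫⁻ x, F x * g (Finset.restrict sᶜ x) =
      ∫⁻ z, (∫⋯∫⁻_s, F) (Function.updateFinset 0 sᶜ z) * g z := by
  have hFg : Measurable fun x => F x * g (Finset.restrict sᶜ x) :=
    hm.mul (hg.comp (Finset.measurable_restrict _))
  rw [volume_pi, lintegral_eq_lmarginal_univ 0, ← Finset.union_compl s, Finset.union_comm,
    lmarginal_union _ _ hFg disjoint_compl_left]
  refine lintegral_congr fun z => ?_
  refine Eq.trans (lintegral_congr fun y => ?_)
    (lintegral_mul_const (g z) (hm.comp measurable_updateFinset))
  refine congrArg (_ * g ·) (funext fun i => ?_)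
  have hi : (i : ι) ∉ s := Finset.mem_compl.1 i.2
  simp [Function.updateFinset, hi]

theorem map_restrict_compl_withDensity (hm : Measurable F) (s : Finset ι) :
    (volume.withDensity F).map (Finset.restrict sᶜ) =
      volume.withDensity fun z => (∫⋯∫⁻_s, F) (Function.updateFinset 0 sᶜ z) := by
  have hmarg : Measurable fun z : ↥sᶜ → ℝ => (∫⋯∫⁻_s, F) (Function.updateFinset 0 sᶜ z) :=
    (hm.lmarginal _).comp measurable_updateFinset
  refine Measure.ext_of_lintegral _ fun g hg => ?_
  rw [lintegral_map hg (Finset.measurable_restrict _),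
    lintegral_withDensity_eq_lintegral_mul _ hm
      (g := fun x => g (Finset.restrict sᶜ x)) (hg.comp (Finset.measurable_restrict _)),
    lintegral_withDensity_eq_lintegral_mul _ hmarg hg]
  exact lintegral_mul_comp_restrict_compl hm s hg

omit [Fintype ι] in
theorem updateFinset_zero_zero (s : Finset ι) :
    Function.updateFinset (0 : ι → ℝ) s 0 = 0 := by
  ext i
  simp [Function.updateFinset]

theorem lintegral_lmarginal_updateFinset (hm : Measurable F) (s : Finset ι) :
    ∫⁻ z : ↥sᶜ → ℝ, (∫⋯∫⁻_s, F) (Function.updateFinset 0 sᶜ z) = ∫⁻ x, F x := by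
  simpa using (lintegral_mul_comp_restrict_compl hm s (g := 1) measurable_one).symm

theorem LogConcave.lmarginal_zero_ne_top (hF : LogConcave F) (hm : Measurable F)
    (h₀ : ∫⁻ x, F x ≠ 0) (ht : ∫⁻ x, F x ≠ ∞) (s : Finset ι) : (∫⋯∫⁻_s, F) 0 ≠ ∞ := by
  rw [← lintegral_lmarginal_updateFinset hm s] at h₀ ht
  obtain ⟨B, hB, hle⟩ :=
    ((hF.lmarginal hm s).comp_updateFinset 0 sᶜ).exists_le_of_lintegral_ne_top volume
      ((hm.lmarginal _).comp measurable_updateFinset) h₀ ht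
  simpa only [updateFinset_zero_zero] using ne_top_of_le_ne_top hB (hle 0)

theorem LogConcave.lintegral_le_pow_mul_lmarginal_zero (hF : LogConcave F) (hm : Measurable F)
    (h₀ : ∫⁻ x, F x ≠ 0) (ht : ∫⁻ x, F x ≠ ∞) (hcen : ∀ i, ∫ x, x i ∂volume.withDensity F = 0)
    {σ : ℝ} (hσ : 0 < σ)
    (hle : ∀ i, ∫ x, x i ^ 2 ∂volume.withDensity F ≤ σ ^ 2 * (∫⁻ x, F x).toReal)
    {s : Finset ι} {d : ℕ} (hcard : s.card + d = Fintype.card ι) :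
    ∫⁻ x, F x ≤ ENNReal.ofReal (Real.exp Real.pi * σ) ^ d * (∫⋯∫⁻_s, F) 0 := by
  set G : (↥sᶜ → ℝ) → ℝ≥0∞ := fun z => (∫⋯∫⁻_s, F) (Function.updateFinset 0 sᶜ z)
  have hG : LogConcave G := (hF.lmarginal hm s).comp_updateFinset 0 sᶜ
  have hGm : Measurable G := (hm.lmarginal _).comp measurable_updateFinset
  have hmap : (volume.withDensity F).map (Finset.restrict sᶜ) = volume.withDensity G :=
    map_restrict_compl_withDensity hm s
  have hmass : ∫⁻ z, G z = ∫⁻ x, F x := lintegral_lmarginal_updateFinset hm s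
  have hint {φ : (↥sᶜ → ℝ) → ℝ} (hφ : Measurable φ) :
      ∫ z, φ z ∂volume.withDensity G = ∫ x, φ (Finset.restrict sᶜ x) ∂volume.withDensity F := by
    rw [← hmap, integral_map (Finset.measurable_restrict _).aemeasurable
      hφ.aestronglyMeasurable]
  have hGle := hG.lintegral_le_pow_mul_apply_zero hGm (hmass ▸ h₀) (hmass ▸ ht)
    (fun i => (hint (measurable_pi_apply i)).trans (hcen i)) hσ
    (fun i => by
      rw [hint ((measurable_pi_apply i).pow_const 2), hmass]
      exact hle i)
  have hd : Fintype.card ↥sᶜ = d := by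
    rw [Fintype.card_coe, Finset.card_compl]
    omega
  simpa only [hmass, hd, G, updateFinset_zero_zero] using hGle

end LowerBound

section Whitening

variable {ι : Type*}

/-- The matrix `(∫ xᵢ xⱼ dν)ᵢⱼ` of second moments about the origin of a measure on `ℝ^ι`. -/
def secondMomentMatrix (ν : Measure (ι → ℝ)) : Matrix ι ι ℝ :=
  Matrix.of fun i j => ∫ x, x i * x j ∂ν

variable [Fintype ι] {ν : Measure (ι → ℝ)}

theorem memLp_two_dotProduct (h₂ : ∀ i, MemLp (fun x => x i) 2 ν) (v : ι → ℝ) :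
    MemLp (fun x => v ⬝ᵥ x) 2 ν :=
  memLp_finsetSum _ fun i _ => (h₂ i).const_mul (v i)

theorem dotProduct_secondMomentMatrix_mulVec (h₂ : ∀ i, MemLp (fun x => x i) 2 ν)
    (v : ι → ℝ) : v ⬝ᵥ secondMomentMatrix ν *ᵥ v = ∫ x, (v ⬝ᵥ x) ^ 2 ∂ν := by
  have hint (i j : ι) : Integrable (fun x => v i * (x i * x j * v j)) ν :=
    (((h₂ i).integrable_mul (h₂ j)).mul_const (v j)).const_mul (v i)
  have hsq (x : ι → ℝ) : (v ⬝ᵥ x) ^ 2 = ∑ i, ∑ j, v i * (x i * x j * v j) := by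
    rw [sq, dotProduct, Finset.sum_mul_sum]
    exact Finset.sum_congr rfl fun i _ => Finset.sum_congr rfl fun j _ => by ring
  simp only [hsq]
  rw [integral_finsetSum _ fun i _ => integrable_finsetSum _ fun j _ => hint i j]
  simp only [integral_finsetSum _ fun j _ => hint _ j, integral_const_mul, integral_mul_const,
    dotProduct, Matrix.mulVec, secondMomentMatrix, Matrix.of_apply, Finset.mul_sum]

theorem posDef_secondMomentMatrix (h₂ : ∀ i, MemLp (fun x => x i) 2 ν) (hν : ν ≠ 0)
    (hac : ν ≪ volume) : (secondMomentMatrix ν).PosDef := by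
  refine .of_dotProduct_mulVec_pos (Matrix.IsHermitian.ext fun i j => ?_) fun v hv => ?_
  · simp only [secondMomentMatrix, Matrix.of_apply, star_trivial, mul_comm]
  rw [star_trivial, dotProduct_secondMomentMatrix_mulVec h₂,
    integral_pos_iff_support_of_nonneg (fun x => sq_nonneg _)
      (memLp_two_dotProduct h₂ v).integrable_sq, pos_iff_ne_zero]
  have hker : LinearMap.ker (dotProductBilin ℝ ℝ v) ≠ ⊤ := fun htop =>
    hv (dotProduct_self_eq_zero.1 (LinearMap.congr_fun (LinearMap.ker_eq_top.1 htop) v))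
  have hnull := hac (Measure.addHaar_submodule volume _ hker)
  refine fun hsupp => hν (Measure.measure_univ_eq_zero.1 ?_)
  rw [← union_compl_self (Function.support fun x => (v ⬝ᵥ x) ^ 2), measure_union_null_iff]
  refine ⟨hsupp, measure_mono_null (fun x hx => ?_) hnull⟩
  simpa using hx

variable [DecidableEq ι] {F : (ι → ℝ) → ℝ≥0∞} {T : Matrix ι ι ℝ}

theorem lintegral_comp_mulVec (hT : T.det ≠ 0) (hm : Measurable F) :
    ∫⁻ x, F (T *ᵥ x) = ENNReal.ofReal |T.det⁻¹| * ∫⁻ x, F x := by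
  rw [← smul_eq_mul, ← lintegral_smul_measure, ← Real.map_matrix_volume_pi_eq_smul_volume_pi hT]
  exact (lintegral_map hm (by fun_prop)).symm

theorem map_mulVec_withDensity_comp (hT : T.det ≠ 0) (hm : Measurable F) :
    (volume.withDensity fun x => F (T *ᵥ x)).map (T *ᵥ ·) =
      ENNReal.ofReal |T.det⁻¹| • volume.withDensity F := by
  refine Measure.ext_of_lintegral _ fun g hg => ?_
  rw [lintegral_map hg (by fun_prop), lintegral_smul_measure, smul_eq_mul,
    lintegral_withDensity_eq_lintegral_mul _ (by fun_prop) (by fun_prop),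
    lintegral_withDensity_eq_lintegral_mul _ hm hg, ← lintegral_comp_mulVec hT (hm.mul hg)]
  rfl

theorem integral_withDensity_comp_mulVec (hT : T.det ≠ 0) (hm : Measurable F)
    {φ : (ι → ℝ) → ℝ} (hφ : Measurable φ) :
    ∫ x, φ x ∂volume.withDensity (fun x => F (T *ᵥ x)) =
      |T.det|⁻¹ * ∫ y, φ (T⁻¹ *ᵥ y) ∂volume.withDensity F := by
  have hinv (x : ι → ℝ) : T⁻¹ *ᵥ T *ᵥ x = x := by
    rw [Matrix.mulVec_mulVec, Matrix.nonsing_inv_mul _ hT.isUnit, Matrix.one_mulVec]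
  have hmap := integral_map (μ := volume.withDensity fun x => F (T *ᵥ x))
    (φ := (T *ᵥ ·)) (f := fun y => φ (T⁻¹ *ᵥ y)) (by fun_prop)
    (Measurable.aestronglyMeasurable (by fun_prop))
  simp only [hinv] at hmap
  rw [← hmap, map_mulVec_withDensity_comp hT hm, integral_smul_measure,
    ENNReal.toReal_ofReal (abs_nonneg _), abs_inv, smul_eq_mul]

theorem integral_coord_withDensity_comp_mulVec_eq_zero (hT : T.det ≠ 0) (hm : Measurable F)
    (hint : ∀ i, Integrable (fun x => x i) (volume.withDensity F))
    (hcen : ∀ i, ∫ x, x i ∂volume.withDensity F = 0) (i : ι) :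
    ∫ x, x i ∂volume.withDensity (fun x => F (T *ᵥ x)) = 0 := by
  rw [integral_withDensity_comp_mulVec hT hm (measurable_pi_apply i)]
  simp only [Matrix.mulVec, dotProduct]
  simp [integral_finsetSum _ fun j _ => (hint j).const_mul _, integral_const_mul, hcen]

theorem integral_coord_sq_withDensity_comp_mulVec (hT : T.det ≠ 0) (hm : Measurable F)
    (h₂ : ∀ i, MemLp (fun x => x i) 2 (volume.withDensity F)) {c : ℝ} (hc : c ≠ 0)
    (hTT : T * Tᵀ = c⁻¹ • secondMomentMatrix (volume.withDensity F)) (i : ι) :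
    ∫ x, x i ^ 2 ∂volume.withDensity (fun x => F (T *ᵥ x)) = |T.det|⁻¹ * c := by
  rw [integral_withDensity_comp_mulVec hT hm ((measurable_pi_apply i).pow_const 2)]
  congr 1
  refine (dotProduct_secondMomentMatrix_mulVec h₂ (T⁻¹ i)).symm.trans ?_
  rw [(inv_smul_eq_iff₀ hc).1 hTT.symm]
  have hone : T⁻¹ * (T * Tᵀ) * (T⁻¹)ᵀ = 1 := by
    rw [Matrix.nonsing_inv_mul_cancel_left _ _ hT.isUnit, ← Matrix.transpose_mul,
      Matrix.nonsing_inv_mul _ hT.isUnit, Matrix.transpose_one]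
  have hii := congrFun (congrFun hone i) i
  rw [Matrix.mul_assoc, Matrix.mul_apply, Matrix.one_apply_eq] at hii
  rw [Matrix.smul_mulVec, dotProduct_smul, smul_eq_mul,
    show T⁻¹ i ⬝ᵥ (T * Tᵀ) *ᵥ T⁻¹ i = 1 from hii, mul_one]

end Whitening

section Comparison

variable {ι : Type*} [Fintype ι] [DecidableEq ι] {F G : (ι → ℝ) → ℝ≥0∞}

theorem LogConcave.lintegral_pow_le_of_lmarginal_le (hF : LogConcave F) (hFm : Measurable F)
    (hF₀ : ∫⁻ x, F x ≠ 0) (hFt : ∫⁻ x, F x ≠ ∞)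
    (hcen : ∀ i, ∫ x, x i ∂volume.withDensity F = 0)
    (hsq : ∀ i, ∫ x, x i ^ 2 ∂volume.withDensity F ≤ (∫⁻ x, F x).toReal)
    (hG : LogConcave G) (hGm : Measurable G) (hGt : ∫⁻ x, G x ≠ ∞)
    {M : ℝ≥0∞} (hM : ∀ x, G x ≤ M) (hMt : M ≠ ∞) {k d : ℕ} (hcard : k + d = Fintype.card ι)
    (hle : ∀ s : Finset ι, s.card = k → (∫⋯∫⁻_s, F) 0 ≤ (∫⋯∫⁻_s, G) 0) :
    (∫⁻ x, F x) ^ Fintype.card ι ≤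
      ENNReal.ofReal (3 * Real.exp (2 * Real.pi)) ^ (d * Fintype.card ι) * M ^ d *
        (∫⁻ x, G x) ^ k := by
  obtain ⟨s, hs, hupper⟩ := hG.exists_lmarginal_pow_le hGm hGt hM hMt hcard
  have hlower := hF.lintegral_le_pow_mul_lmarginal_zero hFm hF₀ hFt hcen one_pos
    (by simpa using hsq) (hs.symm ▸ hcard)
  calc (∫⁻ x, F x) ^ Fintype.card ι
      ≤ (ENNReal.ofReal (Real.exp Real.pi) ^ d * (∫⋯∫⁻_s, G) 0) ^ Fintype.card ι := by
        gcongr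
        rw [mul_one] at hlower
        exact hlower.trans (mul_le_mul_right (hle s hs) _)
    _ = ENNReal.ofReal (Real.exp Real.pi) ^ (d * Fintype.card ι) *
          (∫⋯∫⁻_s, G) 0 ^ Fintype.card ι := by rw [mul_pow, ← pow_mul]
    _ ≤ ENNReal.ofReal (Real.exp Real.pi) ^ (d * Fintype.card ι) *
          (ENNReal.ofReal (3 * Real.exp Real.pi) ^ (d * Fintype.card ι) * M ^ d *
            (∫⁻ x, G x) ^ k) := by gcongr
    _ = _ := by
        rw [← mul_assoc, ← mul_assoc, ← mul_pow, ← ENNReal.ofReal_mul (by positivity), two_mul,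
          Real.exp_add]
        ring_nf

theorem exists_linearMap_lmarginal_comp_mulVec {T : Matrix ι ι ℝ} (hT : T.det ≠ 0)
    (s : Finset ι) :
    ∃ A : (s → ℝ) →ₗ[ℝ] (ι → ℝ), Function.Injective A ∧
      ∀ F : (ι → ℝ) → ℝ≥0∞, (∫⋯∫⁻_s, fun x => F (T *ᵥ x)) 0 = ∫⁻ y, F (A y) := by
  refine ⟨T.mulVecLin ∘ₗ Function.ExtendByZero.linearMap ℝ Subtype.val,
    (Matrix.mulVec_injective_of_isUnit ((Matrix.isUnit_iff_isUnit_det T).2 hT.isUnit)).comp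
      (Function.extend_injective Subtype.val_injective (0 : ι → ℝ)), fun F => ?_⟩
  refine lintegral_congr fun y => congrArg (fun z => F (T *ᵥ z)) (funext fun i => ?_)
  by_cases hi : i ∈ s <;> simp [Function.updateFinset, hi, Function.extend_val_apply]

omit [DecidableEq ι] in
theorem LogConcave.posDef_secondMomentMatrix (hF : LogConcave F) (hm : Measurable F)
    (h₀ : ∫⁻ x, F x ≠ 0) (ht : ∫⁻ x, F x ≠ ∞) :
    (secondMomentMatrix (volume.withDensity F)).PosDef :=
  _root_.posDef_secondMomentMatrix (hF.memLp_coord_two hm h₀ ht)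
    (fun h => h₀ (by simpa using congrArg (fun ν : Measure (ι → ℝ) => ν univ) h))
    (withDensity_absolutelyContinuous _ _)

theorem LogConcave.lintegral_comp_mulVec_pow_le {T : Matrix ι ι ℝ} (hT : T.det ≠ 0)
    (hF : LogConcave F) (hFm : Measurable F)
    (hF₀ : ∫⁻ x, F x ≠ 0) (hFt : ∫⁻ x, F x ≠ ∞)
    (hcen : ∀ i, ∫ x, x i ∂volume.withDensity F = 0)
    (hTT : T * Tᵀ = (∫⁻ x, F x).toReal⁻¹ • secondMomentMatrix (volume.withDensity F))
    (hG : LogConcave G) (hGm : Measurable G) (hG₀ : ∫⁻ x, G x ≠ 0) (hGt : ∫⁻ x, G x ≠ ∞)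
    {M : ℝ≥0∞} (hM : ∀ x, G x ≤ M) (hMt : M ≠ ∞) {k d : ℕ} (hcard : k + d = Fintype.card ι)
    (hle : ∀ s : Finset ι, s.card = k → ∀ A : (s → ℝ) →ₗ[ℝ] (ι → ℝ), Function.Injective A →
      (∫⁻ y, F (A y)).toReal ≤ (∫⁻ y, G (A y)).toReal) :
    (∫⁻ x, F (T *ᵥ x)) ^ Fintype.card ι ≤
      ENNReal.ofReal (3 * Real.exp (2 * Real.pi)) ^ (d * Fintype.card ι) * M ^ d *
        (∫⁻ x, G (T *ᵥ x)) ^ k := by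
  have : IsFiniteMeasure (volume.withDensity F) := isFiniteMeasure_withDensity hFt
  have h₂ := hF.memLp_coord_two hFm hF₀ hFt
  have hF' : LogConcave fun x => F (T *ᵥ x) := hF.comp_affineMap T.mulVecLin.toAffineMap
  have hG' : LogConcave fun x => G (T *ᵥ x) := hG.comp_affineMap T.mulVecLin.toAffineMap
  have hne (c : ℝ≥0∞) (hc : c ≠ 0) : ENNReal.ofReal |T.det⁻¹| * c ≠ 0 :=
    mul_ne_zero (by simpa using hT) hc
  have hF₀' := lintegral_comp_mulVec hT hFm ▸ hne _ hF₀
  have hG₀' := lintegral_comp_mulVec hT hGm ▸ hne _ hG₀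
  have hFt' := lintegral_comp_mulVec hT hFm ▸ ENNReal.mul_ne_top ENNReal.ofReal_ne_top hFt
  have hGt' := lintegral_comp_mulVec hT hGm ▸ ENNReal.mul_ne_top ENNReal.ofReal_ne_top hGt
  refine hF'.lintegral_pow_le_of_lmarginal_le (by fun_prop) hF₀' hFt'
    (integral_coord_withDensity_comp_mulVec_eq_zero hT hFm
      (fun i => (h₂ i).integrable one_le_two) hcen) (fun i => ?_) hG' (by fun_prop) hGt'
    (fun x => hM _) hMt hcard fun s hs => ?_
  · rw [integral_coord_sq_withDensity_comp_mulVec hT hFm h₂ (ENNReal.toReal_pos hF₀ hFt).ne' hTT,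
      lintegral_comp_mulVec hT hFm, ENNReal.toReal_mul, ENNReal.toReal_ofReal (abs_nonneg _),
      abs_inv]
  · obtain ⟨A, hA, hlm⟩ := exists_linearMap_lmarginal_comp_mulVec hT s
    rw [← ENNReal.toReal_le_toReal (hF'.lmarginal_zero_ne_top (by fun_prop) hF₀' hFt' s)
      (hG'.lmarginal_zero_ne_top (by fun_prop) hG₀' hGt' s), hlm, hlm]
    exact hle s hs A hA

theorem LogConcave.lintegral_pow_le_of_section_le (hF : LogConcave F) (hFm : Measurable F)
    (hF₀ : ∫⁻ x, F x ≠ 0) (hFt : ∫⁻ x, F x ≠ ∞)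
    (hcen : ∀ i, ∫ x, x i ∂volume.withDensity F = 0)
    (hG : LogConcave G) (hGm : Measurable G) (hG₀ : ∫⁻ x, G x ≠ 0) (hGt : ∫⁻ x, G x ≠ ∞)
    {M : ℝ≥0∞} (hM : ∀ x, G x ≤ M) (hMt : M ≠ ∞) {k d : ℕ} (hcard : k + d = Fintype.card ι)
    (hle : ∀ s : Finset ι, s.card = k → ∀ A : (s → ℝ) →ₗ[ℝ] (ι → ℝ), Function.Injective A →
      (∫⁻ y, F (A y)).toReal ≤ (∫⁻ y, G (A y)).toReal)
    {S : Matrix ι ι ℝ}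
    (hS : S = (∫⁻ x, F x).toReal⁻¹ • secondMomentMatrix (volume.withDensity F)) :
    (∫⁻ x, F x) ^ Fintype.card ι ≤
      ENNReal.ofReal (3 * Real.exp (2 * Real.pi)) ^ (d * Fintype.card ι) *
        ENNReal.ofReal √S.det ^ d * M ^ d * (∫⁻ x, G x) ^ k := by
  have hSpos : S.PosDef := hS ▸ (hF.posDef_secondMomentMatrix hFm hF₀ hFt).smul
    (inv_pos.2 (ENNReal.toReal_pos hF₀ hFt))
  obtain ⟨B, hB⟩ := CStarAlgebra.nonneg_iff_eq_star_mul_self.1 hSpos.posSemidef.nonneg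
  have hdet : S.det = B.det ^ 2 := by
    rw [hB, Matrix.det_mul, Matrix.star_eq_conjTranspose, Matrix.det_conjTranspose, star_trivial,
      sq]
  have hT : Bᵀ.det ≠ 0 := by
    rw [Matrix.det_transpose]
    exact fun h => hSpos.det_pos.ne' (by simp [hdet, h])
  have hab : ENNReal.ofReal √S.det * ENNReal.ofReal |Bᵀ.det⁻¹| = 1 := by
    rw [← ENNReal.ofReal_mul (Real.sqrt_nonneg _), hdet, Real.sqrt_sq_eq_abs, ← abs_mul,
      Matrix.det_transpose, mul_inv_cancel₀ (by simpa using hT), abs_one, ENNReal.ofReal_one]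
  have hwhite := hF.lintegral_comp_mulVec_pow_le hT hFm hF₀ hFt hcen
    (by rw [← hS, hB, Matrix.transpose_transpose]; rfl) hG hGm hG₀ hGt hM hMt hcard hle
  rw [lintegral_comp_mulVec hT hFm, lintegral_comp_mulVec hT hGm] at hwhite
  set a := ENNReal.ofReal √S.det
  set b := ENNReal.ofReal |Bᵀ.det⁻¹|
  calc (∫⁻ x, F x) ^ Fintype.card ι
      = a ^ Fintype.card ι * (b * ∫⁻ x, F x) ^ Fintype.card ι := by
        rw [← mul_pow, ← mul_assoc, hab, one_mul]
    _ ≤ a ^ Fintype.card ι * (ENNReal.ofReal (3 * Real.exp (2 * Real.pi)) ^ (d * Fintype.card ι) *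
          M ^ d * (b * ∫⁻ x, G x) ^ k) := by gcongr
    _ = ENNReal.ofReal (3 * Real.exp (2 * Real.pi)) ^ (d * Fintype.card ι) * a ^ d * M ^ d *
          ((a * b) * ∫⁻ x, G x) ^ k := by
        nth_rw 1 [← hcard]
        ring
    _ = _ := by rw [hab, one_mul]

end Comparison

section EuclideanSpace

variable {n : ℕ} {f : Eucl n → ℝ}

theorem exists_integral_comp_eq_mul_sectL1 {V : Type*} [NormedAddCommGroup V] [NormedSpace ℝ V]
    [FiniteDimensional ℝ V] [MeasurableSpace V] [BorelSpace V] (μ : Measure V)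
    [μ.IsAddHaarMeasure] (A : V →ₗ[ℝ] Eucl n) (hA : Function.Injective A) :
    ∃ c : NNReal, ∀ f : Eucl n → ℝ, ∫ y, f (A y) ∂μ = c * sectL1 f (LinearMap.range A) := by
  let e : V ≃L[ℝ] LinearMap.range A := (LinearEquiv.ofInjective A hA).toContinuousLinearEquiv
  have : (μ.map e).IsAddHaarMeasure := e.isAddHaarMeasure_map μ
  refine ⟨Measure.addHaarScalarFactor (μ.map e) volume, fun f => ?_⟩
  calc ∫ y, f (A y) ∂μ = ∫ y : LinearMap.range A, f y ∂μ.map e :=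
        (integral_map_equiv e.toHomeomorph.toMeasurableEquiv
          fun y : LinearMap.range A => f y).symm
    _ = ∫ y : LinearMap.range A, f y
          ∂(Measure.addHaarScalarFactor (μ.map e) volume • volume) :=
        congrArg (fun ρ : Measure (LinearMap.range A) => ∫ y : LinearMap.range A, f y ∂ρ)
          (Measure.isAddLeftInvariant_eq_smul (μ.map e) volume)
    _ = Measure.addHaarScalarFactor (μ.map e) volume * sectL1 f (LinearMap.range A) :=
        integral_smul_nnreal_measure _ _

/-- The class `Q₀ⁿ` with upper semicontinuity weakened to Borel measurability. -/
structure IsLogConcaveDensity (f : Eucl n → ℝ) : Prop where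
  nonneg : ∀ x, 0 ≤ f x
  isLogConcave : IsLogConcave f
  measurable : Measurable f
  integrable : Integrable f
  integral_pos : 0 < ∫ x, f x

theorem MemQ0.isLogConcaveDensity (hf : MemQ0 f) : IsLogConcaveDensity f :=
  ⟨hf.1, hf.2.1, hf.2.2.1.measurable, hf.2.2.2.1, hf.2.2.2.2⟩

/-- A real function on Euclidean space as an extended nonnegative one on the product space
`Fin n → ℝ`, where marginals in the coordinates are defined; negative values become `0`. -/
def coordDensity (f : Eucl n → ℝ) (x : Fin n → ℝ) : ℝ≥0∞ :=
  ENNReal.ofReal (f (WithLp.toLp 2 x))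

theorem measurable_coordDensity (hf : Measurable f) : Measurable (coordDensity f) :=
  (hf.comp (WithLp.measurable_toLp 2 _)).ennreal_ofReal

theorem lintegral_coordDensity (hf : Integrable f) (h₀ : ∀ x, 0 ≤ f x) :
    ∫⁻ x, coordDensity f x = ENNReal.ofReal (∫ x, f x) := by
  rw [ofReal_integral_eq_lintegral_ofReal hf (.of_forall h₀)]
  exact (PiLp.volume_preserving_toLp (Fin n)).lintegral_comp_emb
    (MeasurableEquiv.toLp 2 _).measurableEmbedding fun x => ENNReal.ofReal (f x)

theorem integral_withDensity_coordDensity (hf : Measurable f) (h₀ : ∀ x, 0 ≤ f x)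
    (φ : (Fin n → ℝ) → ℝ) :
    ∫ x, φ x ∂volume.withDensity (coordDensity f) = ∫ x, f x * φ x.ofLp := by
  rw [integral_withDensity_eq_integral_toReal_smul (measurable_coordDensity hf)
    (.of_forall fun x => ENNReal.ofReal_lt_top)]
  simp only [coordDensity, ENNReal.toReal_ofReal (h₀ _), smul_eq_mul]
  exact (PiLp.volume_preserving_toLp (Fin n)).integral_comp
    (MeasurableEquiv.toLp 2 _).measurableEmbedding fun x => f x * φ x.ofLp

namespace IsLogConcaveDensity

theorem logConcave_coordDensity (hf : IsLogConcaveDensity f) : LogConcave (coordDensity f) := by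
  intro a b ha hb hab x y
  obtain rfl : b = 1 - a := by linarith
  rw [coordDensity, coordDensity, ENNReal.ofReal_rpow_of_nonneg (hf.nonneg _) ha.le,
    ENNReal.ofReal_rpow_of_nonneg (hf.nonneg _) hb.le,
    ← ENNReal.ofReal_mul (Real.rpow_nonneg (hf.nonneg _) _)]
  exact ENNReal.ofReal_le_ofReal (hf.isLogConcave _ _ a ha (by linarith))

theorem lintegral_coordDensity_ne_zero (hf : IsLogConcaveDensity f) :
    ∫⁻ x, coordDensity f x ≠ 0 := by
  rw [lintegral_coordDensity hf.integrable hf.nonneg]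
  exact (ENNReal.ofReal_pos.2 hf.integral_pos).ne'

theorem lintegral_coordDensity_ne_top (hf : IsLogConcaveDensity f) :
    ∫⁻ x, coordDensity f x ≠ ∞ := by
  rw [lintegral_coordDensity hf.integrable hf.nonneg]
  exact ENNReal.ofReal_ne_top

theorem coordDensity_le (hf : IsLogConcaveDensity f) (x : Fin n → ℝ) :
    coordDensity f x ≤ ENNReal.ofReal (supNorm f) := by
  obtain ⟨B, hB, hle⟩ := hf.logConcave_coordDensity.exists_le_of_lintegral_ne_top volume
    (measurable_coordDensity hf.measurable) hf.lintegral_coordDensity_ne_zero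
    hf.lintegral_coordDensity_ne_top
  refine ENNReal.ofReal_le_ofReal (le_ciSup ⟨B.toReal, ?_⟩ _)
  rintro _ ⟨y, rfl⟩
  exact (ENNReal.ofReal_le_iff_le_toReal hB).1 (hle y.ofLp)

theorem covMatrix_eq (hf : IsLogConcaveDensity f) (hcen : ∀ i, ∫ x, f x * x i = 0) :
    covMatrix f = (∫⁻ x, coordDensity f x).toReal⁻¹ •
      secondMomentMatrix (volume.withDensity (coordDensity f)) := by
  ext i j
  simp only [covMatrix, hcen, secondMomentMatrix, Matrix.of_apply, Matrix.smul_apply,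
    integral_withDensity_coordDensity hf.measurable hf.nonneg,
    lintegral_coordDensity hf.integrable hf.nonneg, ENNReal.toReal_ofReal hf.integral_pos.le,
    mul_zero, sub_zero, smul_eq_mul, div_eq_inv_mul, mul_assoc]

theorem covMatrix_det_nonneg (hf : IsLogConcaveDensity f) (hcen : ∀ i, ∫ x, f x * x i = 0) :
    0 ≤ (covMatrix f).det := by
  rw [hf.covMatrix_eq hcen]
  have hpos := (hf.logConcave_coordDensity.posDef_secondMomentMatrix
    (measurable_coordDensity hf.measurable) hf.lintegral_coordDensity_ne_zero
    hf.lintegral_coordDensity_ne_top).posSemidef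
  exact (hpos.smul (inv_nonneg.2 ENNReal.toReal_nonneg)).det_nonneg

theorem isoConst_nonneg (hf : IsLogConcaveDensity f) (hcen : ∀ i, ∫ x, f x * x i = 0) :
    0 ≤ isoConst f :=
  mul_nonneg (Real.rpow_nonneg (div_nonneg (Real.iSup_nonneg hf.nonneg) hf.integral_pos.le) _)
    (Real.rpow_nonneg (hf.covMatrix_det_nonneg hcen) _)

theorem isoConst_pow (hf : IsLogConcaveDensity f) (hcen : ∀ i, ∫ x, f x * x i = 0)
    (hn : n ≠ 0) : isoConst f ^ n = supNorm f / (∫ x, f x) * √(covMatrix f).det := by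
  have hdiv : 0 ≤ supNorm f / ∫ x, f x :=
    div_nonneg (Real.iSup_nonneg hf.nonneg) hf.integral_pos.le
  rw [isoConst, mul_pow, one_div, Real.rpow_inv_natCast_pow hdiv hn, ← Real.rpow_mul_natCast
    (hf.covMatrix_det_nonneg hcen), Real.sqrt_eq_rpow]
  congr 2
  field_simp

theorem toReal_lintegral_coordDensity_comp (hf : IsLogConcaveDensity f) {V : Type*}
    [NormedAddCommGroup V] [NormedSpace ℝ V] [FiniteDimensional ℝ V] [MeasurableSpace V]
    [BorelSpace V] (μ : Measure V) (A : V →ₗ[ℝ] (Fin n → ℝ)) :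
    (∫⁻ y, coordDensity f (A y) ∂μ).toReal = ∫ y, f (WithLp.toLp 2 (A y)) ∂μ :=
  (integral_eq_lintegral_of_nonneg_ae (.of_forall fun _ => hf.nonneg _)
    (hf.measurable.comp ((WithLp.measurable_toLp 2 _).comp
      A.continuous_of_finiteDimensional.measurable)).aestronglyMeasurable).symm

variable {g : Eucl n → ℝ}

theorem toReal_lintegral_coordDensity_comp_le (hf : IsLogConcaveDensity f)
    (hg : IsLogConcaveDensity g) {k : ℕ}
    (hBP : ∀ H : Submodule ℝ (Eucl n), Module.finrank ℝ H = k → sectL1 f H ≤ sectL1 g H)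
    {ι : Type*} [Fintype ι] (hk : Fintype.card ι = k) (A : (ι → ℝ) →ₗ[ℝ] (Fin n → ℝ))
    (hA : Function.Injective A) :
    (∫⁻ y, coordDensity f (A y)).toReal ≤ (∫⁻ y, coordDensity g (A y)).toReal := by
  let A' : (ι → ℝ) →ₗ[ℝ] Eucl n := (WithLp.linearEquiv 2 ℝ (Fin n → ℝ)).symm.toLinearMap ∘ₗ A
  have hA' : Function.Injective A' := (WithLp.toLp_injective 2).comp hA
  obtain ⟨c, hc⟩ := exists_integral_comp_eq_mul_sectL1 volume A' hA'
  rw [hf.toReal_lintegral_coordDensity_comp, hg.toReal_lintegral_coordDensity_comp]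
  refine (hc f).trans_le (le_of_le_of_eq ?_ (hc g).symm)
  gcongr
  exact hBP _ (by rw [LinearMap.finrank_range_of_inj hA', Module.finrank_fintype_fun_eq_card, hk])

theorem integral_pow_le (hf : IsLogConcaveDensity f) (hg : IsLogConcaveDensity g) {k : ℕ}
    (hk : k ≤ n)
    (hBP : ∀ H : Submodule ℝ (Eucl n), Module.finrank ℝ H = k → sectL1 f H ≤ sectL1 g H)
    (hcen : ∀ i, ∫ x, f x * x i = 0) :
    (∫ x, f x) ^ n ≤ (3 * Real.exp (2 * Real.pi)) ^ ((n - k) * n) * √(covMatrix f).det ^ (n - k) *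
      supNorm g ^ (n - k) * (∫ x, g x) ^ k := by
  have hsup : 0 ≤ supNorm g := Real.iSup_nonneg hg.nonneg
  have hle := hf.logConcave_coordDensity.lintegral_pow_le_of_section_le
    (measurable_coordDensity hf.measurable) hf.lintegral_coordDensity_ne_zero
    hf.lintegral_coordDensity_ne_top
    (fun i => (integral_withDensity_coordDensity hf.measurable hf.nonneg _).trans (hcen i))
    hg.logConcave_coordDensity (measurable_coordDensity hg.measurable)
    hg.lintegral_coordDensity_ne_zero hg.lintegral_coordDensity_ne_top hg.coordDensity_le
    ENNReal.ofReal_ne_top (k := k) (d := n - k) (by simp [hk])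
    (fun s hs A hA => hf.toReal_lintegral_coordDensity_comp_le hg hBP (by simpa using hs) A hA)
    (hf.covMatrix_eq hcen)
  rw [lintegral_coordDensity hf.integrable hf.nonneg,
    lintegral_coordDensity hg.integrable hg.nonneg, Fintype.card_fin,
    ← ENNReal.ofReal_pow hf.integral_pos.le, ← ENNReal.ofReal_pow (by positivity),
    ← ENNReal.ofReal_pow (Real.sqrt_nonneg _), ← ENNReal.ofReal_pow hsup,
    ← ENNReal.ofReal_pow hg.integral_pos.le, ← ENNReal.ofReal_mul (by positivity),
    ← ENNReal.ofReal_mul (by positivity), ← ENNReal.ofReal_mul (by positivity)] at hle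
  have := hg.integral_pos
  exact (ENNReal.ofReal_le_ofReal_iff (by positivity)).1 hle

theorem integral_pow_mul_supNorm_pow_le (hf : IsLogConcaveDensity f) (hg : IsLogConcaveDensity g)
    {k : ℕ} (hn : n ≠ 0) (hk : k ≤ n)
    (hBP : ∀ H : Submodule ℝ (Eucl n), Module.finrank ℝ H = k → sectL1 f H ≤ sectL1 g H)
    (hcen : ∀ i, ∫ x, f x * x i = 0) :
    (∫ x, f x) ^ k * supNorm f ^ (n - k) ≤
      ((3 * Real.exp (2 * Real.pi) * isoConst f) ^ (n - k)) ^ n *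
        ((∫ x, g x) ^ k * supNorm g ^ (n - k)) := by
  have hI := hf.integral_pos
  have hM : 0 ≤ supNorm f := Real.iSup_nonneg hf.nonneg
  have hpow : (∫ x, f x) ^ n = (∫ x, f x) ^ k * (∫ x, f x) ^ (n - k) := by
    rw [← pow_add, Nat.add_sub_of_le hk]
  calc (∫ x, f x) ^ k * supNorm f ^ (n - k)
      = (supNorm f / ∫ x, f x) ^ (n - k) * (∫ x, f x) ^ n := by
        rw [hpow, div_pow]
        field_simp
    _ ≤ (supNorm f / ∫ x, f x) ^ (n - k) *
          ((3 * Real.exp (2 * Real.pi)) ^ ((n - k) * n) * √(covMatrix f).det ^ (n - k) *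
            supNorm g ^ (n - k) * (∫ x, g x) ^ k) := by
        gcongr
        exact hf.integral_pow_le hg hk hBP hcen
    _ = (3 * Real.exp (2 * Real.pi)) ^ ((n - k) * n) * (isoConst f ^ n) ^ (n - k) *
          ((∫ x, g x) ^ k * supNorm g ^ (n - k)) := by
        rw [hf.isoConst_pow hcen hn]
        ring
    _ = _ := by ring

end IsLogConcaveDensity

theorem rpow_div_mul_rpow_sub_div_pow {a b : ℝ} (ha : 0 ≤ a) (hb : 0 ≤ b) {k n : ℕ}
    (hk : k ≤ n) (hn : n ≠ 0) :
    (a ^ ((k : ℝ) / n) * b ^ (((n : ℝ) - k) / n)) ^ n = a ^ k * b ^ (n - k) := by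
  have hn' : (n : ℝ) ≠ 0 := Nat.cast_ne_zero.2 hn
  rw [mul_pow, ← Real.rpow_mul_natCast ha, ← Real.rpow_mul_natCast hb, div_mul_cancel₀ _ hn',
    div_mul_cancel₀ _ hn', ← Nat.cast_sub hk, Real.rpow_natCast, Real.rpow_natCast]

end EuclideanSpace

theorem functional_busemann_petty_centered_general :
    ∃ C : ℝ, 0 < C ∧ ∀ (n k : ℕ), 0 < n → k ≤ n →
      ∀ f₁ f₂ : Eucl n → ℝ, IsLogConcaveDensity f₁ → IsLogConcaveDensity f₂ →
        (∀ H : Submodule ℝ (Eucl n), Module.finrank ℝ H = k →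
          sectL1 f₁ H ≤ sectL1 f₂ H) →
        (∀ i : Fin n, (∫ x, f₁ x * x i) = 0) →
        (∫ x, f₁ x) ^ ((k : ℝ) / n) * supNorm f₁ ^ (((n : ℝ) - k) / n) ≤
          (C * isoConst f₁) ^ (n - k) *
            ((∫ x, f₂ x) ^ ((k : ℝ) / n) * supNorm f₂ ^ (((n : ℝ) - k) / n)) := by
  refine ⟨3 * Real.exp (2 * Real.pi), by positivity, fun n k hn hk f₁ f₂ h₁ h₂ hBP hcen => ?_⟩
  have hI₁ := h₁.integral_pos
  have hI₂ := h₂.integral_pos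
  have hM₁ : 0 ≤ supNorm f₁ := Real.iSup_nonneg h₁.nonneg
  have hM₂ : 0 ≤ supNorm f₂ := Real.iSup_nonneg h₂.nonneg
  have hL := h₁.isoConst_nonneg hcen
  refine (pow_le_pow_iff_left₀ (by positivity) (by positivity) hn.ne').1 ?_
  rw [mul_pow (_ ^ (n - k)), rpow_div_mul_rpow_sub_div_pow hI₁.le hM₁ hk hn.ne',
    rpow_div_mul_rpow_sub_div_pow hI₂.le hM₂ hk hn.ne']
  exact h₁.integral_pow_mul_supNorm_pow_le h₂ hn.ne' hk hBP hcen

/-- **The functional Busemann–Petty problem, centered version** (Theorem 5.7):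
there is an absolute constant `C > 0` such that if `f₁, f₂ ∈ Q₀ⁿ` satisfy the
Busemann–Petty condition for `k`-dimensional sections and `f₁` is centered, then
`‖f₁‖₁^{k/n}·‖f₁‖_∞^{(n−k)/n} ≤ (C·L_{f₁})^{n−k}·‖f₂‖₁^{k/n}·‖f₂‖_∞^{(n−k)/n}`. -/
theorem functional_busemann_petty_centered :
    ∃ C : ℝ, 0 < C ∧ ∀ (n k : ℕ), 1 ≤ k → k < n →
      ∀ f₁ f₂ : Eucl n → ℝ, MemQ0 f₁ → MemQ0 f₂ →
        (∀ H : Submodule ℝ (Eucl n), Module.finrank ℝ H = k →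
          sectL1 f₁ H ≤ sectL1 f₂ H) →
        (∀ i : Fin n, (∫ x, f₁ x * x i) = 0) →
        (∫ x, f₁ x) ^ ((k : ℝ) / n) * supNorm f₁ ^ (((n : ℝ) - k) / n) ≤
          (C * isoConst f₁) ^ (n - k) *
            ((∫ x, f₂ x) ^ ((k : ℝ) / n) * supNorm f₂ ^ (((n : ℝ) - k) / n)) := by
  obtain ⟨C, hC, h⟩ := functional_busemann_petty_centered_general
  exact ⟨C, hC, fun n k hk hkn f₁ f₂ h₁ h₂ => h n k (by omega) hkn.le f₁ f₂
    h₁.isLogConcaveDensity h₂.isLogConcaveDensity⟩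
end
end
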